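/- Let X be a Borel subset of the Cantor space 2^ω that is dense in 2^ω, such that the subspace X is homogeneous, a Baire space, and X ∉ Δ. Then there exists a semifilter S on ω such that the subspace S is a Baire space and S ≡_W X as subsets of 2^ω. -/

import Mathlib

open Set

abbrev Cantor := ℕ → Bool

def UpwardClosed (S : Set Cantor) : Prop :=
  ∀ x ∈ S, ∀ y : Cantor, (∀ n, x n = true → y n = true) → y ∈ S

def DownwardClosed (R : Set Cantor) : Prop :=
  ∀ y ∈ R, ∀ x : Cantor, (∀ n, x n = true → y n = true) → x ∈ R

def ClosedUnderFinMod (S : Set Cantor) : Prop :=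
  ∀ x ∈ S, ∀ y : Cantor, {n | x n ≠ y n}.Finite → y ∈ S

def IsSemifilter (S : Set Cantor) : Prop :=
  (fun _ => false) ∉ S ∧ (fun _ => true) ∈ S ∧ UpwardClosed S ∧ ClosedUnderFinMod S

def IsSemiideal (R : Set Cantor) : Prop :=
  (fun _ => false) ∈ R ∧ (fun _ => true) ∉ R ∧ DownwardClosed R ∧ ClosedUnderFinMod R

def ClosedUnderInter (S : Set Cantor) : Prop :=
  ∀ x ∈ S, ∀ y ∈ S, (fun n => x n && y n) ∈ S

def IsFilterOnOmega (F : Set Cantor) : Prop := IsSemifilter F ∧ ClosedUnderInter F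

def IsHomogeneous (X : Type*) [TopologicalSpace X] : Prop :=
  ∀ x y : X, ∃ h : X ≃ₜ X, h x = y

def IsFsigma (A : Set Cantor) : Prop :=
  ∃ F : ℕ → Set Cantor, (∀ n, IsClosed (F n)) ∧ A = ⋃ n, F n

def DOmegaSigmaTwo (X : Set Cantor) : Prop :=
  ∃ A : ℕ → Set Cantor, (∀ n, IsFsigma (A n)) ∧ Monotone A ∧
    X = ⋃ n ∈ {n : ℕ | Odd n}, (A n \ ⋃ m < n, A m)

def InDelta (X : Set Cantor) : Prop := DOmegaSigmaTwo X ∧ DOmegaSigmaTwo Xᶜ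

def WadgeLe (A B : Set Cantor) : Prop :=
  ∃ f : Cantor → Cantor, Continuous f ∧ A = f ⁻¹' B

def WadgeEquiv (A B : Set Cantor) : Prop := WadgeLe A B ∧ WadgeLe B A

def CompletelyMetrizable (X : Type*) [t : TopologicalSpace X] : Prop :=
  ∃ m : MetricSpace X, m.toUniformSpace.toTopologicalSpace = t ∧
    @CompleteSpace X m.toUniformSpace

def FirstCategory (X : Type*) [TopologicalSpace X] : Prop :=
  ∃ f : ℕ → Set X, (∀ n, interior (closure (f n)) = ∅) ∧ (Set.univ : Set X) = ⋃ n, f n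

def CantorFin : Set Cantor := {x | {n | x n = true}.Finite}

def BorelSet (X : Set Cantor) : Prop := @MeasurableSet Cantor (borel Cantor) X

/-!
Borel determinacy, obtained from Martin's coverings, makes Wadge's lemma and the Martin–Monk
argument available for the finer zero-dimensional Polish topologies on the Cantor space in which
countably many prescribed Fσ sets become open. By Martin–Monk, no set stays self-dual near each of
its points, and among such topologies and their clopen sets there is a pair `(t₀, s)` minimizing
the degree of `X ∩ s`. As `X` is Baire and dense, `s` contains points of `X` which are generic for
`t₀`; near these the degree does not drop, and it is not self-dual. Homogeneity and `X ∉ Δ` show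
that at such points the membership in `X` is not locally decided by the parity of a rank. From
this follow two closure properties: a set reducible to `X ∩ s` for a finer topology is reducible
to `X`, and `X` reduces to `X ∩ s`.

The branches of countably many binary trees form an almost disjoint family of sets `branch i w`.
The semifilter `S` consists of the sets that are almost contained in a branch only if they are
almost equal to it and `w ∈ W i ∩ X`, where closed sets `C i` cover `s \ X` and each `W i` is a
neighbourhood of `C i` on which `X` reduces to itself close to a point of `s \ X`. The sets not
almost contained in any branch form a comeagre set inside `S`, so `S` is Baire. To reduce `X` to
`S`, map `z ∈ s` to a set which is almost a branch with label `z` of the first tree `i` with `z ∈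
C i`, if there is one, and which is almost contained in no branch otherwise. To reduce `S` to `X`,
glue the reductions available near the branches, which is continuous for a finer topology.
-/

universe u

/-! ### Inverse sequences -/

section Thread

variable {A : ℕ → Type*} {π : ∀ i, A (i + 1) → A i}

/-- The inverse limit of a sequence of types along the bonding maps `π`. -/
abbrev Thread {A : ℕ → Type*} (π : ∀ i, A (i + 1) → A i) : Type _ :=
  {f : ∀ i, A i // ∀ i, π i (f (i + 1)) = f i}

namespace Thread

theorem eq_of_le (f g : Thread π) {n : ℕ} (h : f.1 n = g.1 n) {j : ℕ} (hj : j ≤ n) :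
    f.1 j = g.1 j := by
  induction n with
  | zero => rwa [Nat.le_zero.1 hj]
  | succ n ih =>
    rcases hj.eq_or_lt with rfl | hj
    · exact h
    · exact ih (by rw [← f.2 n, ← g.2 n, h]) (Nat.lt_succ_iff.1 hj)

theorem injective_eval {j : ℕ} (h : ∀ i ≥ j, (π i).Injective) :
    Function.Injective fun f : Thread π ↦ f.1 j := by
  intro f g hfg
  refine Subtype.ext (funext fun i ↦ ?_)
  rcases le_total i j with hij | hij
  · exact eq_of_le f g hfg hij
  · induction i, hij using Nat.le_induction with
    | base => exact hfg
    | succ i hi ih => exact h i hi (by rw [f.2, g.2, ih])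

theorem surjective_eval {j : ℕ} (h : ∀ i ≥ j, (π i).Surjective) :
    Function.Surjective fun f : Thread π ↦ f.1 j := by
  induction j generalizing A with
  | zero =>
    intro a
    choose lift hlift using fun i ↦ h i (Nat.zero_le i)
    exact ⟨⟨fun i ↦ Nat.rec a lift i, fun i ↦ hlift i _⟩, rfl⟩
  | succ j ih =>
    intro a
    obtain ⟨⟨f, hf⟩, hfa⟩ := ih (A := fun i ↦ A (i + 1)) (π := fun i ↦ π (i + 1))
      (fun i hi ↦ h (i + 1) (Nat.succ_le_succ hi)) a
    refine ⟨⟨fun i ↦ Nat.casesOn i (π 0 (f 0)) f, fun i ↦ ?_⟩, hfa⟩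
    cases i with
    | zero => rfl
    | succ i => exact hf i

theorem bijective_eval {j : ℕ} (h : ∀ i ≥ j, (π i).Bijective) :
    Function.Bijective fun f : Thread π ↦ f.1 j :=
  ⟨injective_eval fun i hi ↦ (h i hi).1, surjective_eval fun i hi ↦ (h i hi).2⟩

end Thread

end Thread

/-! ### Game trees and coverings -/

/-- A pruned tree, presented by its levels: `Pos n` is the set of positions of length `n`.
Two players, named `0` and `1`, build a branch; player `b` moves at levels of parity `b`. -/
structure GameTree where
  Pos : ℕ → Type u
  parent : ∀ n, Pos (n + 1) → Pos n
  parent_surjective : ∀ n, (parent n).Surjective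

namespace GameTree

/-- The moves available at the position `p`. -/
abbrev Child (T : GameTree.{u}) {n : ℕ} (p : T.Pos n) : Type u :=
  {q : T.Pos (n + 1) // T.parent n q = p}

/-- A strategy chooses a move at every position; read as a strategy of player `b`, only its
values at levels of parity `b` matter. -/
abbrev Strategy (T : GameTree.{u}) : Type u := ∀ (n : ℕ) (p : T.Pos n), T.Child p

/-- A play is an infinite branch of the game tree. -/
abbrev Play (T : GameTree.{u}) : Type u := Thread T.parent

section Basic

variable (T : GameTree.{u})

theorem exists_play {n : ℕ} (p : T.Pos n) : ∃ x : T.Play, x.1 n = p :=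
  Thread.surjective_eval (fun i _ ↦ T.parent_surjective i) p

instance : Nonempty T.Strategy :=
  ⟨fun n p ↦ ⟨_, (T.parent_surjective n p).choose_spec⟩⟩

variable {T}

/-- The play in which both players follow `s`, starting from `r`. -/
def Strategy.play (s : T.Strategy) (r : T.Pos 0) : T.Play :=
  ⟨fun n ↦ Nat.rec r (fun n p ↦ (s n p).1) n, fun n ↦ (s n _).2⟩

/-- The play `x` results from player `b` following the strategy `s`. -/
def Strategy.IsConsistent (s : T.Strategy) (b : ℕ) (x : T.Play) : Prop :=
  ∀ n, n % 2 = b → x.1 (n + 1) = (s n (x.1 n)).1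

/-- A level-preserving map of game trees. -/
structure Hom (T' T : GameTree.{u}) where
  toFun : ∀ n, T'.Pos n → T.Pos n
  parent_toFun : ∀ n q, T.parent n (toFun (n + 1) q) = toFun n (T'.parent n q)

namespace Hom

variable {T' T'' : GameTree.{u}}

/-- The map on plays induced by a map of game trees. -/
def mapPlay (f : Hom T' T) (x : T'.Play) : T.Play :=
  ⟨fun n ↦ f.toFun n (x.1 n), fun n ↦ by rw [f.parent_toFun, x.2]⟩

/-- The identity map of a game tree. -/
protected def id (T : GameTree.{u}) : Hom T T := ⟨fun _ p ↦ p, fun _ _ ↦ rfl⟩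

/-- Composition of maps of game trees. -/
def comp (g : Hom T' T) (f : Hom T'' T') : Hom T'' T :=
  ⟨fun n p ↦ g.toFun n (f.toFun n p), fun n q ↦ by rw [g.parent_toFun, f.parent_toFun]⟩

end Hom

/-- Martin's `k`-coverings: a map of game trees along which strategies can be pushed down so that
every play consistent with the image strategy lifts to a play consistent with the original one.
The image strategy at level `n` depends only on the original one up to level `n`, and up to level
`k` the two trees are the same. -/
structure Covering (k : ℕ) (T' T : GameTree.{u}) extends Hom T' T where
  mapStrategy : ℕ → T'.Strategy → T.Strategy
  mapStrategy_congr : ∀ b s s' n, (∀ m ≤ n, s m = s' m) → mapStrategy b s n = mapStrategy b s' n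
  exists_lift : ∀ b < 2, ∀ s x, (mapStrategy b s).IsConsistent b x →
    ∃ x', s.IsConsistent b x' ∧ toHom.mapPlay x' = x
  bijective_toFun : ∀ n ≤ k, (toFun n).Bijective
  mapStrategy_toFun : ∀ b s n, n < k → ∀ p,
    (mapStrategy b s n (toFun n p)).1 = toFun (n + 1) (s n p).1

namespace Covering

variable {k : ℕ} {T' T'' : GameTree.{u}}

/-- Composition of coverings. -/
def comp (g : Covering k T' T) (f : Covering k T'' T') : Covering k T'' T where
  toHom := g.toHom.comp f.toHom
  mapStrategy b s := g.mapStrategy b (f.mapStrategy b s)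
  mapStrategy_congr b _ _ _ h := g.mapStrategy_congr b _ _ _ fun m hm ↦
    f.mapStrategy_congr b _ _ _ fun j hj ↦ h j (hj.trans hm)
  exists_lift b hb s x h := by
    obtain ⟨y, hy, rfl⟩ := g.exists_lift b hb _ _ h
    obtain ⟨z, hz, rfl⟩ := f.exists_lift b hb _ _ hy
    exact ⟨z, hz, rfl⟩
  bijective_toFun n hn := (g.bijective_toFun n hn).comp (f.bijective_toFun n hn)
  mapStrategy_toFun b s n hn p := by
    change (g.mapStrategy b (f.mapStrategy b s) n (g.toFun n (f.toFun n p))).1 = _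
    rw [g.mapStrategy_toFun _ _ _ hn, f.mapStrategy_toFun _ _ _ hn]
    rfl

/-- A `k`-covering is an `l`-covering for `l ≤ k`. -/
def ofLE {l : ℕ} (h : l ≤ k) (c : Covering k T' T) : Covering l T' T where
  toHom := c.toHom
  mapStrategy := c.mapStrategy
  mapStrategy_congr := c.mapStrategy_congr
  exists_lift := c.exists_lift
  bijective_toFun n hn := c.bijective_toFun n (hn.trans h)
  mapStrategy_toFun b s n hn p := c.mapStrategy_toFun b s n (hn.trans_le h) p

end Covering

end Basic

/-! ### Inverse limits of coverings -/

section Limit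

variable {k : ℕ} {T : ℕ → GameTree.{u}} (C : ∀ i, Covering (k + i) (T (i + 1)) (T i))

/-- The positions of the limit game tree. -/
abbrev LimitPos (n : ℕ) : Type u :=
  Thread (A := fun i ↦ (T i).Pos n) fun i ↦ (C i).toFun n

theorem bijective_eval_limit {n j : ℕ} (h : n ≤ k + j) :
    Function.Bijective fun f : LimitPos C n ↦ f.1 j :=
  Thread.bijective_eval fun i hi ↦ (C i).bijective_toFun n (by omega)

/-- The inverse limit of a sequence of game trees along coverings. -/
def limit : GameTree.{u} where
  Pos := LimitPos C
  parent n f := ⟨fun i ↦ (T i).parent n (f.1 i), fun i ↦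
    ((C i).parent_toFun n _).symm.trans (congrArg _ (f.2 i))⟩
  parent_surjective n p := by
    obtain ⟨q, hq⟩ := (T (n + 1)).parent_surjective n (p.1 (n + 1))
    obtain ⟨g, rfl⟩ := (bijective_eval_limit C (n := n + 1) (j := n + 1) (by omega)).2 q
    exact ⟨g, (bijective_eval_limit C (n := n) (j := n + 1) (by omega)).1 hq⟩

/-- The projection of the limit to the `i`-th game tree. -/
def limitProj (i : ℕ) : Hom (limit C) (T i) := ⟨fun _ f ↦ f.1 i, fun _ _ ↦ rfl⟩

open Classical in
/-- The strategy on `T j` that agrees with `s` on the levels where the projection from the limit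
is bijective, and is arbitrary elsewhere. -/
noncomputable def limitTransfer (s : (limit C).Strategy) (j : ℕ) : (T j).Strategy := fun n p ↦
  if h : n + 1 ≤ k + j then
    have hf := (bijective_eval_limit C (n := n) (j := j) (by omega)).2 p
    ⟨(s n hf.choose).1.1 j,
      (congrArg (fun g : (limit C).Pos n ↦ g.1 j) (s n hf.choose).2).trans hf.choose_spec⟩
  else Classical.arbitrary (T j).Strategy n p

theorem limitTransfer_eval (s : (limit C).Strategy) {j n : ℕ} (h : n + 1 ≤ k + j)
    (f : (limit C).Pos n) : (limitTransfer C s j n (f.1 j)).1 = (s n f).1.1 j := by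
  have hbij := bijective_eval_limit C (n := n) (j := j) (by omega)
  have hf : (hbij.2 (f.1 j)).choose = f := hbij.1 (hbij.2 (f.1 j)).choose_spec
  simp only [limitTransfer, dif_pos h]
  rw [hf]

theorem limitTransfer_congr {s s' : (limit C).Strategy} {n : ℕ} (h : s n = s' n) (j : ℕ) :
    limitTransfer C s j n = limitTransfer C s' j n := by
  funext p
  simp only [limitTransfer, h]

/-- The `m`-th approximation, on `T i`, to the image of the limit strategy `s`: transfer `s` to
`T (i + m)` and push the result down along `m` coverings. -/
noncomputable def limitApprox (b : ℕ) (s : (limit C).Strategy) : ℕ → ∀ i, (T i).Strategy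
  | 0, i => limitTransfer C s i
  | m + 1, i => (C i).mapStrategy b (limitApprox b s m (i + 1))

theorem limitApprox_congr (b : ℕ) {s s' : (limit C).Strategy} (m : ℕ) {i n : ℕ}
    (h : ∀ j ≤ n, s j = s' j) : limitApprox C b s m i n = limitApprox C b s' m i n := by
  induction m generalizing i n with
  | zero => exact limitTransfer_congr C (h n le_rfl) i
  | succ m ih =>
    exact (C i).mapStrategy_congr _ _ _ _ fun j hj ↦ ih fun l hl ↦ h l (hl.trans hj)

theorem limitApprox_succ (b : ℕ) (s : (limit C).Strategy) {m i n : ℕ} (h : n + 1 ≤ k + i + m) :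
    limitApprox C b s (m + 1) i n = limitApprox C b s m i n := by
  induction m generalizing i n with
  | zero =>
    funext p
    obtain ⟨f, rfl⟩ := (bijective_eval_limit C (n := n) (j := i) (by omega)).2 p
    refine Subtype.ext ?_
    change ((C i).mapStrategy b (limitTransfer C s (i + 1)) n (f.1 i)).1 =
      (limitTransfer C s i n (f.1 i)).1
    rw [limitTransfer_eval C s (by omega) f, ← (s n f).1.2 i, ← f.2 i,
      (C i).mapStrategy_toFun _ _ _ (by omega), limitTransfer_eval C s (by omega) f]
  | succ m ih => exact (C i).mapStrategy_congr _ _ _ _ fun j hj ↦ ih (by omega)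

theorem limitApprox_eq_of_le (b : ℕ) (s : (limit C).Strategy) {i n m m' : ℕ}
    (h : n + 1 ≤ k + i + m) (hm : m ≤ m') :
    limitApprox C b s m' i n = limitApprox C b s m i n := by
  induction m', hm using Nat.le_induction with
  | base => rfl
  | succ m' hm ih => rw [limitApprox_succ C b s (by omega), ih]

/-- The image on `T i` of a strategy on the limit: at level `n` the approximations are constant
from the `(n + 1)`-st on. -/
noncomputable def limitStrategy (b : ℕ) (s : (limit C).Strategy) (i : ℕ) : (T i).Strategy :=
  fun n ↦ limitApprox C b s (n + 1) i n

theorem limitStrategy_eq_mapStrategy (b : ℕ) (s : (limit C).Strategy) (i : ℕ) :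
    limitStrategy C b s i = (C i).mapStrategy b (limitStrategy C b s (i + 1)) := by
  funext n
  calc limitApprox C b s (n + 1) i n
      = (C i).mapStrategy b (limitApprox C b s (n + 1) (i + 1)) n :=
        (limitApprox_succ C b s (by omega)).symm
    _ = (C i).mapStrategy b (limitStrategy C b s (i + 1)) n :=
        (C i).mapStrategy_congr _ _ _ _ fun m hm ↦
          limitApprox_eq_of_le C b s (by omega) (Nat.succ_le_succ hm)

theorem limitStrategy_eval (b : ℕ) (s : (limit C).Strategy) {j n : ℕ} (h : n + 1 ≤ k + j)
    (f : (limit C).Pos n) : (limitStrategy C b s j n (f.1 j)).1 = (s n f).1.1 j := by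
  have hstable : limitStrategy C b s j n = limitTransfer C s j n :=
    limitApprox_eq_of_le C b s (m := 0) (by omega) (Nat.zero_le _)
  rw [hstable, limitTransfer_eval C s h]

theorem exists_limit_lift {b : ℕ} (hb : b < 2) (s : (limit C).Strategy) (x : (T 0).Play)
    (hx : (limitStrategy C b s 0).IsConsistent b x) :
    ∃ x', s.IsConsistent b x' ∧ (limitProj C 0).mapPlay x' = x := by
  have exists_succ (i : ℕ) (y : {y // (limitStrategy C b s i).IsConsistent b y}) :
      ∃ z : {z // (limitStrategy C b s (i + 1)).IsConsistent b z},
        (C i).toHom.mapPlay z.1 = y.1 := by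
    obtain ⟨y, hy⟩ := y
    rw [limitStrategy_eq_mapStrategy] at hy
    obtain ⟨z, hz, h⟩ := (C i).exists_lift b hb _ _ hy
    exact ⟨⟨z, hz⟩, h⟩
  choose next hnext using exists_succ
  let xs (i : ℕ) : {y // (limitStrategy C b s i).IsConsistent b y} := Nat.rec ⟨x, hx⟩ next i
  have hxs (i : ℕ) : (C i).toHom.mapPlay (xs (i + 1)).1 = (xs i).1 := hnext i (xs i)
  refine ⟨⟨fun n ↦ ⟨fun i ↦ (xs i).1.1 n, fun i ↦ ?_⟩, fun n ↦ ?_⟩, fun n hn ↦ ?_, rfl⟩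
  · exact congrArg (fun y : (T i).Play ↦ y.1 n) (hxs i)
  · exact Subtype.ext (funext fun i ↦ (xs i).1.2 n)
  · apply (bijective_eval_limit C (n := n + 1) (j := n + 1) (by omega)).1
    change (xs (n + 1)).1.1 (n + 1) = _
    rw [(xs (n + 1)).2 n hn]
    exact limitStrategy_eval C b s (by omega) ⟨fun i ↦ (xs i).1.1 n, _⟩

/-- The limit of a sequence of coverings covers the first game tree. -/
noncomputable def limitCovering : Covering k (limit C) (T 0) where
  toHom := limitProj C 0
  mapStrategy b s := limitStrategy C b s 0
  mapStrategy_congr b _ _ _ h := limitApprox_congr C b _ h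
  bijective_toFun _ hn := bijective_eval_limit C (by omega)
  mapStrategy_toFun b s _ hn p := limitStrategy_eval C b s (by omega) p
  exists_lift _ hb s x hx := exists_limit_lift C hb s x hx

end Limit

end GameTree

/-! ### Attractors -/

namespace GameTree

variable {T : GameTree.{u}}

/-- A set of positions of each length. -/
abbrev LevelSet (T : GameTree.{u}) : Type u := ∀ n, Set (T.Pos n)

/-- Player `a` can steer the game from `p` into `B`, with `α` as an ordinal clock, as long as
both players move inside `Q`. -/
def AttractedBy (Q B : T.LevelSet) (a : ℕ) (α : Ordinal.{u}) (n : ℕ) (p : T.Pos n) : Prop :=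
  p ∈ B n ∨
  (n % 2 = a ∧ ∃ q, T.parent n q = p ∧ q ∈ Q (n + 1) ∧
    ∃ β, ∃ _ : β < α, AttractedBy Q B a β (n + 1) q) ∨
  (n % 2 ≠ a ∧ ∀ q, T.parent n q = p → q ∈ Q (n + 1) →
    ∃ β, ∃ _ : β < α, AttractedBy Q B a β (n + 1) q)
termination_by α

/-- The positions from which player `a` can steer the game into `B`, as long as both players
move inside `Q`. -/
def attractor (Q B : T.LevelSet) (a : ℕ) : T.LevelSet :=
  fun n ↦ {p | ∃ α, AttractedBy Q B a α n p}

/-- The least clock with which player `a` can steer the game from `p` into `B`. -/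
noncomputable def attractorRank (Q B : T.LevelSet) (a n : ℕ) (p : T.Pos n) : Ordinal.{u} :=
  sInf {α | AttractedBy Q B a α n p}

variable {Q B : T.LevelSet} {a n : ℕ} {p : T.Pos n}

theorem attractedBy_attractorRank (hp : p ∈ attractor Q B a n) :
    AttractedBy Q B a (attractorRank Q B a n p) n p :=
  csInf_mem (s := {α | AttractedBy Q B a α n p}) hp

theorem attractorRank_le {α : Ordinal.{u}} (h : AttractedBy Q B a α n p) :
    attractorRank Q B a n p ≤ α :=
  csInf_le' h

theorem subset_attractor : B n ⊆ attractor Q B a n := fun p hp ↦ by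
  refine ⟨0, ?_⟩
  rw [AttractedBy]
  exact Or.inl hp

theorem exists_child_mem_attractor (hp : p ∈ attractor Q B a n) (hB : p ∉ B n) (hn : n % 2 = a) :
    ∃ q : T.Child p, q.1 ∈ Q (n + 1) ∧ q.1 ∈ attractor Q B a (n + 1) ∧
      attractorRank Q B a (n + 1) q.1 < attractorRank Q B a n p := by
  have h := attractedBy_attractorRank hp
  rw [AttractedBy] at h
  rcases h with h | ⟨_, q, hq, hQ, β, hβ, h⟩ | ⟨h, _⟩
  · exact absurd h hB
  · exact ⟨⟨q, hq⟩, hQ, ⟨β, h⟩, (attractorRank_le h).trans_lt hβ⟩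
  · exact absurd hn h

theorem mem_attractor_and_rank_lt (hp : p ∈ attractor Q B a n) (hB : p ∉ B n) (hn : n % 2 ≠ a)
    {q : T.Pos (n + 1)} (hq : T.parent n q = p) (hQ : q ∈ Q (n + 1)) :
    q ∈ attractor Q B a (n + 1) ∧ attractorRank Q B a (n + 1) q < attractorRank Q B a n p := by
  have h := attractedBy_attractorRank hp
  rw [AttractedBy] at h
  rcases h with h | ⟨h, _⟩ | ⟨_, h⟩
  · exact absurd h hB
  · exact absurd h hn
  · obtain ⟨β, hβ, h⟩ := h q hq hQ
    exact ⟨⟨β, h⟩, (attractorRank_le h).trans_lt hβ⟩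

theorem notMem_attractor_of_child (hp : p ∉ attractor Q B a n) (hn : n % 2 = a)
    {q : T.Pos (n + 1)} (hq : T.parent n q = p) (hQ : q ∈ Q (n + 1)) :
    q ∉ attractor Q B a (n + 1) := by
  rintro ⟨α, hα⟩
  refine hp ⟨Order.succ α, ?_⟩
  rw [AttractedBy]
  exact Or.inr (Or.inl ⟨hn, q, hq, hQ, α, Order.lt_succ α, hα⟩)

theorem exists_child_notMem_attractor (hp : p ∉ attractor Q B a n) (hn : n % 2 ≠ a) :
    ∃ q, T.parent n q = p ∧ q ∈ Q (n + 1) ∧ q ∉ attractor Q B a (n + 1) := by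
  by_contra! hall
  refine hp ⟨⨆ q : T.Pos (n + 1), Order.succ (attractorRank Q B a (n + 1) q), ?_⟩
  rw [AttractedBy]
  exact Or.inr (Or.inr ⟨hn, fun q hq hQ ↦ ⟨attractorRank Q B a (n + 1) q,
    (Order.lt_succ _).trans_le
      (Ordinal.le_iSup (fun q ↦ Order.succ (attractorRank Q B a (n + 1) q)) q),
    attractedBy_attractorRank (hall q hq hQ)⟩⟩)

open Classical in
/-- The strategy of player `a` that decreases the rank inside the attractor. -/
noncomputable def attractorStrategy (Q B : T.LevelSet) (a : ℕ) : T.Strategy := fun n p ↦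
  if h : p ∈ attractor Q B a n ∧ p ∉ B n ∧ n % 2 = a then
    (exists_child_mem_attractor h.1 h.2.1 h.2.2).choose
  else Classical.arbitrary T.Strategy n p

theorem attractorStrategy_spec (hp : p ∈ attractor Q B a n) (hB : p ∉ B n) (hn : n % 2 = a) :
    (attractorStrategy Q B a n p).1 ∈ Q (n + 1) ∧
      (attractorStrategy Q B a n p).1 ∈ attractor Q B a (n + 1) ∧
      attractorRank Q B a (n + 1) (attractorStrategy Q B a n p).1 < attractorRank Q B a n p := by
  rw [attractorStrategy, dif_pos ⟨hp, hB, hn⟩]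
  exact (exists_child_mem_attractor hp hB hn).choose_spec

theorem exists_mem_of_mem_attractor (x : T.Play) (hx : x.1 n ∈ attractor Q B a n)
    (hdefend : ∀ m ≥ n, m % 2 ≠ a → x.1 (m + 1) ∈ Q (m + 1))
    (hattack : ∀ m ≥ n, m % 2 = a → x.1 m ∈ attractor Q B a m → x.1 m ∉ B m →
      x.1 (m + 1) = (attractorStrategy Q B a m (x.1 m)).1) :
    ∃ m ≥ n, x.1 m ∈ B m := by
  induction hα : attractorRank Q B a n (x.1 n) using WellFoundedLT.induction generalizing n with
  | ind α ih =>
    subst hα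
    by_cases hB : x.1 n ∈ B n
    · exact ⟨n, le_rfl, hB⟩
    have hnext : x.1 (n + 1) ∈ attractor Q B a (n + 1) ∧
        attractorRank Q B a (n + 1) (x.1 (n + 1)) < attractorRank Q B a n (x.1 n) := by
      by_cases hn : n % 2 = a
      · rw [hattack n le_rfl hn hx hB]
        exact (attractorStrategy_spec hx hB hn).2
      · exact mem_attractor_and_rank_lt hx hB hn (x.2 n) (hdefend n le_rfl hn)
    obtain ⟨m, hm, h⟩ := ih _ hnext.2 hnext.1 (fun m hm ↦ hdefend m (by omega))
      (fun m hm ↦ hattack m (by omega)) rfl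
    exact ⟨m, by omega, h⟩

end GameTree

/-! ### Quasi-strategies -/

namespace GameTree

variable {T : GameTree.{u}}

/-- From level `l` on, `R` is a quasi-strategy, inside `Q`, against player `b`: it keeps every
move of player `b` that stays in `Q`, and leaves the other player at least one move. -/
structure IsQuasiStrategy (Q R : T.LevelSet) (b l : ℕ) : Prop where
  subset : ∀ m ≥ l, R m ⊆ Q m
  closed : ∀ m ≥ l, m % 2 = b → ∀ q, T.parent m q ∈ R m → q ∈ Q (m + 1) → q ∈ R (m + 1)
  exists_child : ∀ m ≥ l, m % 2 ≠ b → ∀ p ∈ R m, ∃ q, T.parent m q = p ∧ q ∈ R (m + 1)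

theorem isQuasiStrategy_top (b l : ℕ) : IsQuasiStrategy (T := T) ⊤ ⊤ b l where
  subset _ _ := subset_rfl
  closed _ _ _ _ _ _ := trivial
  exists_child m _ _ p _ := (T.parent_surjective m p).imp fun _ h ↦ ⟨h, trivial⟩

theorem isQuasiStrategy_sdiff_attractor (Q B : T.LevelSet) (a l : ℕ) :
    IsQuasiStrategy Q (Q \ attractor Q B a) a l where
  subset _ _ := sdiff_subset
  closed _ _ hm _ hp hQ := ⟨hQ, notMem_attractor_of_child hp.2 hm rfl hQ⟩
  exists_child _ _ hm _ hp := exists_child_notMem_attractor hp.2 hm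

/-- The positions reachable from `p`, at level `l`, along plays that stay in `Q`. -/
def reachable (Q : T.LevelSet) {l : ℕ} (p : T.Pos l) : T.LevelSet := fun m ↦
  {q | ∃ y : T.Play, y.1 m = q ∧ y.1 l = p ∧ ∀ j, l ≤ j → j ≤ m → y.1 j ∈ Q j}

theorem exists_play_extending (z : T.Play) {n : ℕ} {q : T.Pos (n + 1)} (hq : T.parent n q = z.1 n) :
    ∃ w : T.Play, w.1 (n + 1) = q ∧ ∀ j ≤ n, w.1 j = z.1 j := by
  obtain ⟨w, rfl⟩ := T.exists_play q
  exact ⟨w, rfl, fun j ↦ Thread.eq_of_le w z ((w.2 n).symm.trans hq)⟩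

theorem mem_reachable_of_parent {Q : T.LevelSet} {l m : ℕ} {p : T.Pos l} (hlm : l ≤ m)
    {q : T.Pos (m + 1)} (hp : T.parent m q ∈ reachable Q p m) (hq : q ∈ Q (m + 1)) :
    q ∈ reachable Q p (m + 1) := by
  obtain ⟨y, hy, hyp, hyQ⟩ := hp
  obtain ⟨w, rfl, hwy⟩ := exists_play_extending y hy.symm
  refine ⟨w, rfl, (hwy l hlm).trans hyp, fun j hj hjm ↦ ?_⟩
  rcases hjm.eq_or_lt with rfl | hjm
  · exact hq
  · exact hwy j (by omega) ▸ hyQ j hj (by omega)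

theorem isQuasiStrategy_reachable {Q : T.LevelSet} {l : ℕ} (p : T.Pos l)
    (hQ : IsQuasiStrategy ⊤ Q 1 l) {l' : ℕ} (hl : l ≤ l') :
    IsQuasiStrategy Q (reachable Q p) 0 l' where
  subset m hm := fun _ ⟨_, hy, _, hyQ⟩ ↦ hy ▸ hyQ m (hl.trans hm) le_rfl
  closed _ hm _ _ hp hq := mem_reachable_of_parent (hl.trans hm) hp hq
  exists_child m hm hm1 q hq := by
    obtain ⟨r, rfl⟩ := T.parent_surjective m q
    obtain ⟨y, hy, _, hyQ⟩ := id hq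
    exact ⟨r, rfl, mem_reachable_of_parent (hl.trans hm) hq
      (hQ.closed m (hl.trans hm) (by omega) r (hy ▸ hyQ m (hl.trans hm) le_rfl) trivial)⟩

/-! ### The unraveling of an open game -/

/-- An answer to the set of positions proposed at level `K`. The answer `accept y m` claims that
the play will run along `y` up to level `m`, where it reaches the target; `refuse R` claims that
it will stay in the quasi-strategy `R`, hence off the target. -/
inductive Answer (T : GameTree.{u}) : Type u
  | pending
  | accept (y : T.Play) (m : ℕ)
  | refuse (R : T.LevelSet)

/-- The extra moves made in the unraveled game: player `0`, at level `K`, proposes a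
quasi-strategy, and player `1` answers at level `K + 1`. -/
abbrev Announcement (T : GameTree.{u}) : Type u := T.LevelSet × T.Answer

open Classical in
/-- The part of an announcement made before level `n`. -/
noncomputable def truncate (K n : ℕ) (a : T.Announcement) : T.Announcement :=
  (if n ≤ K then ⊤ else a.1, if n ≤ K + 1 then .pending else a.2)

/-- `Q` is a legal proposal of player `0` when moving to `p`. -/
def IsProposal (K : ℕ) (Q : T.LevelSet) (p : T.Pos (K + 1)) : Prop :=
  p ∈ Q (K + 1) ∧ IsQuasiStrategy ⊤ Q 1 (K + 1)

/-- `o` is a legal answer to the proposal `Q` in the game with target `B`, and the play `z`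
abides by it up to level `n`. -/
def Answer.IsValid (K : ℕ) (B Q : T.LevelSet) (z : T.Play) (n : ℕ) : T.Answer → Prop
  | pending => False
  | accept y m => K + 2 ≤ m ∧ y.1 m ∈ B m ∧ (∀ j, K + 1 ≤ j → j ≤ m → y.1 j ∈ Q j) ∧
      ∀ j ≤ m, j ≤ n → z.1 j = y.1 j
  | refuse R => (IsQuasiStrategy Q R 0 (K + 2) ∧ ∀ m ≥ K + 2, Disjoint (R m) (B m)) ∧
      ∀ j, K + 2 ≤ j → j ≤ n → z.1 j ∈ R j

/-- The announcement `a` is legal at level `n` of the play `z`. -/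
structure IsLegalAlong (K : ℕ) (B : T.LevelSet) (n : ℕ) (a : T.Announcement) (z : T.Play) :
    Prop where
  truncate_eq : truncate K n a = a
  isProposal : K + 1 ≤ n → IsProposal K a.1 (z.1 (K + 1))
  isValid : K + 2 ≤ n → a.2.IsValid K B a.1 z n

/-- The announcement `a` is legal at the position `p`. -/
def IsLegal (K : ℕ) (B : T.LevelSet) (n : ℕ) (p : T.Pos n) (a : T.Announcement) : Prop :=
  ∃ z : T.Play, z.1 n = p ∧ IsLegalAlong K B n a z

section Legal

variable {K n : ℕ} {B : T.LevelSet} {a : T.Announcement} {z w : T.Play}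

theorem truncate_of_le (hn : n ≤ K) : truncate K n a = (⊤, .pending) := by
  simp [truncate, hn, hn.trans (Nat.le_succ K)]

theorem truncate_succ_self : truncate K (K + 1) a = (a.1, .pending) := by simp [truncate]

theorem truncate_of_ge (hn : K + 2 ≤ n) : truncate K n a = a := by
  simp [truncate, show ¬ n ≤ K by omega, show ¬ n ≤ K + 1 by omega]

theorem truncate_truncate {m : ℕ} (h : n ≤ m) :
    truncate K n (truncate K m a) = truncate K n a := by
  simp only [truncate]
  grind

theorem truncate_eq_truncate_succ (hK : n ≠ K) (hK' : n ≠ K + 1) :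
    truncate K n a = truncate K (n + 1) a := by
  rcases lt_or_ge n K with h | h
  · rw [truncate_of_le h.le, truncate_of_le h]
  · rw [truncate_of_ge (by omega), truncate_of_ge (by omega)]

theorem Answer.IsValid.mono {Q : T.LevelSet} {o : T.Answer} {m : ℕ} (h : o.IsValid K B Q z m)
    (hnm : n ≤ m) (hzw : ∀ j ≤ n, z.1 j = w.1 j) : o.IsValid K B Q w n := by
  cases o with
  | pending => exact h
  | accept y l =>
    exact ⟨h.1, h.2.1, h.2.2.1, fun j hj hjn ↦ hzw j hjn ▸ h.2.2.2 j hj (hjn.trans hnm)⟩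
  | refuse R => exact ⟨h.1, fun j hj hjn ↦ hzw j hjn ▸ h.2 j hj (hjn.trans hnm)⟩

theorem IsLegalAlong.congr (h : IsLegalAlong K B n a z) (hzw : z.1 n = w.1 n) :
    IsLegalAlong K B n a w := by
  have hagree (j : ℕ) (hj : j ≤ n) : z.1 j = w.1 j := Thread.eq_of_le z w hzw hj
  exact ⟨h.truncate_eq, fun hn ↦ hagree _ hn ▸ h.isProposal hn,
    fun hn ↦ (h.isValid hn).mono le_rfl hagree⟩

theorem IsLegal.along (h : IsLegal K B n (z.1 n) a) : IsLegalAlong K B n a z := by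
  obtain ⟨w, hw, h⟩ := h
  exact h.congr hw

theorem IsLegalAlong.isLegal (h : IsLegalAlong K B n a z) : IsLegal K B n (z.1 n) a := ⟨z, rfl, h⟩

theorem isLegalAlong_truncate (hproposal : K + 1 ≤ n → IsProposal K a.1 (z.1 (K + 1)))
    (hvalid : K + 2 ≤ n → a.2.IsValid K B a.1 z n) : IsLegalAlong K B n (truncate K n a) z := by
  refine ⟨truncate_truncate le_rfl, fun hn ↦ ?_, fun hn ↦ ?_⟩
  · rw [truncate, if_neg (by omega)]
    exact hproposal hn
  · rw [truncate_of_ge hn]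
    exact hvalid hn

theorem IsLegalAlong.truncate (h : IsLegalAlong K B (n + 1) a z) :
    IsLegalAlong K B n (truncate K n a) z :=
  isLegalAlong_truncate (fun hn ↦ h.isProposal (by omega))
    fun hn ↦ (h.isValid (by omega)).mono (Nat.le_succ n) fun _ _ ↦ rfl

theorem isLegal_of_le (hn : n ≤ K) (p : T.Pos n) : IsLegal K B n p (⊤, .pending) := by
  obtain ⟨z, rfl⟩ := T.exists_play p
  refine ⟨z, rfl, truncate_of_le hn, fun _ ↦ ?_, fun _ ↦ ?_⟩ <;> omega

theorem IsLegal.eq_of_le {p : T.Pos n} (h : IsLegal K B n p a) (hn : n ≤ K) :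
    a = (⊤, .pending) := by
  obtain ⟨z, -, h⟩ := h
  rw [← h.truncate_eq, truncate_of_le hn]

theorem exists_isValid (hK : K % 2 = 0) {Q : T.LevelSet} (hQ : IsProposal K Q (z.1 (K + 1))) :
    ∃ (w : T.Play) (o : T.Answer), w.1 (K + 1) = z.1 (K + 1) ∧ o.IsValid K B Q w (K + 2) := by
  set R := reachable Q (z.1 (K + 1))
  by_cases hhit : ∃ m ≥ K + 2, (R m ∩ B m).Nonempty
  · obtain ⟨m, hm, _, ⟨y, rfl, hyz, hyQ⟩, hB⟩ := hhit
    exact ⟨y, .accept y m, hyz, hm, hB, hyQ, fun _ _ _ ↦ rfl⟩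
  · have hz : z.1 (K + 1) ∈ R (K + 1) :=
      ⟨z, rfl, rfl, fun j hj hj' ↦ le_antisymm hj hj' ▸ hQ.1⟩
    have hz' : z.1 (K + 2) ∈ R (K + 2) :=
      mem_reachable_of_parent le_rfl (by rwa [z.2])
        (hQ.2.closed (K + 1) le_rfl (by omega) _ (by rw [z.2]; exact hQ.1) trivial)
    refine ⟨z, .refuse R, rfl, ⟨isQuasiStrategy_reachable _ hQ.2 (by omega), fun m hm ↦ ?_⟩,
      fun j hj hj' ↦ le_antisymm hj hj' ▸ hz'⟩
    exact disjoint_iff_inter_eq_empty.2 (not_nonempty_iff_eq_empty.1 fun h ↦ hhit ⟨m, hm, h⟩)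

theorem exists_isValid_succ {Q : T.LevelSet} (hQ : IsProposal K Q (z.1 (K + 1))) {o : T.Answer}
    (hn : K + 2 ≤ n) (ho : o.IsValid K B Q z n) :
    ∃ w : T.Play, (∀ j ≤ n, w.1 j = z.1 j) ∧ o.IsValid K B Q w (n + 1) := by
  cases o with
  | pending => exact ho.elim
  | accept y m =>
    rcases lt_or_ge n m with hm | hm
    · exact ⟨y, fun j hj ↦ (ho.2.2.2 j (by omega) hj).symm, ho.1, ho.2.1, ho.2.2.1,
        fun _ _ _ ↦ rfl⟩
    · exact ⟨z, fun _ _ ↦ rfl, ho.1, ho.2.1, ho.2.2.1, fun j hj _ ↦ ho.2.2.2 j hj (by omega)⟩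
  | refuse R =>
    have hzR := ho.2 n hn le_rfl
    have hchild : ∃ r, T.parent n r = z.1 n ∧ r ∈ R (n + 1) := by
      by_cases hn2 : n % 2 = 0
      · obtain ⟨r, hr, hrQ⟩ :=
          hQ.2.exists_child n (by omega) (by omega) _ (ho.1.1.subset n hn hzR)
        exact ⟨r, hr, ho.1.1.closed n hn hn2 r (hr ▸ hzR) hrQ⟩
      · exact ho.1.1.exists_child n hn hn2 _ hzR
    obtain ⟨r, hr, hrR⟩ := hchild
    obtain ⟨w, rfl, hwz⟩ := exists_play_extending z hr
    refine ⟨w, hwz, ho.1, fun j hj hjn ↦ ?_⟩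
    rcases hjn.eq_or_lt with rfl | hjn
    · exact hrR
    · exact hwz j (by omega) ▸ ho.2 j hj (by omega)

theorem IsLegalAlong.exists_succ (hK : K % 2 = 0) (h : IsLegalAlong K B n a z) :
    ∃ w a', w.1 n = z.1 n ∧ IsLegalAlong K B (n + 1) a' w ∧ GameTree.truncate K n a' = a := by
  rcases lt_trichotomy n K with hn | rfl | hn
  · refine ⟨z, a, rfl, ⟨?_, by omega, by omega⟩, h.truncate_eq⟩
    rw [← truncate_eq_truncate_succ (by omega) (by omega), h.truncate_eq]
  · rw [← h.truncate_eq, truncate_of_le le_rfl]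
    exact ⟨z, (⊤, .pending), rfl, ⟨truncate_succ_self, fun _ ↦ ⟨trivial, isQuasiStrategy_top _ _⟩,
      by omega⟩, truncate_of_le le_rfl⟩
  have hQ := h.isProposal hn
  rcases (Nat.succ_le_iff.2 hn).eq_or_lt with rfl | hn'
  · obtain ⟨w, o, hwz, ho⟩ := exists_isValid (B := B) hK hQ
    refine ⟨w, (a.1, o), hwz, ⟨truncate_of_ge le_rfl, fun _ ↦ ?_, fun _ ↦ ho⟩, ?_⟩
    · exact hwz ▸ hQ
    · rw [← h.truncate_eq, truncate_succ_self, truncate_succ_self]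
  · obtain ⟨w, hwz, ho⟩ := exists_isValid_succ hQ hn' (h.isValid hn')
    exact ⟨w, a, hwz n le_rfl, ⟨truncate_of_ge (by omega), fun _ ↦ hwz _ hn ▸ hQ, fun _ ↦ ho⟩,
      h.truncate_eq⟩

end Legal

/-- The positions of the unraveled game: a position together with a legal announcement. -/
abbrev UnravelPos (K : ℕ) (B : T.LevelSet) (n : ℕ) : Type u :=
  {t : T.Pos n × T.Announcement // IsLegal K B n t.1 t.2}

/-- The unraveling, at the even level `K`, of the game on `T` with target `B`. -/
noncomputable abbrev unravel {K : ℕ} (hK : K % 2 = 0) (B : T.LevelSet) : GameTree.{u} where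
  Pos := UnravelPos K B
  parent n t := ⟨(T.parent n t.1.1, truncate K n t.1.2), by
    obtain ⟨z, hz, h⟩ := t.2
    exact ⟨z, by rw [← z.2 n, hz], h.truncate⟩⟩
  parent_surjective n t := by
    obtain ⟨⟨p, a⟩, z, hz, h⟩ := t
    obtain ⟨w, a', hwz, h', ha⟩ := h.exists_succ hK
    refine ⟨⟨(w.1 (n + 1), a'), h'.isLegal⟩, Subtype.ext (Prod.ext ?_ ha)⟩
    exact (w.2 n).trans (hwz.trans hz)

/-- The map of the unraveled game to the original one that forgets the announcements. -/
noncomputable def unravelHom {K : ℕ} (hK : K % 2 = 0) (B : T.LevelSet) : Hom (unravel hK B) T :=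
  ⟨fun _ t ↦ t.1.1, fun _ _ ↦ rfl⟩

/-- The lift of a play along which the announcement `a` is legal. -/
noncomputable def liftPlay {K : ℕ} (hK : K % 2 = 0) {B : T.LevelSet} (x : T.Play)
    (a : T.Announcement) (h : ∀ n, IsLegalAlong K B n (truncate K n a) x) :
    (unravel hK B).Play :=
  ⟨fun n ↦ ⟨(x.1 n, truncate K n a), (h n).isLegal⟩, fun n ↦
    Subtype.ext (Prod.ext (x.2 n) (truncate_truncate (Nat.le_succ n)))⟩

end GameTree

namespace GameTree

section PushDown

variable {T : GameTree.{u}} {K : ℕ} {hK : K % 2 = 0} {B : T.LevelSet}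

/-- A play through the position `p`. -/
noncomputable def through {n : ℕ} (p : T.Pos n) : T.Play := (T.exists_play p).choose

theorem through_eval {n : ℕ} (p : T.Pos n) : (through p).1 n = p := (T.exists_play p).choose_spec

theorem through_eval_of_le (x : T.Play) {j n : ℕ} (h : j ≤ n) :
    (through (x.1 n)).1 j = x.1 j :=
  Thread.eq_of_le _ x (through_eval _) h

open Classical in
/-- The move, in the original game, made by a strategy `σ` on the unraveled game at the position
`(p, a)`. -/
noncomputable def projMove (σ : (unravel hK B).Strategy) (n : ℕ) (p : T.Pos n)
    (a : T.Announcement) : T.Child p :=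
  if h : IsLegal K B n p a then
    ⟨(σ n ⟨(p, a), h⟩).1.1.1, congrArg (fun t ↦ t.1.1) (σ n ⟨(p, a), h⟩).2⟩
  else Classical.arbitrary T.Strategy n p

open Classical in
/-- The announcement in force after the strategy `σ` has moved at the position `(p, a)`. -/
noncomputable def nextAnnouncement (σ : (unravel hK B).Strategy) (n : ℕ) (p : T.Pos n)
    (a : T.Announcement) : T.Announcement :=
  if h : IsLegal K B n p a then (σ n ⟨(p, a), h⟩).1.1.2 else (⊤, .pending)

variable {σ σ' : (unravel hK B).Strategy} {n m b : ℕ} {p : T.Pos n} {a : T.Announcement}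
  {x : T.Play}

theorem projMove_of_isLegal (h : IsLegal K B n p a) :
    (projMove σ n p a).1 = (σ n ⟨(p, a), h⟩).1.1.1 := by
  rw [projMove, dif_pos h]

theorem nextAnnouncement_of_isLegal (h : IsLegal K B n p a) :
    nextAnnouncement σ n p a = (σ n ⟨(p, a), h⟩).1.1.2 := by
  rw [nextAnnouncement, dif_pos h]

theorem isLegal_nextAnnouncement (h : IsLegal K B n p a) :
    IsLegal K B (n + 1) (projMove σ n p a).1 (nextAnnouncement σ n p a) := by
  rw [projMove_of_isLegal h, nextAnnouncement_of_isLegal h]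
  exact (σ n ⟨(p, a), h⟩).1.2

theorem truncate_nextAnnouncement (h : IsLegal K B n p a) :
    truncate K n (nextAnnouncement σ n p a) = a := by
  rw [nextAnnouncement_of_isLegal h]
  exact congrArg (fun t ↦ t.1.2) (σ n ⟨(p, a), h⟩).2

theorem nextAnnouncement_of_ne (h : IsLegal K B n p a) (hnK : n ≠ K) (hnK' : n ≠ K + 1) :
    nextAnnouncement σ n p a = a := by
  obtain ⟨z, -, hz⟩ := isLegal_nextAnnouncement (σ := σ) h
  rw [← hz.truncate_eq, ← truncate_eq_truncate_succ hnK hnK', truncate_nextAnnouncement h]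

theorem projMove_accept {Q : T.LevelSet} {y : T.Play}
    (h : IsLegal K B n p (Q, .accept y m)) (hn : K + 2 ≤ n) (hnm : n < m) :
    (projMove σ n p (Q, .accept y m)).1 = y.1 (n + 1) := by
  obtain ⟨z, hz, hleg⟩ := isLegal_nextAnnouncement (σ := σ) h
  rw [nextAnnouncement_of_ne h (by omega) (by omega)] at hleg
  rw [← hz]
  exact (hleg.isValid (by omega)).2.2.2 (n + 1) hnm le_rfl

theorem exists_lift_of_announcement (a : T.Announcement)
    (h : ∀ n, IsLegalAlong K B n (truncate K n a) x)
    (hmove : ∀ n, n % 2 = b → x.1 (n + 1) = (projMove σ n (x.1 n) (truncate K n a)).1)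
    (hannounce : ∀ n, n % 2 = b → n = K ∨ n = K + 1 →
      nextAnnouncement σ n (x.1 n) (truncate K n a) = truncate K (n + 1) a) :
    ∃ x', σ.IsConsistent b x' ∧ (unravelHom hK B).mapPlay x' = x := by
  refine ⟨liftPlay hK x a h, fun n hn ↦ Subtype.ext (Prod.ext ?_ ?_), rfl⟩
  · exact (hmove n hn).trans (projMove_of_isLegal (h n).isLegal)
  · refine Eq.trans ?_ (nextAnnouncement_of_isLegal (h n).isLegal)
    by_cases hnK : n = K ∨ n = K + 1
    · exact (hannounce n hn hnK).symm
    · push Not at hnK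
      rw [nextAnnouncement_of_ne (h n).isLegal hnK.1 hnK.2]
      exact (truncate_eq_truncate_succ hnK.1 hnK.2).symm

/-- A recipe for pushing moves down from the unraveled game after level `K`: the player imitates
the moves answering the announcement `onMiss`, except that inside the attractor of `target` he
heads for `target`, and once `target` has been hit he imitates the moves answering `onHit`. -/
structure Plan (T : GameTree.{u}) where
  player : ℕ
  arena : T.LevelSet
  target : T.LevelSet
  onHit : ∀ m, T.Pos m → T.Announcement
  onMiss : T.Announcement

namespace Plan

variable {P : T.Plan}

/-- The attractor of the target of a plan. -/
abbrev attr (P : T.Plan) : T.LevelSet := attractor P.arena P.target P.player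

open Classical in
/-- The announcement whose answers are imitated at the position `p`. -/
noncomputable def announcement (P : T.Plan) (n : ℕ) (p : T.Pos n) : T.Announcement :=
  if h : ∃ m ≤ n, (through p).1 m ∈ P.target m then
    P.onHit (Nat.find h) ((through p).1 (Nat.find h))
  else P.onMiss

open Classical in
/-- The move at `p` prescribed by a plan, where `move a` is the move answering `a`. -/
noncomputable def move (P : T.Plan) (K n : ℕ) (p : T.Pos n) (move : T.Announcement → T.Child p) :
    T.Child p :=
  if K < n ∧ p ∈ P.attr n ∧ ∀ m ≤ n, (through p).1 m ∉ P.target m then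
    attractorStrategy P.arena P.target P.player n p
  else move (truncate K n (P.announcement n p))

theorem move_of_le (hn : n ≤ K) (f : T.Announcement → T.Child p) :
    P.move K n p f = f (⊤, .pending) := by
  rw [move, if_neg (by omega), truncate_of_le hn]

theorem announcement_of_hit (hmn : m ≤ n) (hm : x.1 m ∈ P.target m)
    (hmin : ∀ i < m, x.1 i ∉ P.target i) : P.announcement n (x.1 n) = P.onHit m (x.1 m) := by
  classical
  have hhit : (through (x.1 n)).1 m ∈ P.target m := by rwa [through_eval_of_le x hmn]
  have hex : ∃ m ≤ n, (through (x.1 n)).1 m ∈ P.target m := ⟨m, hmn, hhit⟩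
  have hfind : Nat.find hex = m := by
    refine (Nat.find_eq_iff hex).2 ⟨⟨hmn, hhit⟩, fun i hi h ↦ hmin i hi ?_⟩
    rw [← through_eval_of_le x h.1]
    exact h.2
  rw [announcement, dif_pos hex, hfind, through_eval_of_le x hmn]

theorem announcement_of_miss (hmiss : ∀ i ≤ n, x.1 i ∉ P.target i) :
    P.announcement n (x.1 n) = P.onMiss := by
  rw [announcement, dif_neg]
  rintro ⟨m, hm, h⟩
  exact hmiss m hm (through_eval_of_le x hm ▸ h)

/-- The player moves in `x` according to the plan `P`, imitating `σ`. -/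
def IsFollowed (P : T.Plan) (σ : (unravel hK B).Strategy) (x : T.Play) : Prop :=
  ∀ n, n % 2 = P.player → x.1 (n + 1) = (P.move K n (x.1 n) (projMove σ n (x.1 n))).1

namespace IsFollowed

variable (hx : P.IsFollowed σ x)
include hx

theorem succ_of_le (hn : n % 2 = P.player) (hnK : n ≤ K) :
    x.1 (n + 1) = (projMove σ n (x.1 n) (⊤, .pending)).1 := by
  rw [hx n hn, move_of_le hnK]

theorem succ_of_hit (hn : n % 2 = P.player) (hmn : m ≤ n) (hm : x.1 m ∈ P.target m)
    (hmin : ∀ i < m, x.1 i ∉ P.target i) :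
    x.1 (n + 1) = (projMove σ n (x.1 n) (truncate K n (P.onHit m (x.1 m)))).1 := by
  rw [hx n hn, move, if_neg, announcement_of_hit hmn hm hmin]
  exact fun h ↦ h.2.2 m hmn (through_eval_of_le x hmn ▸ hm)

theorem succ_of_mem_attr (hn : n % 2 = P.player) (hnK : K < n) (hattr : x.1 n ∈ P.attr n)
    (hmiss : ∀ i ≤ n, x.1 i ∉ P.target i) :
    x.1 (n + 1) = (attractorStrategy P.arena P.target P.player n (x.1 n)).1 := by
  rw [hx n hn, move, if_pos ⟨hnK, hattr, fun m hm ↦ through_eval_of_le x hm ▸ hmiss m hm⟩]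

theorem succ_of_notMem_attr (hn : n % 2 = P.player) (hattr : K < n → x.1 n ∉ P.attr n)
    (hmiss : ∀ i ≤ n, x.1 i ∉ P.target i) :
    x.1 (n + 1) = (projMove σ n (x.1 n) (truncate K n P.onMiss)).1 := by
  rw [hx n hn, move, if_neg fun h ↦ hattr h.1 h.2.1, announcement_of_miss hmiss]

theorem notMem_attr (hnK : K < n) (hmiss : ∀ i, x.1 i ∉ P.target i)
    (harena : ∀ m ≥ n, m % 2 ≠ P.player → x.1 (m + 1) ∈ P.arena (m + 1)) :
    x.1 n ∉ P.attr n := fun hattr ↦ by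
  obtain ⟨m, -, hm⟩ := exists_mem_of_mem_attractor x hattr harena fun m hm hm2 hmattr _ ↦
    hx.succ_of_mem_attr hm2 (by omega) hmattr fun i _ ↦ hmiss i
  exact hmiss m hm

theorem exists_lift_of_hit {Q : T.LevelSet} {y : T.Play} (hm : x.1 m ∈ P.target m)
    (hmin : ∀ i < m, x.1 i ∉ P.target i) (honHit : P.onHit m (x.1 m) = (Q, .accept y m))
    (hQ : IsProposal K Q (x.1 (K + 1)))
    (hvalid : ∀ n, (Answer.accept y m).IsValid K B Q x n)
    (hmove : (K + 1) % 2 = P.player →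
      x.1 (K + 2) = (projMove σ (K + 1) (x.1 (K + 1)) (Q, .pending)).1)
    (hannounce : ∀ n, n % 2 = P.player → n = K ∨ n = K + 1 →
      nextAnnouncement σ n (x.1 n) (truncate K n (Q, .accept y m)) =
        truncate K (n + 1) (Q, .accept y m)) :
    ∃ x', σ.IsConsistent P.player x' ∧ (unravelHom hK B).mapPlay x' = x := by
  have hlegal (n : ℕ) : IsLegalAlong K B n (truncate K n (Q, .accept y m)) x :=
    isLegalAlong_truncate (fun _ ↦ hQ) fun _ ↦ hvalid n
  refine exists_lift_of_announcement _ hlegal (fun n hn ↦ ?_) hannounce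
  rcases le_or_gt m n with hmn | hnm
  · rw [← honHit]
    exact hx.succ_of_hit hn hmn hm hmin
  rcases lt_trichotomy n (K + 1) with hnK | rfl | hnK
  · rw [truncate_of_le (by omega)]
    exact hx.succ_of_le hn (by omega)
  · rw [truncate_succ_self]
    exact hmove hn
  · have h := hlegal n
    rw [truncate_of_ge hnK] at h ⊢
    rw [projMove_accept h.isLegal hnK hnm]
    exact (hvalid (n + 1)).2.2.2 (n + 1) hnm le_rfl

theorem exists_lift_of_miss {Q R : T.LevelSet} (hmiss : ∀ i, x.1 i ∉ P.target i)
    (hattr : ∀ n > K, n % 2 = P.player → x.1 n ∉ P.attr n) (honMiss : P.onMiss = (Q, .refuse R))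
    (hQ : IsProposal K Q (x.1 (K + 1)))
    (hvalid : ∀ n, (Answer.refuse R).IsValid K B Q x n)
    (hannounce : ∀ n, n % 2 = P.player → n = K ∨ n = K + 1 →
      nextAnnouncement σ n (x.1 n) (truncate K n (Q, .refuse R)) =
        truncate K (n + 1) (Q, .refuse R)) :
    ∃ x', σ.IsConsistent P.player x' ∧ (unravelHom hK B).mapPlay x' = x :=
  exists_lift_of_announcement _ (fun n ↦ isLegalAlong_truncate (fun _ ↦ hQ) fun _ ↦ hvalid n)
    (fun n hn ↦ honMiss ▸ hx.succ_of_notMem_attr hn (hattr n · hn) fun i _ ↦ hmiss i)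
    hannounce

end IsFollowed

end Plan

end PushDown

end GameTree

namespace GameTree

section UnravelCovering

variable {T : GameTree.{u}} {K : ℕ} {hK : K % 2 = 0} {B : T.LevelSet}
  (σ : (unravel hK B).Strategy)

/-- The part of a target at levels after the answer. -/
def lateTarget (K : ℕ) (B : T.LevelSet) : T.LevelSet := fun m ↦ {q | K + 2 ≤ m ∧ q ∈ B m}

/-- The proposal made by the strategy `σ` of player `0` at the position `p`. -/
noncomputable def proposal (p : T.Pos K) : T.LevelSet := (nextAnnouncement σ K p (⊤, .pending)).1

/-- Player `0` heads for the target inside his proposal. He pretends that player `1` accepts when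
the target is hit, and that player `1` refuses with the complement of the attractor otherwise. -/
noncomputable def planZero (p : T.Pos K) : T.Plan where
  player := 0
  arena := proposal σ p
  target := lateTarget K B
  onHit m q := (proposal σ p, .accept (through q) m)
  onMiss := (proposal σ p, .refuse (proposal σ p \ attractor (proposal σ p) (lateTarget K B) 0))

/-- The answer given by the strategy `σ` of player `1` at the position `p` to the proposal `Q`. -/
noncomputable def answer (p : T.Pos (K + 1)) (Q : T.LevelSet) : T.Answer :=
  (nextAnnouncement σ (K + 1) p (Q, .pending)).2

/-- The positions whose reachability is claimed by `σ` in accepting some proposal. -/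
def acceptedTarget (p : T.Pos (K + 1)) : T.LevelSet := fun m ↦
  {q | ∃ (Q : T.LevelSet) (y : T.Play), answer σ p Q = .accept y m ∧ y.1 m = q}

/-- A proposal to which `σ` answers with the claim that `q` will be reached. -/
noncomputable def acceptedProposal (p : T.Pos (K + 1)) (m : ℕ) (q : T.Pos m) : T.LevelSet :=
  Classical.epsilon fun Q ↦ ∃ y : T.Play, answer σ p Q = .accept y m ∧ y.1 m = q

/-- The proposal of avoiding the attractor of the positions claimed by `σ`. -/
noncomputable def evasiveProposal (p : T.Pos (K + 1)) : T.LevelSet :=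
  ⊤ \ attractor ⊤ (lateTarget K (acceptedTarget σ p)) 1

/-- Player `1` heads for a position that `σ` would claim to reach. He pretends that player `0` made
a proposal leading to that claim when it is reached, and proposed to evade it otherwise. -/
noncomputable def planOne (p : T.Pos (K + 1)) : T.Plan where
  player := 1
  arena := ⊤
  target := lateTarget K (acceptedTarget σ p)
  onHit m q := (acceptedProposal σ p m q, answer σ p (acceptedProposal σ p m q))
  onMiss := (evasiveProposal σ p, answer σ p (evasiveProposal σ p))

/-- The strategy of player `b` on the original game induced by the strategy `σ`. -/
noncomputable def pushDown (b : ℕ) : T.Strategy := fun n p ↦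
  if b = 0 then (planZero σ ((through p).1 K)).move K n p (projMove σ n p)
  else (planOne σ ((through p).1 (K + 1))).move K n p (projMove σ n p)

variable {σ} {x : T.Play} {n b : ℕ}

theorem pushDown_of_le (hn : n ≤ K) (p : T.Pos n) :
    pushDown σ b n p = projMove σ n p (⊤, .pending) := by
  rw [pushDown, Plan.move_of_le hn, Plan.move_of_le hn, ite_self]

theorem pushDown_congr {σ' : (unravel hK B).Strategy} (h : ∀ m ≤ n, σ m = σ' m) :
    pushDown σ b n = pushDown σ' b n := by
  have hmove : projMove σ n = projMove σ' n := by
    funext p a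
    simp only [projMove, h n le_rfl]
  have hannounce (m : ℕ) (hm : m ≤ n) : nextAnnouncement σ m = nextAnnouncement σ' m := by
    funext p a
    simp only [nextAnnouncement, h m hm]
  funext p
  rcases le_or_gt n K with hn | hn
  · rw [pushDown_of_le hn, pushDown_of_le hn, hmove]
  · have hanswer : answer σ = answer σ' := by
      funext q Q
      simp only [answer, hannounce (K + 1) hn]
    have htarget : acceptedTarget σ = acceptedTarget σ' := by
      funext q m
      simp only [acceptedTarget, hanswer]
    simp only [pushDown, planZero, planOne, evasiveProposal, acceptedProposal, proposal, hmove,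
      hannounce K hn.le, hanswer, htarget]

theorem planZero_isFollowed (hx : (pushDown σ 0).IsConsistent 0 x) :
    (planZero σ (x.1 K)).IsFollowed σ x := fun n hn ↦ by
  rw [hx n hn]
  rcases le_or_gt n K with hnK | hnK
  · rw [pushDown_of_le hnK, Plan.move_of_le hnK]
  · rw [pushDown, if_pos rfl, through_eval_of_le x hnK.le]

theorem planOne_isFollowed (hx : (pushDown σ 1).IsConsistent 1 x) :
    (planOne σ (x.1 (K + 1))).IsFollowed σ x := fun n hn ↦ by
  rw [hx n hn]
  rcases le_or_gt n K with hnK | hnK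
  · rw [pushDown_of_le hnK, Plan.move_of_le hnK]
  · rw [pushDown, if_neg one_ne_zero, through_eval_of_le x hnK]

/-! ### Lifting plays of player `0` -/

section PlayerZero

variable (hx : (planZero σ (x.1 K)).IsFollowed σ x)
include hx

theorem isLegal_proposal :
    IsLegal K B (K + 1) (x.1 (K + 1)) (nextAnnouncement σ K (x.1 K) (⊤, .pending)) := by
  rw [hx.succ_of_le hK le_rfl]
  exact isLegal_nextAnnouncement (isLegal_of_le le_rfl _)

theorem isProposal_proposal : IsProposal K (proposal σ (x.1 K)) (x.1 (K + 1)) :=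
  (isLegal_proposal hx).along.isProposal le_rfl

theorem nextAnnouncement_proposal {o : T.Answer} (hn : n % 2 = 0) (hnK : n = K ∨ n = K + 1) :
    nextAnnouncement σ n (x.1 n) (truncate K n (proposal σ (x.1 K), o)) =
      truncate K (n + 1) (proposal σ (x.1 K), o) := by
  obtain rfl : n = K := by omega
  rw [truncate_of_le le_rfl, ← (isLegal_proposal hx).along.truncate_eq, truncate_succ_self,
    truncate_succ_self, proposal]

omit hx in
theorem isValid_refusal {Q : T.LevelSet}
    (h : ∀ j, K + 2 ≤ j → j ≤ n → x.1 j ∈ (Q \ attractor Q (lateTarget K B) 0) j) :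
    (Answer.refuse (Q \ attractor Q (lateTarget K B) 0)).IsValid K B Q x n :=
  ⟨⟨isQuasiStrategy_sdiff_attractor _ _ _ _, fun _ hm ↦
    disjoint_left.2 fun _ hq hqB ↦ hq.2 (subset_attractor ⟨hm, hqB⟩)⟩, h⟩

theorem mem_proposal_succ (hn : K + 2 ≤ n) (hmiss : ∀ i ≤ n, x.1 i ∉ lateTarget K B i)
    (hmem : x.1 n ∈ proposal σ (x.1 K) n)
    (hrefuse : x.1 n ∉ (planZero σ (x.1 K)).attr n →
      ∀ i, K + 2 ≤ i → i ≤ n → x.1 i ∈ (proposal σ (x.1 K) \ (planZero σ (x.1 K)).attr) i) :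
    x.1 (n + 1) ∈ proposal σ (x.1 K) (n + 1) ∧ (x.1 n ∈ (planZero σ (x.1 K)).attr n →
      x.1 (n + 1) ∈ (planZero σ (x.1 K)).attr (n + 1)) := by
  have hQ := isProposal_proposal hx
  by_cases hn2 : n % 2 = 0
  · by_cases hattr : x.1 n ∈ (planZero σ (x.1 K)).attr n
    · rw [hx.succ_of_mem_attr hn2 (by omega) hattr hmiss]
      have hspec := attractorStrategy_spec hattr (hmiss n le_rfl) hn2
      exact ⟨hspec.1, fun _ ↦ hspec.2.1⟩
    · have hlegal : IsLegal K B n (x.1 n) (planZero σ (x.1 K)).onMiss := by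
        have h := isLegalAlong_truncate (n := n) (a := (planZero σ (x.1 K)).onMiss) (fun _ ↦ hQ)
          fun _ ↦ isValid_refusal (hrefuse hattr)
        rw [truncate_of_ge hn] at h
        exact h.isLegal
      have hnext := isLegal_nextAnnouncement (σ := σ) hlegal
      have hsucc := hx.succ_of_notMem_attr hn2 (fun _ ↦ hattr) hmiss
      rw [truncate_of_ge hn] at hsucc
      rw [nextAnnouncement_of_ne hlegal (by omega) (by omega), ← hsucc] at hnext
      exact ⟨((hnext.along.isValid (by omega)).2 (n + 1) (by omega) le_rfl).1,
        fun h ↦ absurd h hattr⟩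
  · have hsucc : x.1 (n + 1) ∈ proposal σ (x.1 K) (n + 1) :=
      hQ.2.closed n (by omega) (by omega) _ (by rwa [x.2]) trivial
    exact ⟨hsucc, fun hattr ↦
      (mem_attractor_and_rank_lt hattr (hmiss n le_rfl) hn2 (x.2 n) hsucc).1⟩

theorem mem_proposal_of_miss (hn : K + 2 ≤ n) (hmiss : ∀ i < n, x.1 i ∉ lateTarget K B i) :
    x.1 n ∈ proposal σ (x.1 K) n ∧ (x.1 n ∉ (planZero σ (x.1 K)).attr n →
      ∀ i, K + 2 ≤ i → i ≤ n → x.1 i ∈ (proposal σ (x.1 K) \ (planZero σ (x.1 K)).attr) i) := by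
  have hQ := isProposal_proposal hx
  induction n, hn using Nat.le_induction with
  | base =>
    have hmem : x.1 (K + 2) ∈ proposal σ (x.1 K) (K + 2) :=
      hQ.2.closed (K + 1) le_rfl (by omega) _ (by rw [x.2]; exact hQ.1) trivial
    exact ⟨hmem, fun hattr i hi hi' ↦ le_antisymm hi hi' ▸ ⟨hmem, hattr⟩⟩
  | succ n hn ih =>
    obtain ⟨hmem, hrefuse⟩ := ih fun i hi ↦ hmiss i (by omega)
    obtain ⟨hsucc, hattr⟩ :=
      mem_proposal_succ hx hn (fun i hi ↦ hmiss i (by omega)) hmem hrefuse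
    refine ⟨hsucc, fun hnot i hi hi' ↦ ?_⟩
    rcases hi'.eq_or_lt with rfl | hi'
    · exact ⟨hsucc, hnot⟩
    · exact hrefuse (fun h ↦ hnot (hattr h)) i hi (by omega)

theorem exists_lift_zero :
    ∃ x', σ.IsConsistent 0 x' ∧ (unravelHom hK B).mapPlay x' = x := by
  classical
  have hQ := isProposal_proposal hx
  by_cases hhit : ∃ m, x.1 m ∈ lateTarget K B m
  · obtain ⟨m, hm, hmin⟩ : ∃ m, x.1 m ∈ lateTarget K B m ∧ ∀ i < m, x.1 i ∉ lateTarget K B i :=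
      ⟨_, Nat.find_spec hhit, fun _ ↦ Nat.find_min hhit⟩
    have hagree (j : ℕ) (hj : j ≤ m) := through_eval_of_le x hj
    refine hx.exists_lift_of_hit hm hmin rfl hQ (fun n ↦ ⟨hm.1, ?_, fun j hj hjm ↦ ?_, ?_⟩)
      (fun h ↦ ?_) fun n ↦ nextAnnouncement_proposal hx
    · exact (hagree m le_rfl).symm ▸ hm.2
    · rw [hagree j hjm]
      rcases hj.eq_or_lt with rfl | hj
      · exact hQ.1
      · exact (mem_proposal_of_miss hx hj fun i hi ↦ hmin i (by omega)).1
    · exact fun j hj _ ↦ (hagree j hj).symm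
    · change (K + 1) % 2 = 0 at h
      omega
  · push Not at hhit
    have hmem (n : ℕ) (hn : K + 2 ≤ n) := mem_proposal_of_miss hx hn fun i _ ↦ hhit i
    have hnot (n : ℕ) (hn : K + 2 ≤ n) : x.1 n ∉ (planZero σ (x.1 K)).attr n :=
      hx.notMem_attr (by omega) hhit fun m hm _ ↦ (hmem (m + 1) (by omega)).1
    have hvalid (n : ℕ) := isValid_refusal (n := n) fun j hj _ ↦
      (hmem j hj).2 (hnot j hj) j hj le_rfl
    refine hx.exists_lift_of_miss hhit (fun n hn hn2 ↦ hnot n ?_) rfl hQ hvalid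
      fun n ↦ nextAnnouncement_proposal hx
    change n % 2 = 0 at hn2
    omega

end PlayerZero

/-! ### Lifting plays of player `1` -/

section PlayerOne

variable {p : T.Pos (K + 1)} {Q R : T.LevelSet}

theorem isLegal_of_answer_ne_pending (h : answer σ p Q ≠ .pending) :
    IsLegal K B (K + 1) p (Q, .pending) := by
  by_contra hlegal
  rw [answer, nextAnnouncement, dif_neg hlegal] at h
  exact h rfl

theorem isLegal_of_isProposal (hQ : IsProposal K Q p) : IsLegal K B (K + 1) p (Q, .pending) := by
  obtain ⟨z, rfl⟩ := T.exists_play p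
  rw [← truncate_succ_self (K := K) (a := (Q, .pending))]
  exact (isLegalAlong_truncate (fun _ ↦ hQ) (by omega)).isLegal

theorem IsLegal.isProposal (h : IsLegal K B (K + 1) p (Q, .pending)) : IsProposal K Q p := by
  obtain ⟨z, rfl, h⟩ := h
  exact h.isProposal le_rfl

theorem nextAnnouncement_eq_answer (h : IsLegal K B (K + 1) p (Q, .pending)) :
    nextAnnouncement σ (K + 1) p (Q, .pending) = (Q, answer σ p Q) := by
  have htruncate := truncate_nextAnnouncement (σ := σ) h
  rw [truncate_succ_self] at htruncate
  exact Prod.ext (Prod.ext_iff.1 htruncate).1 rfl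

theorem exists_isValid_answer (h : IsLegal K B (K + 1) p (Q, .pending)) :
    ∃ z : T.Play, z.1 (K + 2) = (projMove σ (K + 1) p (Q, .pending)).1 ∧
      (answer σ p Q).IsValid K B Q z (K + 2) := by
  obtain ⟨z, hz, hlegal⟩ := isLegal_nextAnnouncement (σ := σ) h
  rw [nextAnnouncement_eq_answer h] at hlegal
  exact ⟨z, hz, hlegal.isValid le_rfl⟩

theorem nextAnnouncement_answer (h : IsLegal K B (K + 1) (x.1 (K + 1)) (Q, .pending))
    (hn : n % 2 = 1) (hnK : n = K ∨ n = K + 1) :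
    nextAnnouncement σ n (x.1 n) (truncate K n (Q, answer σ (x.1 (K + 1)) Q)) =
      truncate K (n + 1) (Q, answer σ (x.1 (K + 1)) Q) := by
  obtain rfl : n = K + 1 := by omega
  rw [truncate_succ_self, truncate_of_ge le_rfl, nextAnnouncement_eq_answer h]

variable (hx : (planOne σ (x.1 (K + 1))).IsFollowed σ x)
include hx

theorem exists_lift_one_of_hit {m : ℕ} (hm : x.1 m ∈ (planOne σ (x.1 (K + 1))).target m)
    (hmin : ∀ i < m, x.1 i ∉ (planOne σ (x.1 (K + 1))).target i) :
    ∃ x', σ.IsConsistent 1 x' ∧ (unravelHom hK B).mapPlay x' = x := by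
  set Q := acceptedProposal σ (x.1 (K + 1)) m (x.1 m) with hQ
  obtain ⟨y, hy, hyx⟩ : ∃ y : T.Play, answer σ (x.1 (K + 1)) Q = .accept y m ∧ y.1 m = x.1 m :=
    Classical.epsilon_spec hm.2
  have hlegal : IsLegal K B (K + 1) (x.1 (K + 1)) (Q, .pending) :=
    isLegal_of_answer_ne_pending (σ := σ) (by simp [hy])
  obtain ⟨z, hz, hvalid⟩ := exists_isValid_answer (σ := σ) hlegal
  rw [hy] at hvalid
  have hagree (j : ℕ) (hj : j ≤ m) : y.1 j = x.1 j := Thread.eq_of_le y x hyx hj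
  refine hx.exists_lift_of_hit hm hmin ?_ hlegal.isProposal
    (fun n ↦ ⟨hm.1, hvalid.2.1, hvalid.2.2.1, fun j hj _ ↦ (hagree j hj).symm⟩) (fun _ ↦ ?_)
    fun n hn hnK ↦ hy ▸ nextAnnouncement_answer hlegal hn hnK
  · exact Prod.ext hQ.symm hy
  · rw [← hz, hvalid.2.2.2 _ hm.1 le_rfl, hagree _ hm.1]

theorem isValid_of_refuse (hmiss : ∀ i, x.1 i ∉ (planOne σ (x.1 (K + 1))).target i)
    (hnot : ∀ n ≥ K + 1, x.1 n ∉ (planOne σ (x.1 (K + 1))).attr n)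
    (hQ : IsProposal K (evasiveProposal σ (x.1 (K + 1))) (x.1 (K + 1)))
    (hanswer : answer σ (x.1 (K + 1)) (evasiveProposal σ (x.1 (K + 1))) = .refuse R)
    (hvalid : (Answer.refuse R).IsValid K B (evasiveProposal σ (x.1 (K + 1))) x (K + 2)) :
    (Answer.refuse R).IsValid K B (evasiveProposal σ (x.1 (K + 1))) x n := by
  rcases le_total n (K + 2) with hn | hn
  · exact hvalid.mono hn fun _ _ ↦ rfl
  induction n, hn using Nat.le_induction with
  | base => exact hvalid
  | succ n hn' ih =>
    refine ⟨hvalid.1, fun i hi hin ↦ ?_⟩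
    rcases hin.lt_or_eq with hin | rfl
    · exact ih.2 i hi (by omega)
    rcases Nat.mod_two_eq_zero_or_one n with hn2 | hn2
    · exact ih.1.1.closed n hn' hn2 _ (by rw [x.2]; exact ih.2 n hn' le_rfl)
        ⟨trivial, hnot _ (by omega)⟩
    · have hlegal := isLegalAlong_truncate (n := n)
        (a := (evasiveProposal σ (x.1 (K + 1)), .refuse R)) (fun _ ↦ hQ) fun _ ↦ ih
      have hsucc := hx.succ_of_notMem_attr hn2 (fun _ ↦ hnot n (by omega)) fun i _ ↦ hmiss i
      have honMiss : (planOne σ (x.1 (K + 1))).onMiss =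
        (evasiveProposal σ (x.1 (K + 1)), .refuse R) := Prod.ext rfl hanswer
      rw [truncate_of_ge hn'] at hlegal hsucc
      have hnext := isLegal_nextAnnouncement (σ := σ) hlegal.isLegal
      rw [nextAnnouncement_of_ne hlegal.isLegal (by omega) (by omega), ← honMiss, ← hsucc,
        honMiss] at hnext
      exact (hnext.along.isValid (by omega)).2 (n + 1) hi le_rfl

theorem exists_lift_one_of_miss (hmiss : ∀ i, x.1 i ∉ (planOne σ (x.1 (K + 1))).target i) :
    ∃ x', σ.IsConsistent 1 x' ∧ (unravelHom hK B).mapPlay x' = x := by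
  have hnot (n : ℕ) (hn : K + 1 ≤ n) : x.1 n ∉ (planOne σ (x.1 (K + 1))).attr n :=
    hx.notMem_attr (by omega) hmiss fun _ _ _ ↦ trivial
  set Q := evasiveProposal σ (x.1 (K + 1))
  have hQ : IsProposal K Q (x.1 (K + 1)) :=
    ⟨⟨trivial, hnot _ le_rfl⟩, isQuasiStrategy_sdiff_attractor ⊤ _ 1 _⟩
  have hlegal := isLegal_of_isProposal (B := B) hQ
  have hvalid : (answer σ (x.1 (K + 1)) Q).IsValid K B Q x (K + 2) := by
    obtain ⟨z, hz, hvalid⟩ := exists_isValid_answer (σ := σ) hlegal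
    have hmove := hx.succ_of_notMem_attr (n := K + 1) (by change (K + 1) % 2 = 1; omega)
      (fun _ ↦ hnot _ le_rfl) fun i _ ↦ hmiss i
    rw [truncate_succ_self] at hmove
    exact hvalid.mono le_rfl fun j ↦ Thread.eq_of_le z x (hz.trans hmove.symm)
  rcases hanswer : answer σ (x.1 (K + 1)) Q with _ | ⟨y, m⟩ | R <;> rw [hanswer] at hvalid
  · exact hvalid.elim
  · have hy : y.1 m ∈ lateTarget K (acceptedTarget σ (x.1 (K + 1))) m :=
      ⟨hvalid.1, Q, y, hanswer, rfl⟩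
    exact absurd (subset_attractor hy) (hvalid.2.2.1 m (by have := hvalid.1; omega) le_rfl).2
  · exact hx.exists_lift_of_miss hmiss (fun n hn _ ↦ hnot n hn) (Prod.ext rfl hanswer) hQ
      (fun n ↦ isValid_of_refuse hx hmiss hnot hQ hanswer hvalid)
      fun n hn hnK ↦ hanswer ▸ nextAnnouncement_answer hlegal hn hnK

theorem exists_lift_one :
    ∃ x', σ.IsConsistent 1 x' ∧ (unravelHom hK B).mapPlay x' = x := by
  classical
  by_cases hhit : ∃ m, x.1 m ∈ (planOne σ (x.1 (K + 1))).target m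
  · exact exists_lift_one_of_hit hx (Nat.find_spec hhit) fun _ ↦ Nat.find_min hhit
  · exact exists_lift_one_of_miss hx (not_exists.1 hhit)

end PlayerOne

theorem bijective_unravelHom (hn : n ≤ K) : ((unravelHom hK B).toFun n).Bijective :=
  ⟨fun t t' h ↦ Subtype.ext (Prod.ext h ((t.2.eq_of_le hn).trans (t'.2.eq_of_le hn).symm)),
    fun p ↦ ⟨⟨(p, (⊤, .pending)), isLegal_of_le hn p⟩, rfl⟩⟩

/-- The unraveled game is a covering of the original one. -/
noncomputable def unravelCovering (hK : K % 2 = 0) (B : T.LevelSet) :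
    Covering K (unravel hK B) T where
  toHom := unravelHom hK B
  mapStrategy b σ := pushDown σ b
  mapStrategy_congr _ _ _ _ h := pushDown_congr h
  exists_lift b hb σ x hx := by
    interval_cases b
    · exact exists_lift_zero (planZero_isFollowed hx)
    · exact exists_lift_one (planOne_isFollowed hx)
  bijective_toFun _ hn := bijective_unravelHom hn
  mapStrategy_toFun b σ n hn t := by
    obtain ⟨⟨p, a⟩, ht⟩ := t
    obtain rfl := ht.eq_of_le hn.le
    exact (congrArg Subtype.val (pushDown_of_le hn.le p)).trans (projMove_of_isLegal ht)

end UnravelCovering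

end GameTree

namespace GameTree

/-! ### Borel determinacy -/

section Topology

variable {T T' : GameTree.{u}}

/-- Plays carry the topology generated by the sets of plays through a given position. -/
instance : TopologicalSpace T.Play where
  IsOpen X := ∀ x ∈ X, ∃ n, ∀ y : T.Play, y.1 n = x.1 n → y ∈ X
  isOpen_univ _ _ := ⟨0, fun _ _ ↦ trivial⟩
  isOpen_inter X Y hX hY x hx := by
    obtain ⟨n, hn⟩ := hX x hx.1
    obtain ⟨m, hm⟩ := hY x hx.2
    exact ⟨max n m, fun y hy ↦ ⟨hn y (Thread.eq_of_le y x hy (le_max_left n m)),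
      hm y (Thread.eq_of_le y x hy (le_max_right n m))⟩⟩
  isOpen_sUnion S hS x := by
    rintro ⟨X, hXS, hx⟩
    obtain ⟨n, hn⟩ := hS X hXS x hx
    exact ⟨n, fun y hy ↦ ⟨X, hXS, hn y hy⟩⟩

theorem isOpen_play_iff {X : Set T.Play} :
    IsOpen X ↔ ∀ x ∈ X, ∃ n, ∀ y : T.Play, y.1 n = x.1 n → y ∈ X := Iff.rfl

theorem isClopen_of_eval {X : Set T.Play} (n : ℕ) (s : Set (T.Pos n))
    (h : ∀ x : T.Play, x ∈ X ↔ x.1 n ∈ s) : IsClopen X := by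
  constructor
  · refine isOpen_compl_iff.1 (isOpen_play_iff.2 fun x hx ↦ ⟨n, fun y hy ↦ ?_⟩)
    rwa [mem_compl_iff, h, hy, ← h]
  · refine isOpen_play_iff.2 fun x hx ↦ ⟨n, fun y hy ↦ ?_⟩
    rwa [h, hy, ← h]

theorem Hom.continuous_mapPlay (f : Hom T' T) : Continuous f.mapPlay where
  isOpen_preimage X hX x hx := by
    obtain ⟨n, hn⟩ := hX (f.mapPlay x) hx
    exact ⟨n, fun y hy ↦ hn _ (congrArg (f.toFun n) hy)⟩

/-- The positions at which it is decided that the play lies in `X`. -/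
def deciding (X : Set T.Play) : T.LevelSet := fun n ↦ {p | ∀ x : T.Play, x.1 n = p → x ∈ X}

end Topology

section Determinacy

variable {T : GameTree.{u}}

/-- One of the two players has a winning strategy in the game on `T` starting at `r` in which
player `0` wants to play into `X`. -/
def IsDetermined (r : T.Pos 0) (X : Set T.Play) : Prop :=
  (∃ s : T.Strategy, ∀ x : T.Play, x.1 0 = r → s.IsConsistent 0 x → x ∈ X) ∨
    ∃ s : T.Strategy, ∀ x : T.Play, x.1 0 = r → s.IsConsistent 1 x → x ∉ X

theorem exists_strategy_notMem_attractor (B : T.LevelSet) :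
    ∃ s : T.Strategy, ∀ x : T.Play, x.1 0 ∉ attractor ⊤ B 0 0 → s.IsConsistent 1 x →
      ∀ n, x.1 n ∉ attractor ⊤ B 0 n := by
  have hmove (n : ℕ) (p : T.Pos n) :
      ∃ q : T.Child p, p ∉ attractor ⊤ B 0 n → n % 2 = 1 → q.1 ∉ attractor ⊤ B 0 (n + 1) := by
    by_cases h : p ∉ attractor ⊤ B 0 n ∧ n % 2 = 1
    · obtain ⟨q, hq, -, hnot⟩ := exists_child_notMem_attractor h.1 (by omega)
      exact ⟨⟨q, hq⟩, fun _ _ ↦ hnot⟩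
    · exact ⟨Classical.arbitrary T.Strategy n p, fun h₁ h₂ ↦ absurd ⟨h₁, h₂⟩ h⟩
  choose s hs using hmove
  refine ⟨s, fun x hx hcons n ↦ ?_⟩
  induction n with
  | zero => exact hx
  | succ n ih =>
    rcases Nat.mod_two_eq_zero_or_one n with hn | hn
    · exact notMem_attractor_of_child ih hn (x.2 n) trivial
    · rw [hcons n hn]
      exact hs n _ ih hn

theorem isDetermined_of_isClopen {X : Set T.Play} (hX : IsClopen X) (r : T.Pos 0) :
    IsDetermined r X := by
  by_cases hr : r ∈ attractor ⊤ (deciding X) 0 0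
  · refine Or.inl ⟨attractorStrategy ⊤ (deciding X) 0, fun x hx hcons ↦ ?_⟩
    obtain ⟨n, -, hn⟩ := exists_mem_of_mem_attractor (Q := ⊤) x (hx ▸ hr)
      (fun _ _ _ ↦ trivial) fun m _ hm _ _ ↦ hcons m hm
    exact hn x rfl
  · obtain ⟨s, hs⟩ := exists_strategy_notMem_attractor (deciding X)
    refine Or.inr ⟨s, fun x hx hcons hxX ↦ ?_⟩
    obtain ⟨n, hn⟩ := hX.isOpen x hxX
    exact hs x (hx ▸ hr) hcons n (subset_attractor hn)

theorem Covering.isDetermined {T' : GameTree.{u}} (c : Covering 0 T' T) {X : Set T.Play}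
    (r' : T'.Pos 0) (h : IsDetermined r' (c.mapPlay ⁻¹' X)) : IsDetermined (c.toFun 0 r') X := by
  have hlift (b : ℕ) (hb : b < 2) (s : T'.Strategy) (x : T.Play) (hx : x.1 0 = c.toFun 0 r')
      (hcons : (c.mapStrategy b s).IsConsistent b x) :
      ∃ x' : T'.Play, x'.1 0 = r' ∧ s.IsConsistent b x' ∧ c.mapPlay x' = x := by
    obtain ⟨x', hcons', rfl⟩ := c.exists_lift b hb s x hcons
    exact ⟨x', (c.bijective_toFun 0 le_rfl).1 hx, hcons', rfl⟩
  refine h.imp (fun ⟨s, hs⟩ ↦ ⟨c.mapStrategy 0 s, fun x hx hcons ↦ ?_⟩)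
    fun ⟨s, hs⟩ ↦ ⟨c.mapStrategy 1 s, fun x hx hcons ↦ ?_⟩
  · obtain ⟨x', hx', hcons', rfl⟩ := hlift 0 two_pos s x hx hcons
    exact hs x' hx' hcons'
  · obtain ⟨x', hx', hcons', rfl⟩ := hlift 1 one_lt_two s x hx hcons
    exact hs x' hx' hcons'

/-- A set of plays is unravelable if its preimages under maps of game trees become clopen in
suitable `k`-coverings, for every `k`. -/
def IsUnravelable (X : Set T.Play) : Prop :=
  ∀ (T' : GameTree.{u}) (f : Hom T' T) (k : ℕ), ∃ (T'' : GameTree.{u}) (c : Covering k T'' T'),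
    IsClopen (c.mapPlay ⁻¹' (f.mapPlay ⁻¹' X))

theorem isLegalAlong_unravel {K : ℕ} {hK : K % 2 = 0} {B : T.LevelSet} (x : (unravel hK B).Play)
    (n : ℕ) : IsLegalAlong K B n (x.1 n).1.2 ((unravelHom hK B).mapPlay x) :=
  (x.1 n).2.along

theorem announcement_unravel {K : ℕ} {hK : K % 2 = 0} {B : T.LevelSet} (x : (unravel hK B).Play)
    {n : ℕ} (hn : K + 2 ≤ n) : (x.1 n).1.2 = (x.1 (K + 2)).1.2 := by
  induction n, hn using Nat.le_induction with
  | base => rfl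
  | succ n hn ih =>
    rw [← ih, ← congrArg (fun t ↦ t.1.2) (x.2 n)]
    exact (truncate_of_ge hn).symm

theorem mem_of_accept {X : Set T.Play} {K : ℕ} {hK : K % 2 = 0}
    {x : (unravel hK (deciding X)).Play} {y : T.Play} {m : ℕ}
    (h : (x.1 (K + 2)).1.2.2 = .accept y m) : (unravelHom hK _).mapPlay x ∈ X := by
  have hvalid := (isLegalAlong_unravel x (K + 2 + m)).isValid (by omega)
  rw [announcement_unravel x (by omega), h] at hvalid
  exact hvalid.2.1 _ (hvalid.2.2.2 m le_rfl (by omega))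

theorem notMem_of_refuse {X : Set T.Play} (hX : IsOpen X) {K : ℕ} {hK : K % 2 = 0}
    {x : (unravel hK (deciding X)).Play} {R : T.LevelSet}
    (h : (x.1 (K + 2)).1.2.2 = .refuse R) : (unravelHom hK _).mapPlay x ∉ X := fun hx ↦ by
  obtain ⟨n, hn⟩ := isOpen_play_iff.1 hX _ hx
  have hvalid := (isLegalAlong_unravel x (K + 2 + n)).isValid (by omega)
  rw [announcement_unravel x (by omega), h] at hvalid
  refine disjoint_left.1 (hvalid.1.2 (K + 2 + n) (by omega)) (hvalid.2 _ (by omega) le_rfl) ?_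
  exact fun z hz ↦ hn z (Thread.eq_of_le z _ hz (by omega))

theorem isClopen_preimage_unravelHom {X : Set T.Play} (hX : IsOpen X) {K : ℕ} (hK : K % 2 = 0) :
    IsClopen ((unravelHom hK (deciding X)).mapPlay ⁻¹' X) := by
  refine isClopen_of_eval (K + 2) {t | ∃ y m, t.1.2.2 = .accept y m} fun x ↦ ⟨fun hx ↦ ?_, ?_⟩
  · rcases ho : (x.1 (K + 2)).1.2.2 with _ | ⟨y, m⟩ | R
    · have hvalid := (isLegalAlong_unravel x (K + 2)).isValid le_rfl
      rw [ho] at hvalid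
      exact hvalid.elim
    · exact ⟨y, m, ho⟩
    · exact absurd hx (notMem_of_refuse hX ho)
  · rintro ⟨y, m, hym⟩
    exact mem_of_accept hym

theorem exists_covering_isClopen {X : Set T.Play} (hX : IsOpen X) (k : ℕ) :
    ∃ (T' : GameTree.{u}) (c : Covering k T' T), IsClopen (c.mapPlay ⁻¹' X) :=
  have hK : 2 * k % 2 = 0 := by omega
  ⟨_, Covering.ofLE (by omega) (unravelCovering hK (deciding X)),
    isClopen_preimage_unravelHom hX hK⟩

theorem isUnravelable_of_isOpen {X : Set T.Play} (hX : IsOpen X) : IsUnravelable X :=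
  fun _ f k ↦ exists_covering_isClopen (hX.preimage f.continuous_mapPlay) k

theorem IsUnravelable.compl {X : Set T.Play} (hX : IsUnravelable X) : IsUnravelable Xᶜ :=
  fun T' f k ↦ (hX T' f k).imp fun _ ⟨c, hc⟩ ↦ ⟨c, hc.compl⟩

theorem IsUnravelable.iUnion {X : ℕ → Set T.Play} (hX : ∀ i, IsUnravelable (X i)) :
    IsUnravelable (⋃ i, X i) := by
  intro T' f k
  choose next c hc using fun (i : ℕ) (A : Σ A : GameTree.{u}, Hom A T) ↦ hX i A.1 A.2 (k + i)
  let A (i : ℕ) : Σ A : GameTree.{u}, Hom A T :=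
    Nat.rec ⟨T', f⟩ (fun i A ↦ ⟨next i A, A.2.comp (c i A).toHom⟩) i
  let S (i : ℕ) : GameTree.{u} := (A i).1
  let C (i : ℕ) : Covering (k + i) (S (i + 1)) (S i) := c i (A i)
  have hproj (i : ℕ) (x : (limit C).Play) : (A i).2.mapPlay ((limitProj (T := S) C i).mapPlay x) =
      (A 0).2.mapPlay ((limitProj (T := S) C 0).mapPlay x) := by
    induction i with
    | zero => rfl
    | succ i ih =>
      rw [← ih]
      exact Subtype.ext (funext fun n ↦ congrArg ((A i).2.toFun n) ((x.1 n).2 i))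
  have hclopen (i : ℕ) : IsClopen ((limitProj C 0).mapPlay ⁻¹' ((A 0).2.mapPlay ⁻¹' X i)) := by
    convert (hc i (A i)).preimage (limitProj C (i + 1)).continuous_mapPlay using 1
    ext x
    rw [mem_preimage, mem_preimage, ← hproj (i + 1) x]
    rfl
  have hopen : IsOpen ((limitProj C 0).mapPlay ⁻¹' ((A 0).2.mapPlay ⁻¹' ⋃ i, X i)) := by
    rw [preimage_iUnion, preimage_iUnion]
    exact isOpen_iUnion fun i ↦ (hclopen i).isOpen
  obtain ⟨T'', d, hd⟩ := exists_covering_isClopen hopen k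
  exact ⟨T'', (limitCovering C).comp d, hd⟩

theorem IsUnravelable.isDetermined {X : Set T.Play} (hX : IsUnravelable X) (r : T.Pos 0) :
    IsDetermined r X := by
  obtain ⟨T', c, hc⟩ := hX T (Hom.id T) 0
  obtain ⟨r', rfl⟩ := (c.bijective_toFun 0 le_rfl).2 r
  exact c.isDetermined r' (isDetermined_of_isClopen hc r')

open scoped MeasureTheory in
theorem borel_determinacy {X : Set T.Play} (hX : MeasurableSet[borel T.Play] X) (r : T.Pos 0) :
    IsDetermined r X := by
  suffices h : IsUnravelable X from h.isDetermined r
  induction X, hX using MeasurableSpace.generateFrom_induction with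
  | hC X hX _ => exact isUnravelable_of_isOpen hX
  | empty => exact isUnravelable_of_isOpen isOpen_empty
  | compl X _ ih => exact ih.compl
  | iUnion X _ ih => exact IsUnravelable.iUnion ih

end Determinacy

end GameTree

/-! ### Wadge games on sequence spaces -/

section Sequences

namespace GameTree

variable {A : Type u} [Nonempty A]

variable (A) in
/-- The full tree of finite sequences, on which the players alternately choose elements of `A`. -/
def sequenceTree : GameTree.{u} where
  Pos n := Fin n → A
  parent _ := Fin.init
  parent_surjective _ p := ⟨Fin.snoc p (Classical.arbitrary A), Fin.init_snoc _ _⟩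

/-- The infinite sequence of moves made in a play of `sequenceTree`. -/
def moves (x : (sequenceTree A).Play) (n : ℕ) : A :=
  (show Fin (n + 1) → A from x.1 (n + 1)) (Fin.last n)

theorem continuous_moves [TopologicalSpace A] [DiscreteTopology A] :
    Continuous (moves : (sequenceTree A).Play → ℕ → A) := by
  refine continuous_pi fun n ↦ continuous_discrete_rng.2 fun a ↦ ?_
  exact (isClopen_of_eval (T := sequenceTree A) (n + 1)
    ((fun p : Fin (n + 1) → A ↦ p (Fin.last n)) ⁻¹' {a}) fun _ ↦ Iff.rfl).isOpen

/-- Player `b` follows `s` while the opponent plays the consecutive terms of `z`. -/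
noncomputable def Strategy.against (s : (sequenceTree A).Strategy) (b : ℕ) (z : ℕ → A) :
    (sequenceTree A).Strategy :=
  fun n p ↦ if n % 2 = b then s n p else
    ⟨(Fin.snoc p (z (n / 2)) : Fin (n + 1) → A), Fin.init_snoc (α := fun _ ↦ A) _ _⟩

/-- The play in which player `b` follows `s` and the opponent plays `z`. -/
noncomputable def Strategy.playAgainst (s : (sequenceTree A).Strategy) (b : ℕ) (z : ℕ → A) :
    (sequenceTree A).Play :=
  (s.against b z).play (Fin.elim0 : Fin 0 → A)

namespace Strategy

variable (s : (sequenceTree A).Strategy) (b : ℕ) {z z' : ℕ → A}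

theorem isConsistent_playAgainst : s.IsConsistent b (s.playAgainst b z) := fun n hn ↦ by
  change (s.against b z n ((s.playAgainst b z).1 n)).1 = _
  rw [against, if_pos hn]

variable {b} in
theorem moves_playAgainst {n : ℕ} (hn : n % 2 ≠ b) : moves (s.playAgainst b z) n = z (n / 2) := by
  change (s.against b z n ((s.playAgainst b z).1 n)).1 (Fin.last n) = _
  rw [against, if_neg hn]
  exact Fin.snoc_last (α := fun _ ↦ A) _ _

theorem playAgainst_congr {n : ℕ} (h : ∀ m < n, m % 2 ≠ b → z (m / 2) = z' (m / 2)) :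
    (s.playAgainst b z).1 n = (s.playAgainst b z').1 n := by
  induction n with
  | zero => rfl
  | succ n ih =>
    change (s.against b z n ((s.playAgainst b z).1 n)).1 =
      (s.against b z' n ((s.playAgainst b z').1 n)).1
    rw [ih fun m hm ↦ h m (by omega)]
    by_cases hb : n % 2 = b
    · rw [against, against, if_pos hb, if_pos hb]
    · rw [against, against, if_neg hb, if_neg hb]
      exact congrArg (fun a ↦ (Fin.snoc _ a : Fin (n + 1) → A)) (h n n.lt_succ_self hb)

end Strategy

end GameTree

/-- The `n`-th term of `f x` depends only on the terms of `x` up to the `n`-th; that is, `f` is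
`1`-Lipschitz for the standard metric on a sequence space. -/
def IsCausal {A B : Type*} (f : (ℕ → A) → ℕ → B) : Prop :=
  ∀ n x y, (∀ i ≤ n, x i = y i) → f x n = f y n

/-- The `n`-th term of `f x` depends only on the terms of `x` before the `n`-th; that is, `f` is a
contraction for the standard metric on a sequence space. -/
def IsStrictlyCausal {A B : Type*} (f : (ℕ → A) → ℕ → B) : Prop :=
  ∀ n x y, (∀ i < n, x i = y i) → f x n = f y n

theorem IsStrictlyCausal.isCausal {A B : Type*} {f : (ℕ → A) → ℕ → B} (hf : IsStrictlyCausal f) :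
    IsCausal f := fun n x y h ↦ hf n x y fun i hi ↦ h i hi.le

theorem IsCausal.continuous {A B : Type*} [TopologicalSpace A] [DiscreteTopology A]
    [TopologicalSpace B] {f : (ℕ → A) → ℕ → B} (hf : IsCausal f) : Continuous f := by
  refine continuous_pi fun n ↦ IsLocallyConstant.continuous
    ((IsLocallyConstant.iff_exists_open _).2 fun x ↦ ⟨(Iic n).pi fun i ↦ {x i},
      isOpen_set_pi (finite_Iic n) fun _ _ ↦ isOpen_discrete _, fun _ _ ↦ rfl, fun y hy ↦ ?_⟩)
  exact hf n y x hy

open GameTree in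
open scoped MeasureTheory in
/-- Player `0` builds a point `x` with the even moves, player `1` builds `y` with the odd ones, and
player `0` wins if exactly one of `x ∈ A`, `y ∈ B` holds; a winning strategy is a reduction. -/
theorem exists_isCausal_or_exists_isStrictlyCausal {α : Type u} [Nonempty α] [TopologicalSpace α]
    [DiscreteTopology α] {A B : Set (ℕ → α)} (hA : MeasurableSet[borel (ℕ → α)] A)
    (hB : MeasurableSet[borel (ℕ → α)] B) :
    (∃ f : (ℕ → α) → ℕ → α, IsCausal f ∧ ∀ x, x ∈ A ↔ f x ∈ B) ∨
      ∃ g : (ℕ → α) → ℕ → α, IsStrictlyCausal g ∧ ∀ x, x ∈ B ↔ g x ∉ A := by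
  borelize (sequenceTree α).Play
  borelize (ℕ → α)
  let evens (x : (sequenceTree α).Play) (n : ℕ) : α := moves x (2 * n)
  let odds (x : (sequenceTree α).Play) (n : ℕ) : α := moves x (2 * n + 1)
  have hevens : Continuous evens :=
    continuous_pi fun n ↦ (continuous_apply (2 * n)).comp continuous_moves
  have hodds : Continuous odds :=
    continuous_pi fun n ↦ (continuous_apply (2 * n + 1)).comp continuous_moves
  have hwin : MeasurableSet (symmDiff (evens ⁻¹' A) (odds ⁻¹' B)) :=
    (hevens.measurable hA).symmDiff (hodds.measurable hB)
  rcases borel_determinacy hwin (Fin.elim0 : Fin 0 → α) with ⟨s, hs⟩ | ⟨s, hs⟩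
  · refine .inr ⟨fun z ↦ evens (s.playAgainst 0 z), fun n x y h ↦ ?_, fun z ↦ ?_⟩
    · exact congrFun (s.playAgainst_congr 0 fun m hm hm' ↦ h _ (by omega)) (Fin.last (2 * n))
    · have hz : odds (s.playAgainst 0 z) = z := funext fun n ↦
        (s.moves_playAgainst (by omega)).trans (congrArg z (by omega))
      have := hs _ rfl (s.isConsistent_playAgainst 0 (z := z))
      rw [mem_symmDiff, mem_preimage, mem_preimage, hz] at this
      tauto
  · refine .inl ⟨fun z ↦ odds (s.playAgainst 1 z), fun n x y h ↦ ?_, fun z ↦ ?_⟩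
    · exact congrFun (s.playAgainst_congr 1 fun m hm _ ↦ h _ (by omega)) (Fin.last (2 * n + 1))
    · have hz : evens (s.playAgainst 1 z) = z := funext fun n ↦
        (s.moves_playAgainst (by omega)).trans (congrArg z (by omega))
      have := hs _ rfl (s.isConsistent_playAgainst 1 (z := z))
      rw [mem_symmDiff, mem_preimage, mem_preimage, hz] at this
      tauto

end Sequences

/-! ### Fσ sets and clopen bases -/

theorem isFsigma_iff_isGδ_compl {A : Set Cantor} : IsFsigma A ↔ IsGδ Aᶜ := by
  rw [isGδ_iff_eq_iInter_nat]
  constructor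
  · rintro ⟨F, hF, rfl⟩
    exact ⟨fun n ↦ (F n)ᶜ, fun n ↦ (hF n).isOpen_compl, compl_iUnion F⟩
  · rintro ⟨U, hU, hA⟩
    exact ⟨fun n ↦ (U n)ᶜ, fun n ↦ (hU n).isClosed_compl, by rw [← compl_iInter, ← hA, compl_compl]⟩

namespace IsFsigma

variable {A B : Set Cantor}

theorem of_isClosed (hA : IsClosed A) : IsFsigma A :=
  isFsigma_iff_isGδ_compl.2 hA.isOpen_compl.isGδ

theorem of_isOpen (hA : IsOpen A) : IsFsigma A :=
  isFsigma_iff_isGδ_compl.2 hA.isClosed_compl.isGδ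

theorem iUnion {ι : Type*} [Countable ι] {A : ι → Set Cantor} (hA : ∀ i, IsFsigma (A i)) :
    IsFsigma (⋃ i, A i) := by
  rw [isFsigma_iff_isGδ_compl, compl_iUnion]
  exact .iInter fun i ↦ isFsigma_iff_isGδ_compl.1 (hA i)

theorem union (hA : IsFsigma A) (hB : IsFsigma B) : IsFsigma (A ∪ B) := by
  rw [isFsigma_iff_isGδ_compl, compl_union]
  exact (isFsigma_iff_isGδ_compl.1 hA).inter (isFsigma_iff_isGδ_compl.1 hB)

theorem preimage {f : Cantor → Cantor} (hA : IsFsigma A) (hf : Continuous f) :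
    IsFsigma (f ⁻¹' A) :=
  isFsigma_iff_isGδ_compl.2 ((isFsigma_iff_isGδ_compl.1 hA).preimage hf)

theorem measurableSet (hA : IsFsigma A) : MeasurableSet A :=
  .of_compl (isFsigma_iff_isGδ_compl.1 hA).measurableSet

end IsFsigma

section Cylinder

open TopologicalSpace

theorem exists_seq_isTopologicalBasis {X : Type*} [Nonempty X] [TopologicalSpace X]
    [SecondCountableTopology X] {b : Set (Set X)} (hb : IsTopologicalBasis b) :
    ∃ B : ℕ → Set X, (∀ n, B n ∈ b) ∧ IsTopologicalBasis (range B) := by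
  obtain ⟨s, hsb, hs, hbasis⟩ := hb.exists_countable
  obtain ⟨U, hU, -⟩ := hbasis.exists_nonempty_subset univ_nonempty isOpen_univ
  obtain ⟨B, rfl⟩ := hs.exists_eq_range ⟨U, hU⟩
  exact ⟨B, fun n ↦ hsb (mem_range_self n), hbasis⟩

variable {α : Type*} [TopologicalSpace α] [DiscreteTopology α]

theorem isClopen_cylinder (x : ℕ → α) (n : ℕ) : IsClopen (PiNat.cylinder x n) := by
  refine ⟨?_, PiNat.isOpen_cylinder _ x n⟩
  rw [PiNat.cylinder_eq_pi]
  exact isClosed_set_pi fun _ _ ↦ isClosed_discrete _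

theorem exists_cylinder_subset_of_isOpen {U : Set (ℕ → α)} (hU : IsOpen U) {x : ℕ → α}
    (hx : x ∈ U) : ∃ n, PiNat.cylinder x n ⊆ U := by
  obtain ⟨_, ⟨y, n, rfl⟩, hxy, hyU⟩ :=
    (PiNat.isTopologicalBasis_cylinders fun _ ↦ α).exists_subset_of_mem_open hx hU
  exact ⟨n, (PiNat.mem_cylinder_iff_eq.1 hxy).trans_subset hyU⟩

end Cylinder

/-! ### Finer Polish topologies on the Cantor space -/

/-- A refinement of the topology of the Cantor space to a zero-dimensional Polish topology all of
whose open sets are `Fσ` for the original one. It is given by a bijection `encode` onto a closed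
subset of the Baire space, together with a left inverse `decode` that is defined on the whole Baire
space and makes `encode ∘ decode` a retraction. -/
structure Presentation where
  encode : Cantor → ℕ → ℕ
  decode : (ℕ → ℕ) → Cantor
  decode_encode : ∀ x, decode (encode x) = x
  continuous_decode : Continuous decode
  continuous_encode_decode : Continuous fun c ↦ encode (decode c)
  isFsigma_preimage_encode : ∀ U, IsOpen U → IsFsigma (encode ⁻¹' U)

namespace Presentation

/-- The Cantor space with the topology defined by the presentation `t`. -/
def Space (_ : Presentation) : Type := Cantor

variable (t t' t'' : Presentation)

instance : TopologicalSpace t.Space := .induced t.encode inferInstance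

instance : Nonempty t.Space := inferInstanceAs (Nonempty Cantor)

/-- Openness in the topology defined by `t`. -/
protected abbrev IsOpen (W : Set Cantor) : Prop := _root_.IsOpen (X := t.Space) W

/-- Clopenness in the topology defined by `t`. -/
protected abbrev IsClopen (W : Set Cantor) : Prop := _root_.IsClopen (X := t.Space) W

/-- Continuity with respect to the topologies defined by `t` and `t'`. -/
abbrev IsContinuous (f : Cantor → Cantor) : Prop := Continuous (X := t.Space) (Y := t'.Space) f

theorem isInducing_encode : Topology.IsInducing (X := t.Space) t.encode := ⟨rfl⟩

theorem continuous_encode : Continuous (X := t.Space) t.encode := t.isInducing_encode.continuous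

theorem continuous_decode_space : Continuous (Y := t.Space) t.decode :=
  t.isInducing_encode.continuous_iff.2 t.continuous_encode_decode

instance : SecondCountableTopology t.Space := t.isInducing_encode.secondCountableTopology

variable {t t' t''} {W : Set Cantor}

theorem continuous_id_cantor : Continuous (X := t.Space) (Y := Cantor) id := by
  have := t.continuous_decode.comp t.continuous_encode
  exact this.congr t.decode_encode

theorem isOpen_of_isOpen (hW : _root_.IsOpen W) : t.IsOpen W := hW.preimage continuous_id_cantor

theorem isClopen_of_isClopen (hW : _root_.IsClopen W) : t.IsClopen W :=
  hW.preimage continuous_id_cantor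

theorem IsOpen.isFsigma (hW : t.IsOpen W) : IsFsigma W := by
  obtain ⟨U, hU, rfl⟩ := t.isInducing_encode.isOpen_iff.1 hW
  exact t.isFsigma_preimage_encode U hU

variable (t)

/-- The basic clopen neighbourhoods of `x` for the topology defined by `t`. -/
protected def cylinder (x : Cantor) (n : ℕ) : Set Cantor :=
  t.encode ⁻¹' PiNat.cylinder (t.encode x) n

theorem isClopen_cylinder (x : Cantor) (n : ℕ) : t.IsClopen (t.cylinder x n) :=
  (_root_.isClopen_cylinder (t.encode x) n).preimage t.continuous_encode

theorem self_mem_cylinder (x : Cantor) (n : ℕ) : x ∈ t.cylinder x n :=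
  PiNat.self_mem_cylinder (t.encode x) n

theorem cylinder_anti (x : Cantor) {m n : ℕ} (h : m ≤ n) : t.cylinder x n ⊆ t.cylinder x m :=
  preimage_mono (PiNat.cylinder_anti (t.encode x) h)

variable {t} in
theorem IsOpen.exists_cylinder_subset (hW : t.IsOpen W) {x : Cantor} (hx : x ∈ W) :
    ∃ n, t.cylinder x n ⊆ W := by
  obtain ⟨U, hU, rfl⟩ := t.isInducing_encode.isOpen_iff.1 hW
  obtain ⟨n, hn⟩ := exists_cylinder_subset_of_isOpen hU hx
  exact ⟨n, preimage_mono hn⟩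

theorem exists_seq_isClopen_basis : ∃ B : ℕ → Set Cantor, (∀ n, t.IsClopen (B n)) ∧
    TopologicalSpace.IsTopologicalBasis (α := t.Space) (range B) := by
  refine exists_seq_isTopologicalBasis (X := t.Space) (b := {W | IsClopen W})
    (TopologicalSpace.isTopologicalBasis_of_isOpen_of_nhds (fun W hW ↦ hW.isOpen) ?_)
  intro x W hx hW
  obtain ⟨n, hn⟩ := IsOpen.exists_cylinder_subset hW hx
  exact ⟨_, t.isClopen_cylinder x n, t.self_mem_cylinder x n, hn⟩

variable {t}

theorem exists_retraction (hW : IsClosed (X := t.Space) W) (hne : W.Nonempty) :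
    ∃ r, t.IsContinuous t r ∧ (∀ v, r v ∈ W) ∧ ∀ v ∈ W, r v = v := by
  obtain ⟨x, hx⟩ := hne
  have hmem {v : Cantor} (hv : v ∈ W) : t.encode v ∈ t.decode ⁻¹' W := by
    rwa [mem_preimage, t.decode_encode]
  obtain ⟨r, hr, hrange, hcont⟩ := PiNat.exists_retraction_of_isClosed
    (hW.preimage t.continuous_decode_space) ⟨t.encode x, hmem hx⟩
  refine ⟨fun v ↦ t.decode (r (t.encode v)),
    t.continuous_decode_space.comp (hcont.comp t.continuous_encode), fun v ↦ ?_, fun v hv ↦ ?_⟩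
  · exact hrange.subset (mem_range_self (t.encode v))
  · exact (congrArg t.decode (hr _ (hmem hv))).trans (t.decode_encode v)

end Presentation

namespace Presentation

theorem isFsigma_preimage_of_isClosed_fiber {φ : ℕ → Cantor → ℕ}
    (hφ : ∀ n m, IsClosed {x | φ n x = m}) {U : Set (ℕ → ℕ)} (hU : IsOpen U) :
    IsFsigma ((fun x n ↦ φ n x) ⁻¹' U) := by
  obtain ⟨B, hB, hbasis⟩ := exists_seq_isTopologicalBasis
    (PiNat.isTopologicalBasis_cylinders fun _ ↦ ℕ)
  have hU_eq : U = ⋃ k : {k // B k ⊆ U}, B k := by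
    refine Subset.antisymm (fun d hd ↦ ?_) (iUnion_subset fun k ↦ k.2)
    obtain ⟨_, ⟨k, rfl⟩, hdk, hkU⟩ := hbasis.exists_subset_of_mem_open hd hU
    exact mem_iUnion.2 ⟨⟨k, hkU⟩, hdk⟩
  rw [hU_eq, preimage_iUnion]
  refine .iUnion fun k ↦ .of_isClosed ?_
  obtain ⟨y, n, hy⟩ := hB k
  rw [hy, PiNat.cylinder_eq_pi, pi_def, preimage_iInter₂]
  exact isClosed_biInter fun i _ ↦ hφ i (y i)

theorem isClosed_range_of_isClosed_fiber {φ : ℕ → Cantor → ℕ}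
    (hφ : ∀ n m, IsClosed {x | φ n x = m}) {decode : (ℕ → ℕ) → Cantor}
    (hdecode : Continuous decode) (hleft : ∀ x, decode (fun n ↦ φ n x) = x) :
    IsClosed (range fun x n ↦ φ n x) := by
  have hgraph (n : ℕ) : IsClosed {q : Cantor × ℕ | φ n q.1 = q.2} := by
    have : {q : Cantor × ℕ | φ n q.1 = q.2}ᶜ = ⋃ m, {x | φ n x = m}ᶜ ×ˢ {m} := by
      ext ⟨x, m⟩
      simp
    rw [← isOpen_compl_iff, this]
    exact isOpen_iUnion fun m ↦ (hφ n m).isOpen_compl.prod (isOpen_discrete _)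
  have hrange : range (fun x n ↦ φ n x) = ⋂ n, {d | φ n (decode d) = d n} := by
    ext d
    rw [mem_iInter]
    exact ⟨by rintro ⟨x, rfl⟩ n; exact congrArg (φ n) (hleft x), fun h ↦ ⟨decode d, funext h⟩⟩
  rw [hrange]
  exact isClosed_iInter fun n ↦ (hgraph n).preimage (hdecode.prodMk (continuous_apply n))

theorem exists_of_isClosed_fiber (φ : ℕ → Cantor → ℕ) (hφ : ∀ n m, IsClosed {x | φ n x = m})
    {decode : (ℕ → ℕ) → Cantor} (hdecode : Continuous decode)
    (hleft : ∀ x, decode (fun n ↦ φ n x) = x) :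
    ∃ t : Presentation, ∀ x n, t.encode x n = φ n x := by
  let encode (x : Cantor) (n : ℕ) : ℕ := φ n x
  obtain ⟨r, hr, hr_range, hr_cont⟩ := PiNat.exists_retraction_of_isClosed
    (isClosed_range_of_isClosed_fiber hφ hdecode hleft) (range_nonempty encode)
  have hencode (d : ℕ → ℕ) : encode (decode (r d)) = r d := by
    obtain ⟨x, hx⟩ := hr_range.subset (mem_range_self d)
    rw [← hx, hleft x]
  refine ⟨⟨encode, decode ∘ r, fun x ↦ ?_, hdecode.comp hr_cont, ?_,
    fun U hU ↦ isFsigma_preimage_of_isClosed_fiber hφ hU⟩, fun _ _ ↦ rfl⟩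
  · rw [Function.comp_apply, hr _ (mem_range_self x), hleft]
  · exact hr_cont.congr fun d ↦ (hencode d).symm

/-- The topology of the Cantor space itself. -/
def standard : Presentation where
  encode x n := (x n).toNat
  decode d n := decide (d n ≠ 0)
  decode_encode x := funext fun n ↦ by cases h : x n <;> simp [h]
  continuous_decode := continuous_pi fun n ↦
    (continuous_of_discreteTopology (f := fun m : ℕ ↦ decide (m ≠ 0))).comp (continuous_apply n)
  continuous_encode_decode := continuous_pi fun n ↦
    (continuous_of_discreteTopology (f := fun m : ℕ ↦ (decide (m ≠ 0)).toNat)).comp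
      (continuous_apply n)
  isFsigma_preimage_encode U hU := .of_isOpen <| hU.preimage <| continuous_pi fun n ↦
    (continuous_of_discreteTopology (f := Bool.toNat)).comp (continuous_apply n)

end Presentation

open PiNat Classical in
theorem exists_nat_valued_of_isClosed {C : Set Cantor} (hC : IsClosed C) :
    ∃ φ : Cantor → ℕ, (∀ m, IsClosed {x | φ x = m}) ∧ C = φ ⁻¹' {0} := by
  rcases C.eq_empty_or_nonempty with rfl | hne
  · exact ⟨fun _ ↦ 1, fun m ↦ isClosed_const, by simp⟩
  have hzero : C = (fun x ↦ shortestPrefixDiff x C) ⁻¹' {0} := by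
    ext x
    refine ⟨fun hx ↦ dif_neg ?_, fun hx ↦ ?_⟩
    · rintro ⟨n, hn⟩
      exact disjoint_left.1 hn hx (self_mem_cylinder x n)
    · by_contra hxC
      exact (shortestPrefixDiff_pos hC hne hxC).ne' hx
  refine ⟨fun x ↦ shortestPrefixDiff x C, fun m ↦ ?_, hzero⟩
  rcases m.eq_zero_or_pos with rfl | hm
  · rwa [hzero] at hC
  have hstable {x y : Cantor} (hxy : y ∈ cylinder x m) (hx : shortestPrefixDiff x C = m) :
      shortestPrefixDiff y C = m := by
    have hcyl {k : ℕ} (hk : k ≤ m) : cylinder y k = cylinder x k :=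
      mem_cylinder_iff_eq.1 (cylinder_anti x hk hxy)
    rw [shortestPrefixDiff] at hx
    split_ifs at hx with h
    · rw [Nat.find_eq_iff] at hx
      have hy : ∃ n, Disjoint C (cylinder y n) := ⟨m, (hcyl le_rfl).symm ▸ hx.1⟩
      rw [shortestPrefixDiff, dif_pos hy, Nat.find_eq_iff]
      exact ⟨(hcyl le_rfl).symm ▸ hx.1, fun k hk ↦ (hcyl hk.le).symm ▸ hx.2 k hk⟩
    · exact absurd hx hm.ne
  refine isOpen_compl_iff.1 (isOpen_iff_forall_mem_open.2 fun x hx ↦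
    ⟨cylinder x m, fun y hy hym ↦ hx (hstable ?_ hym), isOpen_cylinder _ x m,
      self_mem_cylinder x m⟩)
  exact (mem_cylinder_comm x y m).1 hy

namespace Presentation

theorem exists_isOpen_of_isClosed {C : ℕ → Set Cantor} (hC : ∀ n, IsClosed (C n)) :
    ∃ t : Presentation, ∀ n, t.IsOpen (C n) := by
  choose φ hφ hCφ using fun n ↦ exists_nat_valued_of_isClosed (hC n)
  let interleaved (n : ℕ) (x : Cantor) : ℕ := if n % 2 = 0 then (x (n / 2)).toNat else φ (n / 2) x
  have hclosed (n m : ℕ) : IsClosed {x | interleaved n x = m} := by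
    rcases Nat.mod_two_eq_zero_or_one n with h | h
    · have : Continuous (interleaved n) := by
        simp only [interleaved, h, if_true]
        exact (continuous_of_discreteTopology (f := Bool.toNat)).comp (continuous_apply _)
      exact (isClosed_discrete {m}).preimage this
    · simpa [interleaved, h] using hφ (n / 2) m
  obtain ⟨t, ht⟩ := exists_of_isClosed_fiber interleaved hclosed
    (decode := fun d n ↦ decide (d (2 * n) ≠ 0))
    (continuous_pi fun n ↦ (continuous_of_discreteTopology (f := fun m : ℕ ↦ decide (m ≠ 0))).comp
      (continuous_apply (2 * n)))
    (fun x ↦ funext fun n ↦ by cases h : x n <;> simp [interleaved, h])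
  refine ⟨t, fun n ↦ ?_⟩
  have : C n = t.encode ⁻¹' ((fun d ↦ d (2 * n + 1)) ⁻¹' {0}) := by
    ext x
    rw [hCφ, mem_preimage, mem_preimage, mem_preimage, ht]
    simp [interleaved, show (2 * n + 1) % 2 = 1 by omega, show (2 * n + 1) / 2 = n by omega]
  rw [this]
  exact ((isOpen_discrete _).preimage (continuous_apply _)).preimage t.continuous_encode

theorem exists_isOpen_of_isFsigma {ι : Type*} [Countable ι] {V : ι → Set Cantor}
    (hV : ∀ i, IsFsigma (V i)) : ∃ t : Presentation, ∀ i, t.IsOpen (V i) := by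
  choose F hF hVF using hV
  rcases isEmpty_or_nonempty ι with _ | _
  · exact ⟨standard, isEmptyElim⟩
  obtain ⟨g, hg⟩ := exists_surjective_nat (ι × ℕ)
  obtain ⟨t, ht⟩ := exists_isOpen_of_isClosed fun n ↦ hF (g n).1 (g n).2
  refine ⟨t, fun i ↦ ?_⟩
  rw [hVF]
  refine isOpen_iUnion fun n ↦ ?_
  obtain ⟨m, hm⟩ := hg (i, n)
  simpa only [hm] using ht m

theorem exists_refinement (t₀ : Presentation) {ι κ : Type*} [Countable ι] [Countable κ]
    {V : ι → Set Cantor} (hV : ∀ i, IsFsigma (V i)) {f : κ → Cantor → Cantor}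
    (hf : ∀ k W, t₀.IsOpen W → IsFsigma (f k ⁻¹' W)) :
    ∃ t : Presentation, t.IsContinuous t₀ id ∧ (∀ i, t.IsOpen (V i)) ∧
      ∀ k, t.IsContinuous t₀ (f k) := by
  obtain ⟨B, hB, hbasis⟩ := t₀.exists_seq_isClopen_basis
  obtain ⟨t, ht⟩ := exists_isOpen_of_isFsigma
    (V := Sum.elim B (Sum.elim V fun q : κ × ℕ ↦ f q.1 ⁻¹' B q.2)) (by
      rintro (n | i | q)
      exacts [IsOpen.isFsigma (hB n).isOpen, hV i, hf q.1 _ (hB q.2).isOpen])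
  have hcont {g : Cantor → Cantor} (hg : ∀ n, t.IsOpen (g ⁻¹' B n)) : t.IsContinuous t₀ g :=
    (TopologicalSpace.IsTopologicalBasis.continuous_iff hbasis).2 (forall_mem_range.2 hg)
  exact ⟨t, hcont fun n ↦ ht (.inl n), fun i ↦ ht (.inr (.inl i)),
    fun k ↦ hcont fun n ↦ ht (.inr (.inr (k, n)))⟩

end Presentation

/-! ### Relative Wadge reductions -/

namespace Presentation

open Classical in
/-- The map fixing the points of `V` and sending all other points to `v₀`. -/
noncomputable def retractTo (V : Set Cantor) (v₀ v : Cantor) : Cantor := if v ∈ V then v else v₀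

variable {V W A B C Z : Set Cantor} {v₀ w₀ v : Cantor} {t t' t'' : Presentation}

theorem retractTo_mem (hv₀ : v₀ ∈ V) (v : Cantor) : retractTo V v₀ v ∈ V := by
  unfold retractTo
  split_ifs with h
  exacts [h, hv₀]

theorem retractTo_of_mem (hv : v ∈ V) : retractTo V v₀ v = v := if_pos hv

open Classical in
theorem continuous_retractTo (hV : t.IsClopen V) (v₀ : Cantor) :
    t.IsContinuous t (retractTo V v₀) := by
  refine Continuous.piecewise (α := t.Space) (s := V) (f := id) (g := fun _ ↦ v₀) (fun v hv ↦ ?_)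
    continuous_id continuous_const
  rw [IsClopen.frontier_eq hV] at hv
  exact hv.elim

/-- The set `A ∩ V`, with `V` given the topology of `t`, is continuously reducible to `B ∩ W`, with
`W` given the topology of `t'`. -/
def Reduces (t : Presentation) (V A : Set Cantor) (t' : Presentation) (W B : Set Cantor) : Prop :=
  ∃ f, t.IsContinuous t' f ∧ (∀ v, f v ∈ W) ∧ ∀ v ∈ V, (v ∈ A ↔ f v ∈ B)

namespace Reduces

theorem trans (h : Reduces t V A t' W B) (h' : Reduces t' W B t'' Z C) :
    Reduces t V A t'' Z C := by
  obtain ⟨f, hf, hfW, hfA⟩ := h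
  obtain ⟨g, hg, hgZ, hgB⟩ := h'
  exact ⟨g ∘ f, hg.comp hf, fun v ↦ hgZ (f v), fun v hv ↦ (hfA v hv).trans (hgB _ (hfW v))⟩

theorem compl (h : Reduces t V A t' W B) : Reduces t V Aᶜ t' W Bᶜ := by
  obtain ⟨f, hf, hfW, hfA⟩ := h
  exact ⟨f, hf, hfW, fun v hv ↦ not_congr (hfA v hv)⟩

theorem compl_left (h : Reduces t V A t' W Bᶜ) : Reduces t V Aᶜ t' W B :=
  compl_compl B ▸ h.compl

theorem of_subset (ht : t.IsContinuous t' id) (hV : t.IsClopen V) (hVW : V ⊆ W)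
    (hW : W.Nonempty) : Reduces t V A t' W A := by
  obtain ⟨w, hw⟩ := hW
  refine ⟨retractTo V w, ht.comp (continuous_retractTo hV w), fun v ↦ ?_,
    fun v hv ↦ by rw [retractTo_of_mem hv]⟩
  unfold retractTo
  split_ifs with h
  exacts [hVW h, hw]

end Reduces

/-- The codes, with respect to `t`, for the points of the retract `V` that lie in `A`. -/
def codes (t : Presentation) (V : Set Cantor) (v₀ : Cantor) (A : Set Cantor) : Set (ℕ → ℕ) :=
  {d | retractTo V v₀ (t.decode d) ∈ A}

theorem measurableSet_codes (hV : t.IsClopen V) (hA : MeasurableSet A) :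
    MeasurableSet (t.codes V v₀ A) :=
  (continuous_id_cantor.comp
    ((continuous_retractTo hV v₀).comp t.continuous_decode_space)).measurable hA

theorem encode_mem_codes (hv : v ∈ V) : t.encode v ∈ t.codes V v₀ A ↔ v ∈ A := by
  rw [codes, mem_ofPred_eq, t.decode_encode, retractTo_of_mem hv]

theorem Reduces.of_codes (hW : t'.IsClopen W) (hw₀ : w₀ ∈ W) {f : (ℕ → ℕ) → ℕ → ℕ}
    (hf : Continuous f) (h : ∀ d, d ∈ t.codes V v₀ A ↔ f d ∈ t'.codes W w₀ B) :
    Reduces t V A t' W B := by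
  refine ⟨fun v ↦ retractTo W w₀ (t'.decode (f (t.encode v))), ?_, fun v ↦ retractTo_mem hw₀ _,
    fun v hv ↦ (encode_mem_codes hv).symm.trans (h _)⟩
  exact (continuous_retractTo hW w₀).comp
    (t'.continuous_decode_space.comp (hf.comp t.continuous_encode))

/-- Wadge's lemma for presented spaces, keeping the Lipschitz information in the second case. -/
theorem reduces_or_exists_isStrictlyCausal (hV : t.IsClopen V) (hW : t'.IsClopen W)
    (hw₀ : w₀ ∈ W) (hA : MeasurableSet A) (hB : MeasurableSet B) (v₀ : Cantor) :
    Reduces t V A t' W B ∨ ∃ g, IsStrictlyCausal g ∧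
      ∀ d, d ∈ t'.codes W w₀ B ↔ g d ∉ t.codes V v₀ A := by
  have hA' := measurableSet_codes (v₀ := v₀) hV hA
  have hB' := measurableSet_codes (v₀ := w₀) hW hB
  rw [BorelSpace.measurable_eq (α := ℕ → ℕ)] at hA' hB'
  exact (exists_isCausal_or_exists_isStrictlyCausal hA' hB').imp_left
    fun ⟨_, hf, hfA⟩ ↦ .of_codes hW hw₀ hf.continuous hfA

theorem reduces_or_reduces_compl (hV : t.IsClopen V) (hVne : V.Nonempty) (hW : t'.IsClopen W)
    (hWne : W.Nonempty) (hA : MeasurableSet A) (hB : MeasurableSet B) :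
    Reduces t V A t' W B ∨ Reduces t' W B t V Aᶜ := by
  obtain ⟨v₀, hv₀⟩ := hVne
  obtain ⟨w₀, hw₀⟩ := hWne
  exact (reduces_or_exists_isStrictlyCausal hV hW hw₀ hA hB v₀).imp_right
    fun ⟨_, hg, hgB⟩ ↦ .of_codes hV hv₀ hg.isCausal.continuous hgB

end Presentation

/-! ### The Martin–Monk argument -/

open Filter Topology

/-- The sequence `z` with its `n`-th term changed. -/
def flipAt (n : ℕ) (z : Cantor) : Cantor := Function.update z n (!z n)

theorem flipAt_self (n : ℕ) (z : Cantor) : flipAt n z n = !z n := Function.update_self ..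

theorem flipAt_of_ne {n i : ℕ} (h : i ≠ n) (z : Cantor) : flipAt n z i = z i :=
  Function.update_of_ne h ..

theorem flipAt_flipAt (n : ℕ) (z : Cantor) : flipAt n (flipAt n z) = z := by
  simp [flipAt]

/-- `flipAt n` as a homeomorphism. -/
def flipAtHomeomorph (n : ℕ) : Cantor ≃ₜ Cantor :=
  have hcont : Continuous (flipAt n) := continuous_id.update n
    ((continuous_of_discreteTopology (f := Bool.not)).comp (continuous_apply n))
  ⟨⟨flipAt n, flipAt n, flipAt_flipAt n, flipAt_flipAt n⟩, hcont, hcont⟩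

/-- A flip set cannot have the Baire property: it is neither meagre nor comeagre on any cylinder. -/
theorem not_measurableSet_of_flipAt_mem_iff {E : Set Cantor} (h : ∀ n z, flipAt n z ∈ E ↔ z ∉ E) :
    ¬ MeasurableSet E := by
  intro hE
  obtain ⟨U, hU, hEU⟩ := hE.residualEq_isOpen
  have hmem : ∀ᶠ z in residual Cantor, z ∈ E ↔ z ∈ U := hEU.mono fun _ ↦ Eq.to_iff
  have hflip (n : ℕ) : ∀ᶠ z in residual Cantor, flipAt n z ∈ E ↔ flipAt n z ∈ U := by
    rw [← (flipAtHomeomorph n).residual_map_eq] at hmem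
    exact hmem
  rcases U.eq_empty_or_nonempty with rfl | ⟨d, hd⟩
  · obtain ⟨z, hz, hz'⟩ := (dense_of_mem_residual (hmem.and (hflip 0))).nonempty
    exact hz'.1 ((h 0 z).2 fun hzE ↦ hz.1 hzE)
  · obtain ⟨n, hn⟩ := exists_cylinder_subset_of_isOpen hU hd
    obtain ⟨z, hzd, hz, hz'⟩ := (dense_of_mem_residual (hmem.and (hflip n))).inter_open_nonempty
      _ (PiNat.isOpen_cylinder _ d n) ⟨d, PiNat.self_mem_cylinder d n⟩
    refine (h n z).1 (hz'.2 (hn fun i hi ↦ ?_)) (hz.2 (hn hzd))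
    rw [flipAt_of_ne hi.ne, hzd i hi]

/-- The composition `p n (z n) ∘ p (n + 1) (z (n + 1)) ∘ ⋯` of `m` maps. -/
def compAlong {X : Type*} (p : ℕ → Bool → X → X) (z : Cantor) : ℕ → ℕ → X → X
  | _, 0 => id
  | n, m + 1 => p n (z n) ∘ compAlong p z (n + 1) m

section CompAlong

variable {X : Type*} (p : ℕ → Bool → X → X)

theorem compAlong_add (z : Cantor) (n m k : ℕ) :
    compAlong p z n (m + k) = compAlong p z n m ∘ compAlong p z (n + m) k := by
  induction m generalizing n with
  | zero => simp [compAlong]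
  | succ m ih =>
    rw [Nat.add_right_comm, compAlong, ih, compAlong, Function.comp_assoc, Nat.add_right_comm,
      Nat.add_assoc]

theorem compAlong_congr {z z' : Cantor} {n m : ℕ} (h : ∀ i, n ≤ i → i < n + m → z i = z' i) :
    compAlong p z n m = compAlong p z' n m := by
  induction m generalizing n with
  | zero => rfl
  | succ m ih =>
    rw [compAlong, compAlong, h n le_rfl (by omega),
      ih fun i hi hi' ↦ h i (by omega) (by omega)]

end CompAlong

section Contracting

variable {α : Type*} {p : ℕ → Bool → (ℕ → α) → ℕ → α}

/-- Each term of `p n (z n) (p (n + 1) (z (n + 1)) (⋯ y))` is independent of `y` as soon as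
sufficiently many maps have been composed, so that these compositions converge. -/
def IsContracting (p : ℕ → Bool → (ℕ → α) → ℕ → α) : Prop :=
  ∀ z n i, ∃ m, ∀ y y', compAlong p z n m y i = compAlong p z n m y' i

/-- `Y n z` is the limit of the compositions `p n (z n) ∘ p (n + 1) (z (n + 1)) ∘ ⋯`, uniformly in
the point to which they are applied. -/
def IsLimitAlong (p : ℕ → Bool → (ℕ → α) → ℕ → α) (Y : ℕ → Cantor → ℕ → α) : Prop :=
  ∀ z n i, ∀ᶠ m in atTop, ∀ y, compAlong p z n m y i = Y n z i

theorem IsContracting.exists_isLimitAlong [Nonempty α] (hp : IsContracting p) :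
    ∃ Y, IsLimitAlong p Y := by
  choose M hM using hp
  let y₀ : ℕ → α := fun _ ↦ Classical.arbitrary α
  refine ⟨fun n z i ↦ compAlong p z n (M z n i) y₀ i, fun z n i ↦ ?_⟩
  filter_upwards [eventually_ge_atTop (M z n i)] with m hm y
  rw [← Nat.add_sub_cancel' hm, compAlong_add]
  exact hM z n i _ _

namespace IsLimitAlong

variable {Y : ℕ → Cantor → ℕ → α}

theorem congr [Nonempty α] (hY : IsLimitAlong p Y) {z z' : Cantor} {n : ℕ}
    (h : ∀ i ≥ n, z i = z' i) : Y n z = Y n z' := by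
  funext i
  obtain ⟨m, hm, hm'⟩ := ((hY z n i).and (hY z' n i)).exists
  let y₀ : ℕ → α := fun _ ↦ Classical.arbitrary α
  rw [← hm y₀, ← hm' y₀, compAlong_congr p fun i hi _ ↦ h i hi]

variable [TopologicalSpace α]

theorem tendsto (hY : IsLimitAlong p Y) (z : Cantor) (n : ℕ) (y : ℕ → α) :
    Tendsto (fun m ↦ compAlong p z n m y) atTop (𝓝 (Y n z)) :=
  tendsto_pi_nhds.2 fun i ↦ tendsto_const_nhds.congr' ((hY z n i).mono fun _ hm ↦ (hm y).symm)

theorem eq_apply [Nonempty α] [T2Space α] (hY : IsLimitAlong p Y)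
    (hp : ∀ n c, Continuous (p n c)) (n : ℕ) (z : Cantor) : Y n z = p n (z n) (Y (n + 1) z) := by
  let y₀ : ℕ → α := fun _ ↦ Classical.arbitrary α
  exact tendsto_nhds_unique ((hY.tendsto z n y₀).comp (tendsto_add_atTop_nat 1))
    (((hp n (z n)).tendsto _).comp (hY.tendsto z (n + 1) y₀))

theorem continuous [Nonempty α] (hY : IsLimitAlong p Y) (n : ℕ) : Continuous (Y n) := by
  refine continuous_pi fun i ↦ continuous_iff_continuousAt.2 fun z ↦ ?_
  obtain ⟨m, hm⟩ := (hY z n i).exists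
  have hlocal : ∀ᶠ z' in 𝓝 z, Y n z i = Y n z' i := by
    filter_upwards [(PiNat.isOpen_cylinder _ z (n + m)).mem_nhds (PiNat.self_mem_cylinder _ _)]
      with z' hz'
    obtain ⟨k, hk, hmk⟩ := ((hY z' n i).and (eventually_ge_atTop m)).exists
    let y₀ : ℕ → α := fun _ ↦ Classical.arbitrary α
    rw [← hk y₀, ← Nat.add_sub_cancel' hmk, compAlong_add,
      compAlong_congr p fun j _ hj ↦ hz' j hj]
    exact (hm _).symm
  exact continuousAt_const.congr hlocal

end IsLimitAlong

/-- The limits of the compositions along `z` pull back `A 0` to a flip set. -/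
theorem IsContracting.not_measurableSet [Nonempty α] [TopologicalSpace α] [T2Space α]
    [MeasurableSpace (ℕ → α)] [BorelSpace (ℕ → α)] (hp : IsContracting p)
    (hcont : ∀ n c, Continuous (p n c)) {A : ℕ → Set (ℕ → α)}
    (hA : ∀ n c y, p n c y ∈ A n ↔ (c = true ↔ y ∉ A (n + 1))) : ¬ MeasurableSet (A 0) := by
  obtain ⟨Y, hY⟩ := hp.exists_isLimitAlong
  have hstep (n : ℕ) (z : Cantor) : Y n z ∈ A n ↔ (z n = true ↔ Y (n + 1) z ∉ A (n + 1)) := by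
    rw [hY.eq_apply hcont, hA]
  have hflip {n k : ℕ} (hk : k ≤ n) (z : Cantor) : Y k (flipAt n z) ∈ A k ↔ Y k z ∉ A k := by
    induction hk using Nat.decreasingInduction with
    | self =>
      rw [hstep n (flipAt n z), hstep n z, flipAt_self,
        hY.congr (z := flipAt n z) fun i hi ↦ flipAt_of_ne (by omega) z]
      cases z n <;> simp
    | of_succ k hk ih =>
      rw [hstep k (flipAt n z), hstep k z, ih, flipAt_of_ne hk.ne]
      tauto
  exact fun hA₀ ↦ not_measurableSet_of_flipAt_mem_iff (fun n z ↦ hflip n.zero_le z)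
    (hA₀.preimage (hY.continuous 0).measurable)

theorem exists_forall_mem_cylinder [TopologicalSpace α] [DiscreteTopology α]
    {F : Set ((ℕ → α) → ℕ → α)} (hF : F.Finite) (hcont : ∀ g ∈ F, Continuous g) (y : ℕ → α)
    (j : ℕ) : ∃ k, ∀ g ∈ F, ∀ d ∈ PiNat.cylinder y k, g d ∈ PiNat.cylinder (g y) j := by
  have hopen : IsOpen (⋂ g ∈ F, g ⁻¹' PiNat.cylinder (g y) j) :=
    hF.isOpen_biInter fun g hg ↦ (PiNat.isOpen_cylinder _ _ _).preimage (hcont g hg)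
  obtain ⟨k, hk⟩ := exists_cylinder_subset_of_isOpen hopen (x := y)
    (mem_iInter₂.2 fun g _ ↦ PiNat.self_mem_cylinder (g y) j)
  exact ⟨k, fun g hg d hd ↦ mem_iInter₂.1 (hk hd) g hg⟩

theorem exists_isContracting_subsequence [TopologicalSpace α] [DiscreteTopology α]
    (hp : ∀ k c, Continuous (p k c)) {y : ℕ → α} (hpy : ∀ k c d, p k c d ∈ PiNat.cylinder y k) :
    ∃ K : ℕ → ℕ, IsContracting fun j ↦ p (K j) := by
  choose! modulus hmodulus using fun (j : ℕ) (F : Set ((ℕ → α) → ℕ → α)) (hF : F.Finite)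
    (hcont : ∀ g ∈ F, Continuous g) ↦ exists_forall_mem_cylinder hF hcont y j
  -- `F j` contains all compositions of maps chosen with an index below `j`.
  let F (j : ℕ) : Set ((ℕ → α) → ℕ → α) := Nat.rec {id} (fun j F ↦
    insert id (image2 (fun g c ↦ g ∘ p (modulus j F) c) F univ)) j
  have hF (j : ℕ) : (F j).Finite ∧ ∀ g ∈ F j, Continuous g := by
    induction j with
    | zero => exact ⟨finite_singleton id, by rintro _ rfl; exact continuous_id⟩
    | succ j ih =>
      refine ⟨(ih.1.image2 _ finite_univ).insert id, ?_⟩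
      rintro _ (rfl | ⟨g, hg, c, -, rfl⟩)
      exacts [continuous_id, (ih.2 g hg).comp (hp _ c)]
  have hid (j : ℕ) : id ∈ F j := by cases j with
    | zero => exact rfl
    | succ j => exact mem_insert id _
  refine ⟨fun j ↦ modulus j (F j), fun z n i ↦ ?_⟩
  set q := fun j ↦ p (modulus j (F j))
  have hcomp (m : ℕ) : compAlong q z n m ∈ F (n + m) := by
    induction m with
    | zero => exact hid n
    | succ m ih =>
      rw [compAlong_add]
      exact mem_insert_of_mem _ ⟨_, ih, z (n + m), mem_univ _, rfl⟩
  have hlast (d : ℕ → α) :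
      compAlong q z n (i + 2) d i = compAlong q z n (i + 1) y i := by
    rw [compAlong_add q z n (i + 1) 1]
    have hF' := hF (n + (i + 1))
    exact hmodulus _ _ hF'.1 hF'.2 _ (hcomp (i + 1)) _ (hpy _ _ d) i
      (show i < n + (i + 1) by omega)
  exact ⟨i + 2, fun d d' ↦ (hlast d).trans (hlast d').symm⟩

theorem isContracting_of_isStrictlyCausal (hp : ∀ n c, IsStrictlyCausal (p n c)) :
    IsContracting p := by
  have hcomp (z : Cantor) (m n : ℕ) (y y' : ℕ → α) :
      ∀ i < m, compAlong p z n m y i = compAlong p z n m y' i := by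
    induction m generalizing n with
    | zero => exact fun i hi ↦ absurd hi i.not_lt_zero
    | succ m ih =>
      intro i hi
      exact hp n _ i _ _ fun j hj ↦ ih (n + 1) j (hj.trans_le (Nat.lt_succ_iff.1 hi))
  exact fun z n i ↦ ⟨i + 1, fun y y' ↦ hcomp z (i + 1) n y y' i i.lt_succ_self⟩

end Contracting

namespace Presentation

variable {t : Presentation} {V W X : Set Cantor}

theorem exists_minimal {ι : Type*} [Nonempty ι] {t : ι → Presentation} {V : ι → Set Cantor}
    (hV : ∀ i, (t i).IsClopen (V i)) (hne : ∀ i, (V i).Nonempty) (hX : MeasurableSet X) :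
    ∃ i, ∀ j, Reduces (t i) (V i) X (t j) (V j) X ∨ Reduces (t i) (V i) X (t j) (V j) Xᶜ := by
  by_contra! hcon
  choose next hnext hnext' using hcon
  choose v hv using hne
  let κ (n : ℕ) : ι := next^[n] (Classical.arbitrary ι)
  have hκ (n : ℕ) : κ (n + 1) = next (κ n) := Function.iterate_succ_apply' ..
  have hgame (n : ℕ) {B : Set Cantor} (hB : MeasurableSet B)
      (h : ¬ Reduces (t (κ n)) (V (κ n)) X (t (κ (n + 1))) (V (κ (n + 1))) B) :=
    (reduces_or_exists_isStrictlyCausal (hV (κ n)) (hV (κ (n + 1))) (hv (κ (n + 1))) hX hB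
      (v (κ n))).resolve_left h
  choose g hg hgX using fun n ↦ hgame n hX (hκ n ▸ hnext (κ n))
  choose g' hg' hgX' using fun n ↦ hgame n hX.compl (hκ n ▸ hnext' (κ n))
  let p (n : ℕ) (c : Bool) : (ℕ → ℕ) → ℕ → ℕ := bif c then g n else g' n
  have hp (n : ℕ) (c : Bool) : IsStrictlyCausal (p n c) := by
    cases c
    exacts [hg' n, hg n]
  refine (isContracting_of_isStrictlyCausal hp).not_measurableSet
    (fun n c ↦ (hp n c).isCausal.continuous)
    (A := fun n ↦ (t (κ n)).codes (V (κ n)) (v (κ n)) X) (fun n c y ↦ ?_)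
    (measurableSet_codes (hV (κ 0)) hX)
  have hyX : y ∈ (t (κ (n + 1))).codes (V (κ (n + 1))) (v (κ (n + 1))) Xᶜ ↔
    y ∉ (t (κ (n + 1))).codes (V (κ (n + 1))) (v (κ (n + 1))) X := Iff.rfl
  cases c
  · have := hgX' n y
    simp only [p, cond_false, Bool.false_eq_true]
    tauto
  · have := hgX n y
    simp only [p, cond_true]
    tauto

/-- No self-dual set is self-dual near each of its points. -/
theorem exists_isClopen_not_reduces (hX : MeasurableSet X) (hW : t.IsClopen W) {y : Cantor}
    (hy : y ∈ W) (hself : Reduces t W Xᶜ t W X) :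
    ∃ W', t.IsClopen W' ∧ y ∈ W' ∧ W' ⊆ W ∧
      ¬ Reduces t W X t W' X ∧ ¬ Reduces t W X t W' Xᶜ := by
  by_contra! hcon
  have hself' : Reduces t W X t W Xᶜ := by
    simpa using hself.compl
  have hboth (k : ℕ) (c : Bool) :
      Reduces t W X t (W ∩ t.cylinder y k) (bif c then Xᶜ else X) := by
    have := hcon _ (hW.inter (t.isClopen_cylinder y k)) ⟨hy, t.self_mem_cylinder y k⟩
      inter_subset_left
    by_cases hred : Reduces t W X t (W ∩ t.cylinder y k) X
    · cases c
      exacts [hred, hself'.trans hred.compl]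
    · cases c
      exacts [hself'.trans (this hred).compl_left, this hred]
  choose f hf hfW hfX using hboth
  let p (k : ℕ) (c : Bool) (d : ℕ → ℕ) : ℕ → ℕ := t.encode (f k c (retractTo W y (t.decode d)))
  have hp (k : ℕ) (c : Bool) : Continuous (p k c) := t.continuous_encode.comp
    ((hf k c).comp ((continuous_retractTo hW y).comp t.continuous_decode_space))
  obtain ⟨K, hK⟩ := exists_isContracting_subsequence hp fun k c d ↦ (hfW k c _).2
  refine hK.not_measurableSet (fun n c ↦ hp (K n) c) (A := fun _ ↦ t.codes W y X)
    (fun n c d ↦ ?_) (measurableSet_codes hW hX)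
  have hd := hfX (K n) c _ (retractTo_mem hy (t.decode d))
  have hmem : d ∈ t.codes W y X ↔ retractTo W y (t.decode d) ∈ X := Iff.rfl
  rw [encode_mem_codes (hfW (K n) c _).1, hmem, hd]
  cases c <;> simp

end Presentation

/-! ### Generic points and minimal pairs -/

namespace Presentation

variable {t t₀ : Presentation} {s U W X Y : Set Cantor} {x : Cantor}

/-- A point whose neighbourhoods for the finer topology of `t` are neighbourhoods for the topology
of the Cantor space. -/
def IsGeneric (t : Presentation) (x : Cantor) : Prop := ∀ W, t.IsOpen W → x ∈ W → W ∈ 𝓝 x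

theorem isGeneric_of_forall_notMem_frontier {B : ℕ → Set Cantor} {F : ℕ → ℕ → Set Cantor}
    (hB : TopologicalSpace.IsTopologicalBasis (α := t.Space) (range B))
    (hBF : ∀ n, B n = ⋃ k, F n k) (hx : ∀ n k, x ∉ frontier (F n k)) : t.IsGeneric x := by
  intro W hW hxW
  obtain ⟨_, ⟨n, rfl⟩, hxB, hBW⟩ := hB.exists_subset_of_mem_open hxW hW
  refine mem_of_superset ?_ hBW
  rw [hBF n] at hxB ⊢
  obtain ⟨k, hk⟩ := mem_iUnion.1 hxB
  have hint : x ∈ interior (F n k) := by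
    by_contra h
    exact hx n k ⟨subset_closure hk, h⟩
  exact mem_of_superset (mem_interior_iff_mem_nhds.1 hint) (subset_iUnion _ k)

theorem exists_isGeneric (hX : Dense X) (hbaire : BaireSpace X) (t : Presentation) (hU : IsOpen U)
    (hne : U.Nonempty) : ∃ x ∈ X, x ∈ U ∧ t.IsGeneric x := by
  obtain ⟨B, hBo, hB⟩ := t.exists_seq_isClopen_basis
  choose F hF hBF using fun n ↦ IsOpen.isFsigma (hBo n).isOpen
  have hopen (q : ℕ × ℕ) : IsOpen (Subtype.val ⁻¹' (frontier (F q.1 q.2))ᶜ : Set X) :=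
    isClosed_frontier.isOpen_compl.preimage continuous_subtype_val
  have hdense (q : ℕ × ℕ) : Dense (Subtype.val ⁻¹' (frontier (F q.1 q.2))ᶜ : Set X) := by
    rw [← hX.isDenseEmbedding_val.toIsDenseInducing.dense_image, Subtype.image_preimage_coe]
    exact hX.inter_of_isOpen_right
      (interior_eq_empty_iff_dense_compl.1 (interior_frontier (hF q.1 q.2)))
      isClosed_frontier.isOpen_compl
  obtain ⟨z, hzU, hzX⟩ := hX.inter_open_nonempty U hU hne
  obtain ⟨x, hxU, hx⟩ := (dense_iInter_of_isOpen hopen hdense).inter_open_nonempty _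
    (hU.preimage continuous_subtype_val) ⟨⟨z, hzX⟩, hzU⟩
  exact ⟨x, x.2, hxU, isGeneric_of_forall_notMem_frontier hB hBF fun n k ↦ mem_iInter.1 hx (n, k)⟩

theorem exists_isClopen_forall_reduces (hX : MeasurableSet X) (t : Presentation) (y : Cantor) :
    ∃ W, t.IsClopen W ∧ y ∈ W ∧ ∀ W', t.IsClopen W' → y ∈ W' → Reduces t W X t W' X := by
  let ι := {W : Set Cantor // t.IsClopen W ∧ y ∈ W}
  have : Nonempty ι := ⟨⟨univ, isClopen_univ, mem_univ y⟩⟩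
  obtain ⟨⟨W, hW, hy⟩, hmin⟩ := exists_minimal (t := fun _ : ι ↦ t) (V := fun W ↦ W.1)
    (fun W ↦ W.2.1) (fun W ↦ ⟨y, W.2.2⟩) hX
  have hself : ¬ Reduces t W Xᶜ t W X := fun hself ↦ by
    obtain ⟨W', hW', hy', -, h, h'⟩ := exists_isClopen_not_reduces hX hW hy hself
    exact (hmin ⟨W', hW', hy'⟩).elim h h'
  have hincl {W₁ W₂ B : Set Cantor} (h₁ : t.IsClopen W₁) (h : W₁ ⊆ W₂) (hy : y ∈ W₂) :
    Reduces t W₁ B t W₂ B := .of_subset continuous_id h₁ h ⟨y, hy⟩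
  refine ⟨W, hW, hy, fun W' hW' hy' ↦ ?_⟩
  have hinter := IsClopen.inter hW hW'
  rcases hmin ⟨W ∩ W', hinter, hy, hy'⟩ with h | h
  · exact h.trans (hincl hinter inter_subset_right hy')
  · exact (hself (h.trans (hincl hinter inter_subset_left hy)).compl_left).elim

/-- A pair of a presentation `t₀` and a nonempty clopen set `s` for which the Wadge degree of
`X ∩ s` is not self-dual and is not lowered by passing to a neighbourhood of a generic point. -/
structure IsMinimalPair (X : Set Cantor) (t₀ : Presentation) (s : Set Cantor) : Prop where
  measurableSet : MeasurableSet X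
  isClopen : IsClopen s
  nonempty : s.Nonempty
  not_reduces_compl : ∀ t, t.IsContinuous t₀ id → ¬ Reduces t s Xᶜ t₀ s X
  reduces_of_isGeneric : ∀ x ∈ s, t₀.IsGeneric x → ∀ W, t₀.IsClopen W → x ∈ W →
    Reduces t₀ s X t₀ W X

theorem IsGeneric.exists_isClopen_subset (hx : t.IsGeneric x) (hW : t.IsOpen W) (hxW : x ∈ W) :
    ∃ s, IsClopen s ∧ x ∈ s ∧ s ⊆ W := by
  obtain ⟨s, ⟨hxs, hs⟩, hsW⟩ := (nhds_basis_clopen x).mem_iff.1 (hx W hW hxW)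
  exact ⟨s, hs, hxs, hsW⟩

theorem exists_isMinimalPair (hX : MeasurableSet X) (hdense : Dense X) (hbaire : BaireSpace X) :
    ∃ t₀ s, IsMinimalPair X t₀ s := by
  let ι := Presentation × {s : Set Cantor // IsClopen s ∧ s.Nonempty}
  have : Nonempty ι := ⟨standard, univ, isClopen_univ, univ_nonempty⟩
  obtain ⟨⟨t₀, s, hs, hne⟩, hmin⟩ := exists_minimal (t := fun i : ι ↦ i.1) (V := fun i ↦ i.2.1)
    (fun i ↦ isClopen_of_isClopen i.2.2.1) (fun i ↦ i.2.2.2) hX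
  have hkey (t : Presentation) {s' W : Set Cantor} (hs' : IsClopen s') (hne' : s'.Nonempty)
      (hW : s' ⊆ W) : Reduces t₀ s X t W X ∨ Reduces t₀ s X t W Xᶜ := by
    have hincl (B : Set Cantor) : Reduces t s' B t W B :=
      .of_subset continuous_id (isClopen_of_isClopen hs') hW (hne'.mono hW)
    exact (hmin ⟨t, s', hs', hne'⟩).imp (·.trans (hincl _)) (·.trans (hincl _))
  have hnsd (t : Presentation) (ht : t.IsContinuous t₀ id) : ¬ Reduces t s Xᶜ t₀ s X := by
    intro hr
    obtain ⟨x, -, hxs, hx⟩ := exists_isGeneric hdense hbaire t hs.isOpen hne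
    have hts : Reduces t s X t₀ s X := .of_subset ht (isClopen_of_isClopen hs) subset_rfl hne
    have hself : Reduces t s Xᶜ t s X :=
      (hkey t hs hne subset_rfl).elim hr.trans fun h ↦ (hts.trans h).compl_left
    obtain ⟨W, hW, hxW, -, h, h'⟩ :=
      exists_isClopen_not_reduces hX (isClopen_of_isClopen hs) hxs hself
    obtain ⟨s', hs', hxs', hs'W⟩ := hx.exists_isClopen_subset hW.isOpen hxW
    exact (hkey t hs' ⟨x, hxs'⟩ hs'W).elim (fun hW ↦ h (hts.trans hW)) fun hW ↦ h' (hts.trans hW)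
  refine ⟨t₀, s, hX, hs, hne, hnsd, fun x hxs hx W hW hxW ↦ ?_⟩
  have hopen : t₀.IsOpen (s ∩ W) := (isClopen_of_isClopen hs).isOpen.inter hW.isOpen
  obtain ⟨s', hs', hxs', hs'W⟩ := hx.exists_isClopen_subset hopen ⟨hxs, hxW⟩
  have hincl {V B : Set Cantor} (hV : s ∩ W ⊆ V) (hxV : x ∈ V) : Reduces t₀ (s ∩ W) B t₀ V B :=
    .of_subset continuous_id ((isClopen_of_isClopen hs).inter hW) hV ⟨x, hxV⟩
  rcases hkey t₀ hs' ⟨x, hxs'⟩ hs'W with h | h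
  · exact h.trans (hincl inter_subset_right hxW)
  · exact (hnsd t₀ continuous_id (h.trans (hincl inter_subset_left hxs)).compl_left).elim

theorem continuous_of_standard {f : Cantor → Cantor} (hf : standard.IsContinuous t f) :
    Continuous f := by
  have hencode : Continuous standard.encode :=
    continuous_pi fun n ↦
      (continuous_of_discreteTopology (f := Bool.toNat)).comp (continuous_apply n)
  have hid : Continuous (X := Cantor) (Y := standard.Space) id :=
    standard.isInducing_encode.continuous_iff.2 hencode
  exact (continuous_id_cantor (t := t)).comp (hf.comp hid)

/-- If `Y ∩ univ` reduces to `X ∩ s` after refining the topology, then it already does so for the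
topology of the Cantor space: otherwise Wadge's lemma would make `X ∩ s` self-dual after a further
refinement. -/
theorem IsMinimalPair.exists_continuous_eq_preimage (h : IsMinimalPair X t₀ s)
    (hY : MeasurableSet Y) (ht : t.IsContinuous t₀ id) (hr : Reduces t univ Y t₀ s X) :
    ∃ f : Cantor → Cantor, Continuous f ∧ (∀ v, f v ∈ s) ∧ Y = f ⁻¹' X := by
  have hs : standard.IsClopen s := isClopen_of_isClopen h.isClopen
  rcases reduces_or_reduces_compl (t := standard) (t' := standard) isClopen_univ univ_nonempty hs
    h.nonempty hY h.measurableSet with ⟨f, hf, hfs, hfX⟩ | ⟨σ, hσ, -, hσX⟩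
  · exact ⟨f, continuous_of_standard hf, hfs, ext fun v ↦ hfX v (mem_univ v)⟩
  · obtain ⟨t', ht', -, hσ'⟩ := exists_refinement t (V := fun _ : Empty ↦ ∅) isEmptyElim
      (f := fun _ : Unit ↦ σ) fun _ W hW ↦ hW.isFsigma.preimage (continuous_of_standard hσ)
    have hrefl : Reduces t' s X t univ Yᶜ := ⟨σ, hσ' (), fun v ↦ mem_univ _, hσX⟩
    exact (h.not_reduces_compl t' (ht.comp ht') (hrefl.trans hr.compl).compl_left).elim

end Presentation

/-! ### Extending homeomorphisms between subspaces -/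

theorem exists_forall_eqOn {α β : Type*} {D : ℕ → Set α}
    (hdisj : Pairwise (Function.onFun Disjoint D)) (h : ℕ → α → β) :
    ∃ H : α → β, ∀ n, EqOn H (h n) (D n) := by
  classical
  let index (v : α) : ℕ := if hv : ∃ n, v ∈ D n then hv.choose else 0
  refine ⟨fun v ↦ h (index v) v, fun n v hv ↦ ?_⟩
  have hex : ∃ n, v ∈ D n := ⟨n, hv⟩
  have hindex : index v = n := by
    simp only [index, dif_pos hex]
    exact hdisj.eq (not_disjoint_iff.2 ⟨v, hex.choose_spec, hv⟩)
  change h (index v) v = h n v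
  rw [hindex]

section Extension

variable {α β : Type*} [TopologicalSpace α] [TopologicalSpace β]

theorem isGδ_inter_preimage {G : Set α} {A : Set β} {f : α → β} (hG : IsGδ G)
    (hf : ContinuousOn f G) (hA : IsGδ A) : IsGδ (G ∩ f ⁻¹' A) := by
  obtain ⟨O, hO, rfl⟩ := hA.eq_iInter_nat
  choose U hU hfU using fun n ↦ continuousOn_iff'.1 hf (O n) (hO n)
  have heq : G ∩ f ⁻¹' ⋂ n, O n = G ∩ ⋂ n, U n := by
    simp_rw [preimage_iInter, inter_iInter, inter_comm G, hfU]
  exact heq ▸ hG.inter (.iInter fun n ↦ (hU n).isGδ)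

theorem exists_isGδ_continuousOn_extension [PerfectlyNormalSpace α] {X : Set α} {f : X → Cantor}
    (hf : Continuous f) : ∃ (G : Set α) (F : α → Cantor),
      IsGδ G ∧ ContinuousOn F G ∧ X ⊆ G ∧ ∀ x : X, F x = f x := by
  classical
  have hopen (n : ℕ) (c : Bool) : IsOpen {x : X | f x n = c} :=
    (isOpen_discrete {c}).preimage ((continuous_apply n).comp hf)
  choose O hO hOf using fun n c ↦ isOpen_induced_iff.1 (hopen n c)
  have hmem (n : ℕ) (c : Bool) (x : X) : (x : α) ∈ O n c ↔ f x n = c := Set.ext_iff.1 (hOf n c) x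
  refine ⟨⋂ n, {v | v ∈ O n true ↔ v ∉ O n false}, fun v n ↦ decide (v ∈ O n true),
    .iInter fun n ↦ ?_, continuousOn_pi.2 fun n v hv ↦ ?_, fun x hx ↦ ?_, fun x ↦ ?_⟩
  · have hclosed (c : Bool) : IsGδ (O n c)ᶜ := (hO n c).isClosed_compl.isGδ
    convert ((hO n true).isGδ.inter (hclosed false)).union ((hclosed true).inter (hO n false).isGδ)
    ext v
    simp only [mem_ofPred_eq, mem_union, mem_inter_iff, mem_compl_iff]
    tauto
  · have hnhds (c : Bool) (hc : v ∈ O n c) :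
        ContinuousWithinAt (fun v ↦ decide (v ∈ O n true)) (⋂ n, {v | v ∈ O n true ↔ v ∉ O n false})
          v := by
      have heq (w : α) (hw : w ∈ O n c) (hw' : w ∈ ⋂ n, {v | v ∈ O n true ↔ v ∉ O n false}) :
          decide (w ∈ O n true) = c := by
        have := mem_iInter.1 hw' n
        cases c <;> simp_all
      refine (continuousWithinAt_const (b := c)).congr_of_eventuallyEq ?_ (heq v hc hv)
      filter_upwards [mem_nhdsWithin_of_mem_nhds ((hO n c).mem_nhds hc), self_mem_nhdsWithin]
        with w using heq w
    by_cases h : v ∈ O n true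
    · exact hnhds true h
    · exact hnhds false (not_not.1 fun h' ↦ h ((mem_iInter.1 hv n).2 h'))
  · refine mem_iInter.2 fun n ↦ ?_
    rw [mem_ofPred_eq, hmem n true ⟨x, hx⟩, hmem n false ⟨x, hx⟩, Bool.not_eq_false]
  · funext n
    simp only [hmem, Bool.decide_eq_true]

/-- **Lavrentiev's theorem**, in an asymmetric form. -/
theorem exists_isGδ_continuousOn_homeomorph_extension {X Y : Set Cantor} (φ : X ≃ₜ Y) :
    ∃ (G : Set Cantor) (F : Cantor → Cantor), IsGδ G ∧ ContinuousOn F G ∧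
      (∀ v, v ∈ X ↔ v ∈ G ∧ F v ∈ Y) ∧ ∀ x : X, F x = φ x := by
  obtain ⟨G, F, hG, hF, hXG, hFφ⟩ :=
    exists_isGδ_continuousOn_extension (continuous_subtype_val.comp φ.continuous)
  obtain ⟨G', F', hG', hF', hYG', hFφ'⟩ :=
    exists_isGδ_continuousOn_extension (continuous_subtype_val.comp φ.symm.continuous)
  have hFF' : ContinuousOn (fun v ↦ (F' (F v), v)) (G ∩ F ⁻¹' G') :=
    (hF'.comp (hF.mono inter_subset_left) fun v hv ↦ hv.2).prodMk continuousOn_id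
  have hdiag : IsGδ (diagonal Cantor) := isClosed_diagonal.isGδ
  refine ⟨(G ∩ F ⁻¹' G') ∩ (fun v ↦ (F' (F v), v)) ⁻¹' diagonal Cantor, F,
    isGδ_inter_preimage (isGδ_inter_preimage hG hF hG') hFF' hdiag,
    hF.mono (inter_subset_left.trans inter_subset_left), fun v ↦ ⟨fun hv ↦ ?_, ?_⟩, hFφ⟩
  · have hFv : F v = φ ⟨v, hv⟩ := hFφ ⟨v, hv⟩
    have hFY : F v ∈ Y := hFv ▸ (φ ⟨v, hv⟩).2
    refine ⟨⟨⟨hXG hv, hYG' hFY⟩, ?_⟩, hFY⟩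
    simpa [hFv] using hFφ' (φ ⟨v, hv⟩)
  · rintro ⟨⟨-, hv⟩, hFY⟩
    rw [← show F' (F v) = v from hv, hFφ' ⟨F v, hFY⟩]
    exact Subtype.coe_prop _

theorem isGδ_iUnion_inter {D G : ℕ → Set α} (hD : ∀ n, IsOpen (D n))
    (hdisj : Pairwise (Function.onFun Disjoint D)) (hG : ∀ n, IsGδ (G n)) :
    IsGδ (⋃ n, D n ∩ G n) := by
  have heq : ⋃ n, D n ∩ G n = (⋃ n, D n) ∩ ⋂ n, G n ∪ ⋃ m ≠ n, D m := by
    ext v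
    simp only [mem_iUnion, mem_inter_iff, mem_iInter, mem_union, exists_prop]
    constructor
    · rintro ⟨n, hvn, hvG⟩
      refine ⟨⟨n, hvn⟩, fun m ↦ ?_⟩
      rcases eq_or_ne m n with rfl | hmn
      exacts [.inl hvG, .inr ⟨n, hmn.symm, hvn⟩]
    · rintro ⟨⟨n, hvn⟩, hv⟩
      refine ⟨n, hvn, (hv n).resolve_right ?_⟩
      rintro ⟨m, hmn, hvm⟩
      exact disjoint_left.1 (hdisj hmn) hvm hvn
  rw [heq]
  exact (isOpen_iUnion hD).isGδ.inter <| .iInter fun n ↦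
    (hG n).union (isOpen_biUnion fun m _ ↦ hD m).isGδ

theorem continuousOn_iUnion_inter {D G : ℕ → Set α} (hD : ∀ n, IsOpen (D n))
    (hdisj : Pairwise (Function.onFun Disjoint D)) {h : ℕ → α → β}
    (hh : ∀ n, ContinuousOn (h n) (G n)) {H : α → β} (hH : ∀ n, EqOn H (h n) (D n)) :
    ContinuousOn H (⋃ n, D n ∩ G n) := by
  intro v hv
  obtain ⟨n, hvD, hvG⟩ := mem_iUnion.1 hv
  have hsub : (⋃ n, D n ∩ G n) ∩ D n ⊆ G n := by
    rintro w ⟨hw, hwn⟩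
    obtain ⟨m, hwm, hwG⟩ := mem_iUnion.1 hw
    have hmn : m = n := hdisj.eq (not_disjoint_iff.2 ⟨w, hwm, hwn⟩)
    exact hmn ▸ hwG
  rw [← continuousWithinAt_inter ((hD n).mem_nhds hvD)]
  exact ((hh n v hvG).mono hsub).congr (fun w hw ↦ hH n hw.2) (hH n hvD)

end Extension

/-- A partial continuous map `h` with Gδ domain `G` and values in `s` for which `X` is the preimage
of `X`, as far as the points of `T` are concerned. -/
structure IsPartialReduction (X s T G : Set Cantor) (h : Cantor → Cantor) : Prop where
  isGδ : IsGδ G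
  continuousOn : ContinuousOn h G
  mapsTo : MapsTo h G s
  mem_iff : ∀ v ∈ T, (v ∈ X ↔ v ∈ G ∧ h v ∈ X)

section PartialReduction

variable {X s : Set Cantor}

theorem IsPartialReduction.mono {T T' G : Set Cantor} {h : Cantor → Cantor}
    (H : IsPartialReduction X s T G h) (hT : T' ⊆ T) : IsPartialReduction X s T' G h :=
  ⟨H.isGδ, H.continuousOn, H.mapsTo, fun v hv ↦ H.mem_iff v (hT hv)⟩

theorem IsPartialReduction.glue {D G : ℕ → Set Cantor} {h : ℕ → Cantor → Cantor}
    (hD : ∀ n, IsOpen (D n)) (hdisj : Pairwise (Function.onFun Disjoint D)) (hX : X ⊆ ⋃ n, D n)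
    (H : ∀ n, IsPartialReduction X s (D n) (G n) (h n)) :
    ∃ G h, IsPartialReduction X s univ G h := by
  obtain ⟨h', hh'⟩ := exists_forall_eqOn hdisj h
  refine ⟨⋃ n, D n ∩ G n, h', isGδ_iUnion_inter hD hdisj fun n ↦ (H n).isGδ,
    continuousOn_iUnion_inter hD hdisj (fun n ↦ (H n).continuousOn) hh', fun v hv ↦ ?_,
    fun v _ ↦ ⟨fun hv ↦ ?_, ?_⟩⟩
  · obtain ⟨n, hvD, hvG⟩ := mem_iUnion.1 hv
    exact hh' n hvD ▸ (H n).mapsTo hvG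
  · obtain ⟨n, hvD⟩ := mem_iUnion.1 (hX hv)
    obtain ⟨hvG, hhv⟩ := ((H n).mem_iff v hvD).1 hv
    exact ⟨mem_iUnion.2 ⟨n, hvD, hvG⟩, hh' n hvD ▸ hhv⟩
  · rintro ⟨hv, hhv⟩
    obtain ⟨n, hvD, hvG⟩ := mem_iUnion.1 hv
    exact ((H n).mem_iff v hvD).2 ⟨hvG, hh' n hvD ▸ hhv⟩

theorem exists_isPartialReduction_of_mem (hdense : Dense X) (hX : IsHomogeneous X)
    (hs : IsOpen s) (hne : s.Nonempty) {x : Cantor} (hx : x ∈ X) :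
    ∃ T G h, IsClopen T ∧ x ∈ T ∧ IsPartialReduction X s T G h := by
  obtain ⟨y, hys, hyX⟩ := hdense.inter_open_nonempty s hs hne
  obtain ⟨φ, hφ⟩ := hX ⟨x, hx⟩ ⟨y, hyX⟩
  obtain ⟨G, h, hG, hh, hGX, hhφ⟩ := exists_isGδ_continuousOn_homeomorph_extension φ
  obtain ⟨O, hO, hOs⟩ :=
    isOpen_induced_iff.1 (hs.preimage (continuous_subtype_val.comp φ.continuous))
  have hOφ (z : X) : (z : Cantor) ∈ O ↔ (φ z : Cantor) ∈ s := Set.ext_iff.1 hOs z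
  have hxO : x ∈ O := (hOφ ⟨x, hx⟩).2 (by rwa [hφ])
  obtain ⟨T, ⟨hxT, hT⟩, hTO⟩ := (nhds_basis_clopen x).mem_iff.1 (hO.mem_nhds hxO)
  refine ⟨T, G ∩ h ⁻¹' s, h, hT, hxT, isGδ_inter_preimage hG hh hs.isGδ,
    hh.mono inter_subset_left, fun v hv ↦ hv.2, fun v hv ↦ ⟨fun hvX ↦ ?_, fun hv' ↦ ?_⟩⟩
  · refine ⟨⟨((hGX v).1 hvX).1, ?_⟩, ((hGX v).1 hvX).2⟩
    rw [mem_preimage, hhφ ⟨v, hvX⟩]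
    exact (hOφ ⟨v, hvX⟩).1 (hTO hv)
  · exact (hGX v).2 ⟨hv'.1.1, hv'.2⟩

theorem exists_isPartialReduction (hdense : Dense X) (hX : IsHomogeneous X) (hs : IsOpen s)
    (hne : s.Nonempty) : ∃ G h, IsPartialReduction X s univ G h := by
  choose T G h hT hxT H using fun x : X ↦ exists_isPartialReduction_of_mem hdense hX hs hne x.2
  obtain ⟨I, hI, hIT⟩ := TopologicalSpace.isOpen_iUnion_countable T fun x ↦ (hT x).isOpen
  obtain ⟨x₀, hx₀⟩ := hdense.nonempty
  obtain ⟨g, hg⟩ := (hI.insert ⟨x₀, hx₀⟩).exists_eq_range (insert_nonempty _ _)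
  refine IsPartialReduction.glue (D := disjointed (T ∘ g)) (fun n ↦ ?_) (disjoint_disjointed _) ?_
    fun n ↦ (H (g n)).mono (disjointed_subset _ n)
  · have hclopen : IsClopen (disjointed (T ∘ g) n) :=
      disjointedRec (p := IsClopen) (fun _ i h ↦ h.diff (hT (g i))) (hT (g n))
    exact hclopen.isOpen
  · intro x hx
    have hxI : x ∈ ⋃ i ∈ I, T i := hIT ▸ mem_iUnion.2 ⟨⟨x, hx⟩, hxT _⟩
    obtain ⟨i, hi, hxi⟩ := mem_iUnion₂.1 hxI
    obtain ⟨n, rfl⟩ : i ∈ range g := hg ▸ mem_insert_of_mem _ hi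
    rw [iUnion_disjointed]
    exact mem_iUnion.2 ⟨n, hxi⟩

theorem dOmegaSigmaTwo_of_odd_rank {N : Cantor → ℕ} (hN : ∀ n, IsFsigma {v | N v ≤ n})
    (hX : ∀ v, v ∈ X ↔ Odd (N v)) : DOmegaSigmaTwo X := by
  refine ⟨fun n ↦ {v | N v ≤ n}, hN, fun m n hmn v hv ↦ le_trans hv hmn, ext fun v ↦ ?_⟩
  have hdiff (n : ℕ) : v ∈ {v | N v ≤ n} \ ⋃ m < n, {v | N v ≤ m} ↔ N v = n := by
    simp only [Set.mem_sdiff, mem_ofPred_eq, mem_iUnion, not_exists, exists_prop, not_and]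
    exact ⟨fun h ↦ h.1.antisymm (not_lt.1 fun hlt ↦ h.2 _ hlt le_rfl), by rintro rfl; simp⟩
  simp only [hX, mem_iUnion, hdiff, mem_ofPred_eq, exists_prop, exists_eq_right']

theorem inDelta_of_odd_rank {N : Cantor → ℕ} (hN : ∀ n, IsFsigma {v | N v ≤ n})
    (hX : ∀ v, v ∈ X ↔ Odd (N v)) : InDelta X := by
  refine ⟨dOmegaSigmaTwo_of_odd_rank hN hX,
    dOmegaSigmaTwo_of_odd_rank (N := fun v ↦ N v + 1) (fun n ↦ ?_) fun v ↦ ?_⟩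
  · cases n with
    | zero => simpa using IsFsigma.of_isClosed isClosed_empty
    | succ n => simpa using hN n
  · rw [mem_compl_iff, hX, Nat.odd_add_one]

theorem IsFsigma.compl_union_preimage {G A : Set Cantor} {h : Cantor → Cantor}
    (hA : IsFsigma A) (hG : IsGδ G) (hh : ContinuousOn h G) : IsFsigma (Gᶜ ∪ h ⁻¹' A) := by
  rw [isFsigma_iff_isGδ_compl, compl_union, compl_compl, ← preimage_compl]
  exact isGδ_inter_preimage hG hh (isFsigma_iff_isGδ_compl.1 hA)

theorem inDelta_of_odd_rank_on (hdense : Dense X) (hX : IsHomogeneous X) (hs : IsOpen s)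
    (hne : s.Nonempty) {N : Cantor → ℕ} (hN : ∀ n, IsFsigma {v | v ∈ s ∧ N v ≤ n})
    (hNX : ∀ v ∈ s, (v ∈ X ↔ Odd (N v))) : InDelta X := by
  classical
  obtain ⟨G, h, H⟩ := exists_isPartialReduction hdense hX hs hne
  refine inDelta_of_odd_rank (N := fun v ↦ if v ∈ G then N (h v) else 0) (fun n ↦ ?_) fun v ↦ ?_
  · convert (hN n).compl_union_preimage H.isGδ H.continuousOn using 1
    ext v
    by_cases hv : v ∈ G
    · simp [hv, H.mapsTo hv]
    · simp [hv]
  · rw [H.mem_iff v (mem_univ v)]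
    by_cases hv : v ∈ G
    · simp [hv, hNX _ (H.mapsTo hv)]
    · simp [hv]

end PartialReduction

/-! ### Open ranks and the core -/

namespace Presentation

variable {t t' t₀ : Presentation} {f : Cantor → Cantor} {s C K O U V X : Set Cantor}

theorem measurable_of_isContinuous (hf : t.IsContinuous t' f) : Measurable f :=
  measurable_of_isOpen fun _ hU ↦
    (IsOpen.isFsigma ((isOpen_of_isOpen hU).preimage hf)).measurableSet

theorem mem_cylinder_comm {v w : Cantor} {n : ℕ} : w ∈ t.cylinder v n ↔ v ∈ t.cylinder w n :=
  PiNat.mem_cylinder_comm ..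

theorem cylinder_eq_of_mem {v w : Cantor} {m n : ℕ} (hw : w ∈ t.cylinder v n) (hmn : m ≤ n) :
    t.cylinder w m = t.cylinder v m := by
  have := PiNat.mem_cylinder_iff_eq.1 (t.cylinder_anti v hmn hw)
  exact congrArg (t.encode ⁻¹' ·) this

theorem hasBasis_nhds (v : t.Space) : (𝓝 v).HasBasis (fun _ ↦ True) (t.cylinder v) := by
  refine ⟨fun W ↦ ⟨fun hW ↦ ?_, ?_⟩⟩
  · obtain ⟨U, hUW, hU, hvU⟩ := mem_nhds_iff.1 hW
    obtain ⟨n, hn⟩ := IsOpen.exists_cylinder_subset hU hvU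
    exact ⟨n, trivial, hn.trans hUW⟩
  · rintro ⟨n, -, hn⟩
    exact mem_of_superset
      ((t.isClopen_cylinder v n).isOpen.mem_nhds (t.self_mem_cylinder v n)) hn

/-- The membership in `X` of a point of `V` is decided by the parity of a natural number whose
sublevel sets are open for the topology of `t`. -/
def HasOpenRank (t : Presentation) (X V : Set Cantor) : Prop :=
  ∃ N : Cantor → ℕ, (∀ n, t.IsOpen {v | v ∈ V ∧ N v ≤ n}) ∧ ∀ v ∈ V, (v ∈ X ↔ Odd (N v))

theorem hasOpenRank_of_subset (hV : t.IsOpen V) (hVX : V ⊆ X) : HasOpenRank t X V :=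
  ⟨fun _ ↦ 1, fun _ ↦ IsOpen.and hV isOpen_const, fun v hv ↦ by simp [hVX hv]⟩

namespace HasOpenRank

theorem of_reduces (hX : HasOpenRank t' X V) (hU : t.IsOpen U) (hr : Reduces t U X t' V X) :
    HasOpenRank t X U := by
  obtain ⟨N, hN, hNX⟩ := hX
  obtain ⟨k, hk, hkV, hkX⟩ := hr
  refine ⟨N ∘ k, fun n ↦ ?_, fun v hv ↦ (hkX v hv).trans (hNX _ (hkV v))⟩
  have heq : {v | v ∈ U ∧ N (k v) ≤ n} = U ∩ k ⁻¹' {v | v ∈ V ∧ N v ≤ n} := by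
    ext v
    simp [hkV]
  exact heq ▸ IsOpen.inter hU ((hN n).preimage hk)

theorem mono (hX : HasOpenRank t X V) (hU : t.IsOpen U) (hUV : U ⊆ V) : HasOpenRank t X U := by
  obtain ⟨N, hN, hNX⟩ := hX
  refine ⟨N, fun n ↦ ?_, fun v hv ↦ hNX v (hUV hv)⟩
  have heq : {v | v ∈ U ∧ N v ≤ n} = U ∩ {v | v ∈ V ∧ N v ≤ n} := by
    ext v
    simpa using fun hv _ ↦ hUV hv
  exact heq ▸ IsOpen.inter hU (hN n)

theorem of_forall_mem (hX : ∀ v ∈ V, ∃ U, t.IsOpen U ∧ v ∈ U ∧ HasOpenRank t X U)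
    (hV : t.IsOpen V) : HasOpenRank t X V := by
  classical
  obtain ⟨B, hBo, hB⟩ := t.exists_seq_isClopen_basis
  let T (n : ℕ) : Set Cantor := if B n ⊆ V ∧ HasOpenRank t X (B n) then B n else ∅
  have hT (n : ℕ) : t.IsClopen (T n) ∧ T n ⊆ V ∧ HasOpenRank t X (T n) := by
    by_cases hn : B n ⊆ V ∧ HasOpenRank t X (B n)
    · simpa only [T, if_pos hn] using ⟨hBo n, hn⟩
    · simpa only [T, if_neg hn] using
        ⟨isClopen_empty, empty_subset V, hasOpenRank_of_subset isOpen_empty (empty_subset X)⟩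
  have hVT : V ⊆ ⋃ n, T n := by
    intro v hv
    obtain ⟨U, hU, hvU, hUX⟩ := hX v hv
    obtain ⟨_, ⟨n, rfl⟩, hvB, hBU⟩ :=
      hB.exists_subset_of_mem_open (show v ∈ U ∩ V from ⟨hvU, hv⟩) (IsOpen.inter hU hV)
    have hn : B n ⊆ V ∧ HasOpenRank t X (B n) :=
      ⟨hBU.trans inter_subset_right, hUX.mono (hBo n).isOpen (hBU.trans inter_subset_left)⟩
    exact mem_iUnion.2 ⟨n, by rwa [show T n = B n from if_pos hn]⟩
  have hD (n : ℕ) : t.IsClopen (disjointed T n) :=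
    disjointedRec (p := t.IsClopen) (fun _ i h ↦ IsClopen.diff h (hT i).1) (hT n).1
  choose N hN hNX using fun n ↦ (hT n).2.2.mono (hD n).isOpen (disjointed_subset T n)
  obtain ⟨N', hN'⟩ := exists_forall_eqOn (disjoint_disjointed T) N
  rw [← iUnion_disjointed] at hVT
  refine ⟨N', fun k ↦ ?_, fun v hv ↦ ?_⟩
  · have heq : {v | v ∈ V ∧ N' v ≤ k} = ⋃ n, {v | v ∈ disjointed T n ∧ N n v ≤ k} := by
      ext v
      simp only [mem_ofPred_eq, mem_iUnion]
      constructor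
      · rintro ⟨hv, hk⟩
        obtain ⟨n, hn⟩ := mem_iUnion.1 (hVT hv)
        exact ⟨n, hn, hN' n hn ▸ hk⟩
      · rintro ⟨n, hn, hk⟩
        exact ⟨(hT n).2.1 (disjointed_subset T n hn), (hN' n hn).symm ▸ hk⟩
    exact heq ▸ isOpen_iUnion fun n ↦ hN n k
  · obtain ⟨n, hn⟩ := mem_iUnion.1 (hVT hv)
    rw [hN' n hn, hNX n v hn]

theorem of_compl (hX : HasOpenRank t X V) (hO : t.IsOpen O) (hOX : O ⊆ X)
    (hf : t.IsContinuous t f) (hU : t.IsOpen U) (hUV : MapsTo f U V)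
    (hfX : ∀ v ∈ U \ O, (v ∈ X ↔ f v ∉ X)) : HasOpenRank t X U := by
  classical
  obtain ⟨N, hN, hNX⟩ := hX
  let M (v : Cantor) : ℕ := if v ∈ O then 1 else N (f v) + 1
  have hM {v : Cantor} (hv : v ∈ O) : M v = 1 := if_pos hv
  have hM' {v : Cantor} (hv : v ∉ O) : M v = N (f v) + 1 := if_neg hv
  refine ⟨M, fun n ↦ ?_, fun v hv ↦ ?_⟩
  · cases n with
    | zero =>
      have heq : {v | v ∈ U ∧ M v ≤ 0} = ∅ := by
        ext v
        by_cases hv : v ∈ O <;> simp [hv, M]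
      exact heq ▸ isOpen_empty
    | succ n =>
      have heq : {v | v ∈ U ∧ M v ≤ n + 1} = U ∩ (O ∪ f ⁻¹' {v | v ∈ V ∧ N v ≤ n}) := by
        ext v
        by_cases hv : v ∈ O
        · simp [hv, M]
        · simpa [hv, M] using fun hvU _ ↦ hUV hvU
      exact heq ▸ IsOpen.inter hU (IsOpen.union hO ((hN n).preimage hf))
  · by_cases hvO : v ∈ O
    · simp [hM hvO, hOX hvO]
    · rw [hfX v ⟨hv, hvO⟩, hM' hvO, Nat.odd_add_one, hNX _ (hUV hv)]

end HasOpenRank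

/-- The points of `s` near which `X` has no open rank. -/
def core (t : Presentation) (X s : Set Cantor) : Set Cantor :=
  {y | y ∈ s ∧ ∀ V, t.IsOpen V → y ∈ V → ¬ HasOpenRank t X V}

theorem isClosed_core (hs : t.IsClopen s) : IsClosed (X := t.Space) (core t X s) := by
  have heq : core t X s = s \ ⋃ V ∈ {V | t.IsOpen V ∧ HasOpenRank t X V}, V := by
    ext y
    simp only [core, mem_ofPred_eq, Set.mem_sdiff, mem_iUnion, not_exists, exists_prop, not_and]
    grind
  rw [heq]
  exact IsClosed.sdiff hs.isClosed (isOpen_biUnion fun V hV ↦ hV.1)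

theorem IsGeneric.mem_core (hdense : Dense X) (hX : IsHomogeneous X) (hΔ : ¬ InDelta X)
    {x : Cantor} (hx : t.IsGeneric x) (hxs : x ∈ s) : x ∈ core t X s := by
  refine ⟨hxs, fun V hV hxV hVX ↦ hΔ ?_⟩
  obtain ⟨s', hs', hxs', hs'V⟩ := hx.exists_isClopen_subset hV hxV
  obtain ⟨N, hN, hNX⟩ := hVX.mono (isOpen_of_isOpen hs'.isOpen) hs'V
  exact inDelta_of_odd_rank_on hdense hX hs'.isOpen ⟨x, hxs'⟩ (fun n ↦ IsOpen.isFsigma (hN n)) hNX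

/-- The least `n` such that the `n`-th basic neighbourhood of `v` misses `K`. -/
noncomputable def exitTime (t : Presentation) (K : Set Cantor) (v : Cantor) : ℕ :=
  sInf {n | Disjoint (t.cylinder v n) K}

section exitTime

variable {v w : Cantor}

theorem disjoint_cylinder_exitTime (hK : IsClosed (X := t.Space) K) (hv : v ∉ K) :
    Disjoint (t.cylinder v (t.exitTime K v)) K := by
  obtain ⟨n, hn⟩ := IsOpen.exists_cylinder_subset hK.isOpen_compl hv
  exact Nat.sInf_mem (s := {n | Disjoint (t.cylinder v n) K})
    ⟨n, disjoint_left.2 fun w hw ↦ hn hw⟩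

theorem exitTime_le {n : ℕ} (hn : Disjoint (t.cylinder v n) K) : t.exitTime K v ≤ n :=
  Nat.sInf_le hn

theorem lt_exitTime_of_mem_cylinder (hK : IsClosed (X := t.Space) K) (hv : v ∉ K) (hw : w ∈ K)
    {n : ℕ} (hwv : w ∈ t.cylinder v n) : n < t.exitTime K v := by
  by_contra! hle
  exact (disjoint_cylinder_exitTime hK hv).notMem_of_mem_right hw (t.cylinder_anti v hle hwv)

theorem exitTime_eq_of_mem_cylinder (hK : IsClosed (X := t.Space) K) (hv : v ∉ K)
    (hw : w ∈ t.cylinder v (t.exitTime K v)) : t.exitTime K w = t.exitTime K v := by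
  have hle : t.exitTime K w ≤ t.exitTime K v :=
    exitTime_le (cylinder_eq_of_mem hw le_rfl ▸ disjoint_cylinder_exitTime hK hv)
  have hwK : w ∉ K := (disjoint_cylinder_exitTime hK hv).notMem_of_mem_left hw
  exact hle.antisymm <|
    exitTime_le (cylinder_eq_of_mem hw hle ▸ disjoint_cylinder_exitTime hK hwK)

theorem cylinder_exitTime_sub_one_inter_nonempty (hK : IsClosed (X := t.Space) K)
    (hne : K.Nonempty) (hv : v ∉ K) : (t.cylinder v (t.exitTime K v - 1) ∩ K).Nonempty := by
  obtain ⟨κ, hκ⟩ := hne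
  have hpos : 0 < t.exitTime K v :=
    lt_exitTime_of_mem_cylinder hK hv hκ fun i hi ↦ absurd hi i.not_lt_zero
  rw [← not_disjoint_iff_nonempty_inter]
  exact Nat.notMem_of_lt_sInf (Nat.sub_one_lt hpos.ne')

end exitTime

theorem isContinuous_of_exitTime (hK : IsClosed (X := t.Space) K) (hf : t.IsContinuous t' f)
    {r : Cantor → Cantor} (hrK : ∀ v ∈ K, r v = f v)
    (hrv : ∀ v ∉ K, ∃ ρ, t.IsContinuous t' ρ ∧ EqOn r ρ (t.cylinder v (t.exitTime K v)))
    (hrκ : ∀ v ∉ K, ∃ κ ∈ K, κ ∈ t.cylinder v (t.exitTime K v - 1) ∧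
      r v ∈ t'.cylinder (f κ) (t.exitTime K v)) : t.IsContinuous t' r := by
  refine continuous_iff_continuousAt.2 fun v ↦ ?_
  by_cases hv : v ∈ K
  · refine ((hasBasis_nhds v).tendsto_iff (hasBasis_nhds (t := t') (r v))).2 fun m _ ↦ ?_
    obtain ⟨n, -, hn⟩ := ((hasBasis_nhds v).tendsto_iff (hasBasis_nhds (t := t') (f v))).1
      (hf.tendsto v) m trivial
    rw [hrK v hv]
    refine ⟨max n m, trivial, fun w hw ↦ ?_⟩
    have hwn : w ∈ t.cylinder v n := t.cylinder_anti v (le_max_left n m) hw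
    by_cases hwK : w ∈ K
    · exact hrK w hwK ▸ hn w hwn
    have hlt : max n m < t.exitTime K w :=
      lt_exitTime_of_mem_cylinder hK hwK hv (mem_cylinder_comm.1 hw)
    obtain ⟨κ, -, hκw, hκ⟩ := hrκ w hwK
    have hκv : κ ∈ t.cylinder v n :=
      cylinder_eq_of_mem hwn le_rfl ▸ t.cylinder_anti w (by lia) hκw
    exact cylinder_eq_of_mem (hn κ hκv) le_rfl ▸ t'.cylinder_anti (f κ) (by lia) hκ
  · obtain ⟨ρ, hρ, heq⟩ := hrv v hv
    exact hρ.continuousAt.congr <| heq.symm.eventuallyEq_of_mem <|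
      (hasBasis_nhds v).mem_of_mem trivial

/-- The extension is assembled from selections on the basic neighbourhoods at which a point leaves
`K`, whose values accumulate only at values of `f` on `K`. -/
theorem exists_isContinuous_extension (hK : IsClosed (X := t.Space) K) (hne : K.Nonempty)
    (hf : t.IsContinuous t' f) {R : Cantor → Cantor → Prop}
    (hR : ∀ V, t.IsClopen V → Disjoint V K → ∀ κ ∈ K, ∀ n, ∃ ρ, t.IsContinuous t' ρ ∧
      (∀ w, ρ w ∈ t'.cylinder (f κ) n) ∧ ∀ w ∈ V, R w (ρ w)) :
    ∃ r, t.IsContinuous t' r ∧ (∀ v ∈ K, r v = f v) ∧ ∀ v ∉ K, R v (r v) := by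
  classical
  choose! ρ hρ hρf hρR using hR
  choose! κ hκ using fun (S : Set Cantor) (hS : (S ∩ K).Nonempty) ↦ hS
  let D (v : Cantor) (n : ℕ) : Set Cantor := t.cylinder v n
  let ψ (v : Cantor) : Cantor → Cantor :=
    ρ (D v (t.exitTime K v)) (κ (D v (t.exitTime K v - 1))) (t.exitTime K v)
  let r (v : Cantor) : Cantor := if v ∈ K then f v else ψ v v
  have hrK {v : Cantor} (hv : v ∈ K) : r v = f v := if_pos hv
  have hrψ {v : Cantor} (hv : v ∉ K) : r v = ψ v v := if_neg hv
  have hκK {v : Cantor} (hv : v ∉ K) :=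
    hκ _ (cylinder_exitTime_sub_one_inter_nonempty hK hne hv)
  have hclopen (v : Cantor) : t.IsClopen (D v (t.exitTime K v)) := t.isClopen_cylinder ..
  have hdisj {v : Cantor} (hv : v ∉ K) := disjoint_cylinder_exitTime hK hv
  refine ⟨r, isContinuous_of_exitTime hK hf (fun v ↦ hrK) (fun v hv ↦ ?_) (fun v hv ↦ ?_),
    fun v ↦ hrK, fun v hv ↦ ?_⟩
  · refine ⟨ψ v, hρ _ (hclopen v) (hdisj hv) _ (hκK hv).2 _, fun w hw ↦ ?_⟩
    have hexit := exitTime_eq_of_mem_cylinder hK hv hw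
    have hD {n : ℕ} (hn : n ≤ t.exitTime K v) : D w n = D v n := cylinder_eq_of_mem hw hn
    rw [hrψ ((hdisj hv).notMem_of_mem_left hw)]
    simp only [ψ, hexit, hD le_rfl, hD (Nat.sub_le _ 1)]
  · rw [hrψ hv]
    exact ⟨_, (hκK hv).2, (hκK hv).1, hρf _ (hclopen v) (hdisj hv) _ (hκK hv).2 _ v⟩
  · rw [hrψ hv]
    exact hρR _ (hclopen v) (hdisj hv) _ (hκK hv).2 _ v (t.self_mem_cylinder v _)

namespace IsMinimalPair

theorem exists_reduces_compl_of_disjoint_core (h : IsMinimalPair X t₀ s) {κ : Cantor}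
    (hκ : κ ∈ core t₀ X s) (hV : t₀.IsClopen V) (hVK : Disjoint V (core t₀ X s)) (n : ℕ) :
    ∃ ρ, t₀.IsContinuous t₀ ρ ∧ (∀ w, ρ w ∈ t₀.cylinder κ n) ∧
      ∀ w ∈ V, ρ w ∈ s ∧ (w ∈ s → (w ∉ X ↔ ρ w ∈ X)) := by
  have hs : t₀.IsClopen s := isClopen_of_isClopen h.isClopen
  have hB : t₀.IsClopen (t₀.cylinder κ n ∩ s) := IsClopen.inter (t₀.isClopen_cylinder κ n) hs
  have hκB : κ ∈ t₀.cylinder κ n ∩ s := ⟨t₀.self_mem_cylinder κ n, hκ.1⟩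
  rcases (V ∩ s).eq_empty_or_nonempty with hVs | hVs
  · exact ⟨fun _ ↦ κ, continuous_const, fun _ ↦ hκB.1,
      fun w hw ↦ ⟨hκ.1, fun hws ↦ absurd ⟨hw, hws⟩ (eq_empty_iff_forall_notMem.1 hVs w)⟩⟩
  have hVs' : t₀.IsClopen (V ∩ s) := IsClopen.inter hV hs
  have hrank : HasOpenRank t₀ X (V ∩ s) := by
    refine .of_forall_mem (fun w hw ↦ ?_) hVs'.isOpen
    have hwK : w ∉ core t₀ X s := hVK.notMem_of_mem_left hw.1
    simpa [core, hw.2] using hwK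
  rcases reduces_or_reduces_compl hVs' hVs hB ⟨κ, hκB⟩ h.measurableSet.compl h.measurableSet with
    ⟨ρ, hρ, hρB, hρX⟩ | hr
  · exact ⟨ρ, hρ, fun w ↦ (hρB w).1, fun w hw ↦ ⟨(hρB w).2, fun hws ↦ hρX w ⟨hw, hws⟩⟩⟩
  · rw [compl_compl] at hr
    exact (hκ.2 _ hB.isOpen hκB (hrank.of_reduces hB.isOpen hr)).elim

/-- The map would agree with a reduction of `Xᶜ` to `X` on the core, and such a reduction could be
extended off the core, where `X` is simple. -/
theorem not_forall_mem_iff_notMem (h : IsMinimalPair X t₀ s) (hne : (core t₀ X s).Nonempty)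
    (hf : t₀.IsContinuous t₀ f) (hfs : ∀ v, f v ∈ s) (hO : t₀.IsOpen O) (hOX : s ∩ O ⊆ X) :
    ¬ ∀ v ∈ s \ O, (v ∈ X ↔ f v ∉ X) := by
  intro hfX
  have hs : t₀.IsClopen s := isClopen_of_isClopen h.isClopen
  have hsO : t₀.IsOpen (s ∩ O) := IsOpen.inter hs.isOpen hO
  have hKO {v : Cantor} (hv : v ∈ core t₀ X s) : v ∉ O := fun hvO ↦
    hv.2 _ hsO ⟨hv.1, hvO⟩ (hasOpenRank_of_subset hsO hOX)
  have hfK {v : Cantor} (hv : v ∈ core t₀ X s) : f v ∈ core t₀ X s := by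
    refine ⟨hfs v, fun V hV hfV hVX ↦ hv.2 (s ∩ f ⁻¹' V) ?_ ⟨hv.1, hfV⟩ ?_⟩
    · exact IsOpen.inter hs.isOpen (hV.preimage hf)
    · refine hVX.of_compl hsO hOX hf (IsOpen.inter hs.isOpen (hV.preimage hf)) (fun w hw ↦ hw.2) ?_
      exact fun w hw ↦ hfX w ⟨hw.1.1, fun hwO ↦ hw.2 ⟨hw.1.1, hwO⟩⟩
  obtain ⟨r, hr, hrK, hrX⟩ := exists_isContinuous_extension (isClosed_core hs) hne hf
    (R := fun w z ↦ z ∈ s ∧ (w ∈ s → (w ∉ X ↔ z ∈ X)))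
    fun V hV hVK κ hκ ↦ h.exists_reduces_compl_of_disjoint_core (hfK hκ) hV hVK
  refine h.not_reduces_compl t₀ continuous_id ⟨r, hr, fun v ↦ ?_, fun v hv ↦ ?_⟩ <;>
    by_cases hvK : v ∈ core t₀ X s
  · exact hrK v hvK ▸ hfs v
  · exact (hrX v hvK).1
  · rw [hrK v hvK, mem_compl_iff, hfX v ⟨hv, hKO hvK⟩, not_not]
  · exact (hrX v hvK).2 hv

theorem reduces_inter_preimage (h : IsMinimalPair X t₀ s) (hne : (core t₀ X s).Nonempty)
    (hC : IsClosed (X := t.Space) C) (hf : t.IsContinuous t₀ f) (hfs : ∀ v, f v ∈ s) :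
    Reduces t univ (C ∩ f ⁻¹' X) t₀ s X := by
  have hCm : MeasurableSet C := (IsOpen.isFsigma hC.isOpen_compl).measurableSet.of_compl
  refine (reduces_or_reduces_compl isClopen_univ univ_nonempty (isClopen_of_isClopen h.isClopen)
    h.nonempty (hCm.inter (measurable_of_isContinuous hf h.measurableSet))
    h.measurableSet).resolve_right ?_
  rintro ⟨g, hg, -, hgX⟩
  refine h.not_forall_mem_iff_notMem hne (hf.comp hg) (fun v ↦ hfs _)
    (hC.isOpen_compl.preimage hg) ?_ ?_
  · rintro v ⟨hv, hgC⟩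
    exact (hgX v hv).2 fun hgv ↦ hgC hgv.1
  · rintro v ⟨hv, hgC⟩
    exact (hgX v hv).trans (not_congr (and_iff_right (not_not.1 hgC)))

end IsMinimalPair

end Presentation

namespace Presentation

variable {t₀ : Presentation} {s X : Set Cantor}

theorem IsMinimalPair.exists_mem_notMem (h : IsMinimalPair X t₀ s)
    (hcore : (core t₀ X s).Nonempty) : ∃ a ∈ s, a ∉ X := by
  obtain ⟨b, hb⟩ := h.nonempty
  obtain ⟨f, -, hfs, hf⟩ := h.reduces_inter_preimage (t := t₀) hcore (C := ∅) (f := fun _ ↦ b)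
    (isClosed_empty (X := t₀.Space)) continuous_const fun _ ↦ hb
  exact ⟨f b, hfs b, fun hX ↦ ((hf b (mem_univ b)).2 hX).1⟩

theorem IsMinimalPair.exists_self_reduction (h : IsMinimalPair X t₀ s)
    (hcore : (core t₀ X s).Nonempty) (hdense : Dense X) (hX : IsHomogeneous X) :
    ∃ f : Cantor → Cantor, Continuous f ∧ (∀ v, f v ∈ s) ∧ X = f ⁻¹' X := by
  obtain ⟨G, H, hGH⟩ := exists_isPartialReduction hdense hX h.isClopen.isOpen h.nonempty
  obtain ⟨B, hBo, hB⟩ := t₀.exists_seq_isClopen_basis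
  have hFsigma (i : Option ℕ) : IsFsigma (Gᶜ ∪ H ⁻¹' i.elim ∅ B) :=
    .compl_union_preimage
      (i.rec (.of_isOpen isOpen_empty) fun n ↦ IsOpen.isFsigma (hBo n).isOpen) hGH.isGδ
      hGH.continuousOn
  obtain ⟨t, ht, hV, -⟩ := exists_refinement t₀ hFsigma (f := fun k : Empty ↦ k.elim) isEmptyElim
  have hG : IsClosed (X := t.Space) G := by
    have hGc : t.IsOpen Gᶜ := by simpa using hV none
    exact (isOpen_compl_iff (X := t.Space)).1 hGc
  have hXGH : X = G ∩ H ⁻¹' X := ext fun v ↦ hGH.mem_iff v (mem_univ v)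
  have hGne : G.Nonempty := (hXGH ▸ hdense.nonempty).mono inter_subset_left
  obtain ⟨r, hr, hrG, hr_id⟩ := exists_retraction hG hGne
  have hHr : t.IsContinuous t₀ (H ∘ r) := by
    refine hB.continuous_iff.2 ?_
    rintro _ ⟨n, rfl⟩
    have heq : H ∘ r ⁻¹' B n = r ⁻¹' (Gᶜ ∪ H ⁻¹' B n) := by
      ext v
      simp [hrG v]
    exact heq ▸ (hV (some n)).preimage hr
  have heq : X = G ∩ H ∘ r ⁻¹' X := by
    nth_rw 1 [hXGH]
    ext v
    refine and_congr_right fun hv ↦ ?_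
    simp [hr_id v hv]
  refine h.exists_continuous_eq_preimage h.measurableSet ht ?_
  nth_rw 1 [heq]
  exact h.reduces_inter_preimage hcore hG hHr fun v ↦ hGH.mapsTo (hrG v)

end Presentation

/-! ### Semifilters built from branches -/

/-- A numbering of the nodes of countably many binary trees: `nodeCode i w n` is the number of the
node of level `n` on the branch `w` of the `i`-th tree. -/
noncomputable def nodeCode (i : ℕ) (w : Cantor) (n : ℕ) : ℕ :=
  (nonempty_equiv_of_countable (α := ℕ × List Bool) (β := ℕ)).some (i, PiNat.res w n)

theorem nodeCode_eq_nodeCode_iff {i j : ℕ} {w v : Cantor} {m n : ℕ} :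
    nodeCode i w m = nodeCode j v n ↔ i = j ∧ m = n ∧ w ∈ PiNat.cylinder v n := by
  rw [nodeCode, nodeCode, Equiv.apply_eq_iff_eq, Prod.mk.injEq, PiNat.cylinder_eq_res]
  refine and_congr_right fun _ ↦ ⟨fun h ↦ ?_, ?_⟩
  · have hmn : m = n := by simpa using congrArg List.length h
    exact ⟨hmn, hmn ▸ h⟩
  · rintro ⟨rfl, h⟩
    exact h

theorem nodeCode_injective (c : ℕ → ℕ) (w : Cantor) :
    Function.Injective fun n ↦ nodeCode (c n) w n :=
  fun _ _ h ↦ (nodeCode_eq_nodeCode_iff.1 h).2.1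

open Classical in
/-- The set of the nodes on the branch `w`, where the node of level `n` is taken from the
`c n`-th tree. -/
noncomputable def trail (c : ℕ → ℕ) (w : Cantor) : Cantor :=
  fun a ↦ decide (∃ n, nodeCode (c n) w n = a)

/-- The set of all nodes on the branch `w` of the `i`-th tree. -/
noncomputable def branch (i : ℕ) (w : Cantor) : Cantor := trail (fun _ ↦ i) w

theorem trail_apply_eq_true {c : ℕ → ℕ} {w : Cantor} {a : ℕ} :
    trail c w a = true ↔ ∃ n, nodeCode (c n) w n = a := by
  simp [trail]

theorem continuous_trail {c : Cantor → ℕ → ℕ}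
    (hc : ∀ z n, ∀ z' ∈ PiNat.cylinder z n, c z' n = c z n) :
    Continuous fun z ↦ trail (c z) z := by
  refine continuous_pi fun a ↦ continuous_iff_continuousAt.2 fun z ↦ ?_
  refine Filter.EventuallyEq.continuousAt (y := trail (c z) z a) ?_
  by_cases ha : ∃ i v n, nodeCode i v n = a
  · obtain ⟨i, v, n, rfl⟩ := ha
    filter_upwards [(isClopen_cylinder z n).isOpen.mem_nhds (PiNat.self_mem_cylinder z n)]
      with z' hz'
    have hlevel (x : Cantor) :
        trail (c x) x (nodeCode i v n) = true ↔ c x n = i ∧ x ∈ PiNat.cylinder v n := by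
      simp_rw [trail_apply_eq_true, nodeCode_eq_nodeCode_iff]
      aesop
    rw [Bool.eq_iff_iff, hlevel, hlevel, hc z n z' hz', PiNat.mem_cylinder_comm,
      PiNat.mem_cylinder_iff_eq.1 hz', ← PiNat.mem_cylinder_comm]
  · filter_upwards with z'
    rw [Bool.eq_iff_iff, trail_apply_eq_true, trail_apply_eq_true]
    exact iff_of_false (fun ⟨n, hn⟩ ↦ ha ⟨_, _, n, hn⟩) fun ⟨n, hn⟩ ↦ ha ⟨_, _, n, hn⟩

theorem continuous_branch (i : ℕ) : Continuous (branch i) :=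
  continuous_trail fun _ _ _ _ ↦ rfl

theorem eventually_eq_of_trail_le_branch {c : ℕ → ℕ} {i : ℕ} {w v : Cantor}
    (h : trail c w ≤ᶠ[cofinite] branch i v) : (∀ᶠ n in atTop, c n = i) ∧ w = v := by
  have hmem : ∀ᶠ n in atTop, c n = i ∧ w ∈ PiNat.cylinder v n := by
    filter_upwards [Nat.cofinite_eq_atTop ▸ (nodeCode_injective c w).tendsto_cofinite.eventually h]
      with n hn
    obtain ⟨m, hm⟩ := trail_apply_eq_true.1 (hn (trail_apply_eq_true.2 ⟨n, rfl⟩))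
    obtain ⟨hi, rfl, hw⟩ := nodeCode_eq_nodeCode_iff.1 hm.symm
    exact ⟨hi, hw⟩
  refine ⟨hmem.mono fun n hn ↦ hn.1, funext fun j ↦ ?_⟩
  obtain ⟨n, hn, hjn⟩ := (hmem.and (eventually_gt_atTop j)).exists
  exact hn.2 j hjn

theorem eq_of_branch_le_branch {i j : ℕ} {w v : Cantor}
    (h : branch i w ≤ᶠ[cofinite] branch j v) : i = j ∧ w = v :=
  (eventually_eq_of_trail_le_branch h).imp_left fun hc ↦ hc.exists.choose_spec

theorem trail_eventuallyEq_branch {c : ℕ → ℕ} {i : ℕ} (hc : ∀ᶠ n in atTop, c n = i)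
    (w : Cantor) : trail c w =ᶠ[cofinite] branch i w := by
  obtain ⟨N, hN⟩ := eventually_atTop.1 hc
  refine eventually_cofinite.2 (((finite_Iio N).image fun n ↦ nodeCode (c n) w n).union
    ((finite_Iio N).image fun n ↦ nodeCode i w n) |>.subset fun a ha ↦ ?_)
  by_contra! hnot
  refine ha (Bool.eq_iff_iff.2 ?_)
  rw [branch, trail_apply_eq_true, trail_apply_eq_true]
  refine exists_congr fun n ↦ ?_
  rcases lt_or_ge n N with hn | hn
  · exact iff_of_false (fun h ↦ hnot (.inl ⟨n, hn, h⟩)) fun h ↦ hnot (.inr ⟨n, hn, h⟩)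
  · rw [hN n hn]

theorem not_const_true_le_branch (i : ℕ) (w : Cantor) :
    ¬ (fun _ ↦ true : Cantor) ≤ᶠ[cofinite] branch i w := by
  intro h
  have := (eq_of_branch_le_branch (i := i + 1) (w := w)
    (.trans (.of_forall fun a ↦ Bool.le_true _) h)).1
  lia

theorem not_branch_le_const_false (i : ℕ) (w : Cantor) :
    ¬ branch i w ≤ᶠ[cofinite] (fun _ ↦ false : Cantor) := by
  intro h
  have := (eq_of_branch_le_branch (j := i + 1) (v := w)
    (h.trans (.of_forall fun a ↦ Bool.false_le _))).1
  lia

/-- The sets which are almost contained in a branch only if they are almost equal to it and the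
branch is selected by `W`. -/
def branchSemifilter (W : ℕ → Set Cantor) : Set Cantor :=
  {x | ∀ i w, x ≤ᶠ[cofinite] branch i w → branch i w ≤ᶠ[cofinite] x ∧ w ∈ W i}

section BranchSemifilter

variable {W : ℕ → Set Cantor} {x : Cantor}

theorem mem_branchSemifilter_iff {i : ℕ} {w : Cantor} (h : x =ᶠ[cofinite] branch i w) :
    x ∈ branchSemifilter W ↔ w ∈ W i := by
  refine ⟨fun hx ↦ (hx i w h.le).2, fun hw j v hv ↦ ?_⟩
  obtain ⟨rfl, rfl⟩ := eq_of_branch_le_branch (h.symm.le.trans hv)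
  exact ⟨h.symm.le, hw⟩

theorem isSemifilter_branchSemifilter (W : ℕ → Set Cantor) :
    IsSemifilter (branchSemifilter W) := by
  refine ⟨fun h ↦ ?_, fun i w h ↦ ?_, fun x hx y hxy i w hy ↦ ?_, fun x hx y hxy i w hy ↦ ?_⟩
  · exact not_branch_le_const_false 0 (fun _ ↦ true)
      (h 0 _ (.of_forall fun _ ↦ Bool.false_le _)).1
  · exact (not_const_true_le_branch i w h).elim
  · have hle : x ≤ᶠ[cofinite] y := .of_forall fun n ↦ Bool.le_iff_imp.2 (hxy n)
    exact (hx i w (hle.trans hy)).imp_left fun h ↦ h.trans hle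
  · have heq : x =ᶠ[cofinite] y := eventually_cofinite.2 hxy
    exact (hx i w (heq.le.trans hy)).imp_left fun h ↦ h.trans heq.le

theorem isClosed_setOf_exists_branch {F : Set Cantor} (hF : IsClosed F) (N i : ℕ)
    (R : Bool → Bool → Prop) :
    IsClosed {x : Cantor | ∃ w ∈ F, ∀ a ≥ N, R (x a) (branch i w a)} := by
  have hpair :
      IsClosed {p : Cantor × Cantor | p.2 ∈ F ∧ ∀ a ≥ N, R (p.1 a) (branch i p.2 a)} := by
    simp only [ofPred_and, ofPred_forall]
    refine (hF.preimage continuous_snd).inter (isClosed_iInter fun a ↦ isClosed_iInter fun _ ↦ ?_)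
    have hcont : Continuous fun p : Cantor × Cantor ↦ (p.1 a, branch i p.2 a) :=
      ((continuous_apply a).comp continuous_fst).prodMk
        ((continuous_apply a).comp ((continuous_branch i).comp continuous_snd))
    exact (isClosed_discrete {q : Bool × Bool | R q.1 q.2}).preimage hcont
  have heq : {x : Cantor | ∃ w ∈ F, ∀ a ≥ N, R (x a) (branch i w a)} =
      Prod.fst '' {p : Cantor × Cantor | p.2 ∈ F ∧ ∀ a ≥ N, R (p.1 a) (branch i p.2 a)} := by
    ext x
    simp
  exact heq ▸ isClosedMap_fst_of_compactSpace _ hpair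

/-- The sets which are contained in a branch of the `i`-th tree from `N` on. -/
def belowBranch (N i : ℕ) : Set Cantor := {x | ∃ w, ∀ a ≥ N, x a ≤ branch i w a}

theorem exists_mem_belowBranch_iff {i : ℕ} :
    (∃ N, x ∈ belowBranch N i) ↔ ∃ w, x ≤ᶠ[cofinite] branch i w := by
  simp only [belowBranch, mem_ofPred_eq, Nat.cofinite_eq_atTop, EventuallyLE, eventually_atTop]
  exact exists_comm

theorem isClosed_belowBranch (N i : ℕ) : IsClosed (belowBranch N i) := by
  simpa [belowBranch] using isClosed_setOf_exists_branch isClosed_univ N i (· ≤ ·)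

theorem dense_compl_belowBranch (N i : ℕ) : Dense (belowBranch N i)ᶜ := by
  refine fun x ↦ mem_closure_iff.2 fun U hU hx ↦ ?_
  obtain ⟨n, hn⟩ := exists_cylinder_subset_of_isOpen hU hx
  let y : Cantor := fun a ↦ if a < n then x a else true
  refine ⟨y, hn fun a ha ↦ if_pos ha, fun hy ↦ ?_⟩
  obtain ⟨w, hw⟩ := exists_mem_belowBranch_iff.1 ⟨N, hy⟩
  refine not_const_true_le_branch i w (.trans ?_ hw)
  rw [Nat.cofinite_eq_atTop]
  filter_upwards [eventually_ge_atTop n] with a ha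
  simp [y, ha.not_gt]

theorem mem_branchSemifilter_of_forall_notMem_belowBranch (h : ∀ N i, x ∉ belowBranch N i) :
    x ∈ branchSemifilter W := by
  intro i w hw
  obtain ⟨N, hN⟩ := exists_mem_belowBranch_iff.2 ⟨w, hw⟩
  exact (h N i hN).elim

theorem baireSpace_of_mem_residual {E : Type u} [TopologicalSpace E] [BaireSpace E] {s : Set E}
    (hs : s ∈ residual E) : BaireSpace s := by
  refine ⟨fun f hf hfd ↦ ?_⟩
  choose U hU hUf using fun n ↦ isOpen_induced_iff.1 (hf n)
  have himage (n : ℕ) : Subtype.val '' f n ⊆ U n := by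
    rintro _ ⟨x, hx, rfl⟩
    exact (hUf n).ge hx
  have hUd (n : ℕ) : Dense (U n) := dense_iff_closure_eq.2 <| univ_subset_iff.1 <|
    (dense_of_mem_residual hs).closure_eq ▸
      closure_minimal ((Subtype.dense_iff.1 (hfd n)).trans (closure_mono (himage n)))
        isClosed_closure
  have hres : s ∩ ⋂ n, U n ∈ residual E := inter_mem hs <|
    countable_iInter_mem.2 fun n ↦ residual_of_dense_open (hU n) (hUd n)
  refine Subtype.dense_iff.2 fun x _ ↦ closure_mono ?_ (dense_of_mem_residual hres x)
  rintro y ⟨hys, hy⟩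
  exact ⟨⟨y, hys⟩, mem_iInter.2 fun n ↦ (hUf n).le (mem_iInter.1 hy n), rfl⟩

theorem baireSpace_branchSemifilter (W : ℕ → Set Cantor) : BaireSpace (branchSemifilter W) := by
  refine baireSpace_of_mem_residual ?_
  have hres : ∀ᶠ x in residual Cantor, ∀ N i, x ∉ belowBranch N i :=
    eventually_countable_forall.2 fun N ↦ eventually_countable_forall.2 fun i ↦
      residual_of_dense_open (isClosed_belowBranch N i).isOpen_compl (dense_compl_belowBranch N i)
  exact hres.mono fun x hx ↦ mem_branchSemifilter_of_forall_notMem_belowBranch hx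

/-- The sets which agree with a branch of the `i`-th tree from `N` on. -/
def eventualBranch (N i : ℕ) : Set Cantor := {x | ∃ w, ∀ a ≥ N, x a = branch i w a}

theorem isClosed_eventualBranch (N i : ℕ) : IsClosed (eventualBranch N i) := by
  simpa [eventualBranch] using isClosed_setOf_exists_branch isClosed_univ N i (· = ·)

open Classical in
/-- The `w` such that the given set agrees with the branch `w` of the `i`-th tree from `N` on, with
an arbitrary constant value if there is none. -/
noncomputable def branchOf (N i : ℕ) (x : Cantor) : Cantor :=
  if h : x ∈ eventualBranch N i then h.choose else fun _ ↦ false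

theorem eventuallyEq_branch_branchOf {N i : ℕ} (hx : x ∈ eventualBranch N i) :
    x =ᶠ[cofinite] branch i (branchOf N i x) := by
  rw [Nat.cofinite_eq_atTop, branchOf, dif_pos hx]
  exact eventually_atTop.2 ⟨N, hx.choose_spec⟩

theorem branchOf_eq {N i : ℕ} {w : Cantor} (hx : x ∈ eventualBranch N i)
    (hw : x =ᶠ[cofinite] branch i w) : branchOf N i x = w :=
  (eq_of_branch_le_branch ((eventuallyEq_branch_branchOf hx).symm.trans hw).le).2

theorem exists_mem_eventualBranch {i : ℕ} {w : Cantor} (hw : x =ᶠ[cofinite] branch i w) :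
    ∃ N, x ∈ eventualBranch N i := by
  rw [Nat.cofinite_eq_atTop] at hw
  exact (eventually_atTop.1 hw).imp fun N hN ↦ ⟨w, hN⟩

theorem isFsigma_branchOf_preimage {V : Set Cantor} (hV : IsFsigma V) (N i : ℕ) :
    IsFsigma (branchOf N i ⁻¹' V) := by
  obtain ⟨F, hF, rfl⟩ := hV
  have hin : IsFsigma (⋃ n, {x : Cantor | ∃ w ∈ F n, ∀ a ≥ N, x a = branch i w a}) :=
    .iUnion fun n ↦ .of_isClosed (isClosed_setOf_exists_branch (hF n) N i (· = ·))
  have hout : IsFsigma {x : Cantor | x ∉ eventualBranch N i ∧ (fun _ ↦ false) ∈ ⋃ n, F n} := by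
    by_cases h : (fun _ ↦ false) ∈ ⋃ n, F n
    · simpa only [h, and_true] using .of_isOpen (isClosed_eventualBranch N i).isOpen_compl
    · simpa only [h, and_false] using .of_isOpen isOpen_empty
  have heq : branchOf N i ⁻¹' ⋃ n, F n = (⋃ n, {x | ∃ w ∈ F n, ∀ a ≥ N, x a = branch i w a}) ∪
      {x | x ∉ eventualBranch N i ∧ (fun _ ↦ false) ∈ ⋃ n, F n} := by
    ext x
    by_cases hx : x ∈ eventualBranch N i
    · have hbranch (w : Cantor) : (∀ a ≥ N, x a = branch i w a) → branchOf N i x = w := fun hw ↦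
        branchOf_eq hx (Nat.cofinite_eq_atTop ▸ eventually_atTop.2 ⟨N, hw⟩)
      have hspec : ∀ a ≥ N, x a = branch i (branchOf N i x) a := by
        rw [branchOf, dif_pos hx]
        exact hx.choose_spec
      simp only [mem_preimage, mem_iUnion, mem_union, mem_ofPred_eq, hx, not_true_eq_false,
        false_and, or_false]
      exact exists_congr fun n ↦ ⟨fun h ↦ ⟨_, h, hspec⟩, fun ⟨w, hw, h⟩ ↦ hbranch w h ▸ hw⟩
    · have hnone (w : Cantor) : ¬ ∀ a ≥ N, x a = branch i w a := fun hw ↦ hx ⟨w, hw⟩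
      have hdefault : branchOf N i x = fun _ ↦ false := dif_neg hx
      simp only [mem_preimage, hdefault, mem_iUnion, mem_union, mem_ofPred_eq, hx,
        hnone, and_false, exists_false, false_or, not_false_eq_true, true_and]
  exact heq ▸ hin.union hout

theorem mem_branchSemifilter_iff_of_mem_belowBranch {N i : ℕ} (hx : x ∈ belowBranch N i) :
    x ∈ branchSemifilter W ↔ ∃ M, x ∈ eventualBranch M i ∧ branchOf M i x ∈ W i := by
  refine ⟨fun h ↦ ?_, ?_⟩
  · obtain ⟨w, hw⟩ := exists_mem_belowBranch_iff.1 ⟨N, hx⟩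
    have heq : x =ᶠ[cofinite] branch i w := hw.antisymm (h i w hw).1
    obtain ⟨M, hM⟩ := exists_mem_eventualBranch heq
    exact ⟨M, hM, (branchOf_eq hM heq).symm ▸ (h i w hw).2⟩
  · rintro ⟨M, hM, hW⟩
    exact (mem_branchSemifilter_iff (eventuallyEq_branch_branchOf hM)).2 hW

end BranchSemifilter

section ApproxIndex

/-- The least `c` such that `c ≥ j` or the closed set `C c` meets the cylinder of length `j` around
`z`. As `j` grows this finds, in the limit, the first `C c` that contains `z`. -/
noncomputable def approxIndex (C : ℕ → Set Cantor) (z : Cantor) (j : ℕ) : ℕ :=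
  sInf {c | j ≤ c ∨ (PiNat.cylinder z j ∩ C c).Nonempty}

variable {W C : ℕ → Set Cantor} {z : Cantor}

theorem approxIndex_spec (C : ℕ → Set Cantor) (z : Cantor) (j : ℕ) :
    j ≤ approxIndex C z j ∨ (PiNat.cylinder z j ∩ C (approxIndex C z j)).Nonempty :=
  Nat.sInf_mem (s := {c | j ≤ c ∨ (PiNat.cylinder z j ∩ C c).Nonempty}) ⟨j, .inl le_rfl⟩

theorem monotone_approxIndex (C : ℕ → Set Cantor) (z : Cantor) : Monotone (approxIndex C z) :=
  fun _ k hjk ↦ Nat.sInf_le <| (approxIndex_spec C z k).imp hjk.trans fun h ↦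
    h.mono (inter_subset_inter_left _ (PiNat.cylinder_anti z hjk))

theorem mem_of_eventually_approxIndex_eq {i : ℕ} (hC : IsClosed (C i))
    (h : ∀ᶠ j in atTop, approxIndex C z j = i) : z ∈ C i := by
  rw [← hC.closure_eq, mem_closure_iff]
  intro U hU hz
  obtain ⟨n, hn⟩ := exists_cylinder_subset_of_isOpen hU hz
  obtain ⟨j, rfl, hj, hnj⟩ := (h.and ((eventually_gt_atTop i).and (eventually_ge_atTop n))).exists
  refine ((approxIndex_spec C z j).resolve_left hj.not_ge).mono ?_
  exact inter_subset_inter_left _ ((PiNat.cylinder_anti z hnj).trans hn)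

theorem notMem_of_tendsto_approxIndex (h : Tendsto (approxIndex C z) atTop atTop) (i : ℕ) :
    z ∉ C i := by
  intro hz
  obtain ⟨j, hj⟩ := (h.eventually_gt_atTop i).exists
  exact hj.not_ge (Nat.sInf_le (.inr ⟨z, PiNat.self_mem_cylinder z j, hz⟩))

theorem continuous_trail_approxIndex (C : ℕ → Set Cantor) :
    Continuous fun z ↦ trail (approxIndex C z) z :=
  continuous_trail fun z n z' hz' ↦ by
    rw [approxIndex, approxIndex, PiNat.mem_cylinder_iff_eq.1 hz']

theorem trail_approxIndex_mem_branchSemifilter_iff {s X : Set Cantor} (hC : ∀ i, IsClosed (C i))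
    (hCW : ∀ i, C i ⊆ W i) (hs : s \ X ⊆ ⋃ i, C i) (hz : z ∈ s) :
    trail (approxIndex C z) z ∈ branchSemifilter (fun i ↦ W i ∩ X) ↔ z ∈ X := by
  rcases tendsto_atTop_of_monotone (monotone_approxIndex C z) with htop | ⟨i, hi⟩
  · refine iff_of_true (fun i w hw ↦ ?_) ?_
    · obtain ⟨j, hj, hij⟩ :=
        ((eventually_eq_of_trail_le_branch hw).1.and (htop.eventually_gt_atTop i)).exists
      exact (hij.ne' hj).elim
    · by_contra hX
      obtain ⟨i, hi⟩ := mem_iUnion.1 (hs ⟨hz, hX⟩)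
      exact notMem_of_tendsto_approxIndex htop i hi
  · have hi' : ∀ᶠ j in atTop, approxIndex C z j = i := by simpa using hi
    rw [mem_branchSemifilter_iff (trail_eventuallyEq_branch hi' z)]
    exact and_iff_right (hCW i (mem_of_eventually_approxIndex_eq (hC i) hi'))

end ApproxIndex

/-! ### Gluing reductions -/

section FirstHit

variable {E F : Type u} {P : ℕ → Set E} {φ : ℕ → E → F} {a : F} {x : E} {k : ℕ}

open Classical in
/-- The function which is `φ k` at the points whose first visit to the sets `P` is to `P k`, and
has the constant value `a` outside of all of them. -/
noncomputable def firstHit (P : ℕ → Set E) (φ : ℕ → E → F) (a : F) (x : E) : F :=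
  if h : ∃ k, x ∈ P k then φ (Nat.find h) x else a

theorem firstHit_eq (hk : x ∈ P k) (hmin : ∀ j < k, x ∉ P j) : firstHit P φ a x = φ k x := by
  classical
  have h : ∃ k, x ∈ P k := ⟨k, hk⟩
  rw [firstHit, dif_pos h, (Nat.find_eq_iff h).2 ⟨hk, hmin⟩]

theorem exists_firstHit_eq (h : ∃ k, x ∈ P k) :
    ∃ k, x ∈ P k ∧ (∀ j < k, x ∉ P j) ∧ firstHit P φ a x = φ k x := by
  classical
  have hmin (j) (hj : j < Nat.find h) : x ∉ P j := Nat.find_min h hj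
  exact ⟨Nat.find h, Nat.find_spec h, hmin, firstHit_eq (Nat.find_spec h) hmin⟩

theorem firstHit_of_forall_notMem (h : ∀ k, x ∉ P k) : firstHit P φ a x = a :=
  dif_neg (not_exists.2 h)

theorem continuous_firstHit [TopologicalSpace E] [TopologicalSpace F] (hP : ∀ k, IsClopen (P k))
    (hφ : ∀ k, Continuous (φ k)) (ha : ∀ U ∈ 𝓝 a, ∀ᶠ k in atTop, ∀ x, φ k x ∈ U) :
    Continuous (firstHit P φ a) := by
  have havoid (n : ℕ) (x : E) (hx : ∀ j < n, x ∉ P j) : ∀ᶠ y in 𝓝 x, ∀ j < n, y ∉ P j :=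
    (finite_Iio n).eventually_all.2 fun j hj ↦ (hP j).compl.isOpen.mem_nhds (hx j hj)
  refine continuous_iff_continuousAt.2 fun x ↦ ?_
  by_cases h : ∃ k, x ∈ P k
  · obtain ⟨k, hk, hmin, -⟩ := exists_firstHit_eq (φ := φ) (a := a) h
    refine (hφ k).continuousAt.congr ?_
    filter_upwards [(hP k).isOpen.mem_nhds hk, havoid k x hmin] with y hy hymin
    exact (firstHit_eq hy hymin).symm
  · push Not at h
    rw [ContinuousAt, firstHit_of_forall_notMem h]
    refine fun U hU ↦ mem_map.2 ?_
    obtain ⟨n, hn⟩ := eventually_atTop.1 (ha U hU)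
    filter_upwards [havoid n x fun j _ ↦ h j] with y hy
    by_cases hyP : ∃ k, y ∈ P k
    · obtain ⟨k, hk, -, heq⟩ := exists_firstHit_eq (φ := φ) (a := a) hyP
      exact mem_preimage.2 (heq ▸ hn k (not_lt.1 fun hkn ↦ hy k hkn hk) y)
    · push Not at hyP
      exact mem_preimage.2 (firstHit_of_forall_notMem hyP ▸ mem_of_mem_nhds hU)

end FirstHit

namespace Presentation

variable {t t' t₀ : Presentation} {s X : Set Cantor}

theorem Reduces.glue {V A B : Set Cantor} {P : ℕ → Set Cantor} {y : Cantor}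
    (hP : ∀ k, t.IsClopen (P k)) (hr : ∀ k, Reduces t (V ∩ P k) A t' (t'.cylinder y k ∩ s) B)
    (hy : y ∈ s) (hyB : ∀ v ∈ V, (∀ k, v ∉ P k) → (v ∈ A ↔ y ∈ B)) : Reduces t V A t' s B := by
  choose φ hφ hφs hφA using hr
  refine ⟨firstHit P φ y, continuous_firstHit (E := t.Space) (F := t'.Space) hP hφ fun U hU ↦ ?_,
    fun v ↦ ?_, fun v hv ↦ ?_⟩
  · obtain ⟨n, -, hn⟩ := (hasBasis_nhds (t := t') y).mem_iff.1 hU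
    filter_upwards [eventually_ge_atTop n] with k hk v
    exact hn (t'.cylinder_anti y hk (hφs k v).1)
  · by_cases h : ∃ k, v ∈ P k
    · obtain ⟨k, -, -, heq⟩ := exists_firstHit_eq (φ := φ) (a := y) h
      exact heq ▸ (hφs k v).2
    · exact firstHit_of_forall_notMem (not_exists.1 h) ▸ hy
  · by_cases h : ∃ k, v ∈ P k
    · obtain ⟨k, hk, -, heq⟩ := exists_firstHit_eq (φ := φ) (a := y) h
      exact heq ▸ hφA k v ⟨hv, hk⟩
    · exact firstHit_of_forall_notMem (P := P) (φ := φ) (not_exists.1 h) ▸ hyB v hv (not_exists.1 h)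

/-- Closed sets `C i` covering `s \ X`, each inside a clopen set `W i` on which `X` reduces to
itself arbitrarily close to a point `y i` of `s \ X`. -/
structure IsLocalCover (X : Set Cantor) (t₀ : Presentation) (s : Set Cantor)
    (W C : ℕ → Set Cantor) (y : ℕ → Cantor) : Prop where
  isClopen (i : ℕ) : t₀.IsClopen (W i)
  isClosed (i : ℕ) : IsClosed (C i)
  subset (i : ℕ) : C i ⊆ W i
  mem (i : ℕ) : y i ∈ s \ X
  reduces (i : ℕ) (W' : Set Cantor) : t₀.IsClopen W' → y i ∈ W' → Reduces t₀ (W i) X t₀ W' X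
  cover : s \ X ⊆ ⋃ i, C i

theorem exists_isLocalCover (hX : MeasurableSet X) (t₀ : Presentation) (hne : (s \ X).Nonempty) :
    ∃ W C y, IsLocalCover X t₀ s W C y := by
  obtain ⟨B, hBo, hB⟩ := t₀.exists_seq_isClopen_basis
  let L : Set ℕ := {n | ∃ y ∈ s \ X, ∀ W', t₀.IsClopen W' → y ∈ W' → Reduces t₀ (B n) X t₀ W' X}
  have hL (y : Cantor) (hy : y ∈ s \ X) : ∃ n ∈ L, y ∈ B n := by
    obtain ⟨W, hW, hyW, hr⟩ := exists_isClopen_forall_reduces hX t₀ y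
    obtain ⟨_, ⟨n, rfl⟩, hyn, hn⟩ := hB.exists_subset_of_mem_open hyW hW.isOpen
    exact ⟨n, ⟨y, hy, fun W' hW' hyW' ↦
      (Reduces.of_subset continuous_id (hBo n) hn ⟨y, hyW⟩).trans (hr W' hW' hyW')⟩, hyn⟩
  choose F hF hBF using fun n ↦ IsOpen.isFsigma (hBo n).isOpen
  choose y hy hr using fun n : L ↦ n.2
  obtain ⟨a, ha⟩ := hne
  obtain ⟨n₀, hn₀, -⟩ := hL a ha
  have : Nonempty (L × ℕ) := ⟨⟨n₀, hn₀⟩, 0⟩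
  obtain ⟨g, hg⟩ := exists_surjective_nat (L × ℕ)
  refine ⟨fun i ↦ B (g i).1, fun i ↦ F (g i).1 (g i).2, fun i ↦ y (g i).1, fun i ↦ hBo _,
    fun i ↦ hF _ _, fun i ↦ hBF (g i).1 ▸ subset_iUnion _ _, fun i ↦ hy _, fun i ↦ hr _,
    fun z hz ↦ ?_⟩
  obtain ⟨n, hn, hzn⟩ := hL z hz
  obtain ⟨m, hm⟩ := mem_iUnion.1 (hBF n ▸ hzn)
  obtain ⟨i, hi⟩ := hg (⟨n, hn⟩, m)
  exact mem_iUnion.2 ⟨i, by simpa only [hi] using hm⟩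

variable {W C : ℕ → Set Cantor} {y : ℕ → Cantor}

theorem exists_refinement_branchOf (t₀ : Presentation) :
    ∃ t : Presentation, t.IsContinuous t₀ id ∧ (∀ N i, t.IsClopen (belowBranch N i)) ∧
      (∀ N i, t.IsClopen (eventualBranch N i)) ∧ ∀ N i, t.IsContinuous t₀ (branchOf N i) := by
  obtain ⟨t, ht, hV, hf⟩ := exists_refinement t₀
    (V := fun p : (ℕ × ℕ) ⊕ (ℕ × ℕ) ↦
      p.elim (fun q ↦ belowBranch q.1 q.2) fun q ↦ eventualBranch q.1 q.2)
    (f := fun q : ℕ × ℕ ↦ branchOf q.1 q.2)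
    (Sum.rec (fun q ↦ .of_isClosed (isClosed_belowBranch q.1 q.2))
      fun q ↦ .of_isClosed (isClosed_eventualBranch q.1 q.2))
    fun q U hU ↦ isFsigma_branchOf_preimage (IsOpen.isFsigma hU) q.1 q.2
  refine ⟨t, ht, fun N i ↦ ⟨?_, hV (.inl (N, i))⟩, fun N i ↦ ⟨?_, hV (.inr (N, i))⟩,
    fun N i ↦ hf (N, i)⟩
  · exact (isClosed_belowBranch N i).preimage t.continuous_id_cantor
  · exact (isClosed_eventualBranch N i).preimage t.continuous_id_cantor

theorem IsLocalCover.reduces_belowBranch (hcov : IsLocalCover X t₀ s W C y) (hs : IsClopen s)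
    {i : ℕ} (hclopen : ∀ M, t.IsClopen (eventualBranch M i))
    (hcont : ∀ M, t.IsContinuous t₀ (branchOf M i)) (N : ℕ) :
    Reduces t (belowBranch N i) (branchSemifilter fun i ↦ W i ∩ X) t₀ s X := by
  refine Reduces.glue (y := y i) (P := fun M ↦ eventualBranch M i ∩ branchOf M i ⁻¹' W i)
    (fun M ↦ IsClopen.inter (hclopen M) ((hcov.isClopen i).preimage (hcont M))) (fun M ↦ ?_)
    (hcov.mem i).1 fun x hx hnot ↦ iff_of_false ?_ (hcov.mem i).2
  · obtain ⟨q, hq, hqs, hqX⟩ := hcov.reduces i (t₀.cylinder (y i) M ∩ s)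
      (IsClopen.inter (t₀.isClopen_cylinder _ _) (t₀.isClopen_of_isClopen hs))
      ⟨t₀.self_mem_cylinder _ _, (hcov.mem i).1⟩
    refine ⟨q ∘ branchOf M i, hq.comp (hcont M), fun v ↦ hqs _, fun v ⟨_, hv, hvW⟩ ↦ ?_⟩
    rw [mem_branchSemifilter_iff (eventuallyEq_branch_branchOf hv)]
    exact (and_iff_right hvW).trans (hqX _ hvW)
  · rw [mem_branchSemifilter_iff_of_mem_belowBranch hx]
    rintro ⟨M, hM, hMW, -⟩
    exact hnot M ⟨hM, hMW⟩

theorem IsMinimalPair.wadgeLe_branchSemifilter (h : IsMinimalPair X t₀ s)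
    (hcov : IsLocalCover X t₀ s W C y) {x₀ : Cantor} (hs : x₀ ∈ s) (hX : x₀ ∈ X)
    (hx₀ : t₀.IsGeneric x₀) : WadgeLe (branchSemifilter fun i ↦ W i ∩ X) X := by
  obtain ⟨t, ht, hbelow, heventual, hcont⟩ := exists_refinement_branchOf t₀
  have hred : Reduces t univ (branchSemifilter fun i ↦ W i ∩ X) t₀ s X := by
    refine Reduces.glue (y := x₀) (P := fun k ↦ belowBranch k.unpair.1 k.unpair.2)
      (fun k ↦ hbelow _ _) (fun k ↦ ?_) hs fun x _ hx ↦ iff_of_true ?_ hX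
    · rw [univ_inter]
      have hbranch := hcov.reduces_belowBranch h.isClopen (fun M ↦ heventual M k.unpair.2)
        (fun M ↦ hcont M k.unpair.2) k.unpair.1
      exact hbranch.trans (h.reduces_of_isGeneric x₀ hs hx₀ _
        (IsClopen.inter (t₀.isClopen_cylinder _ _) (t₀.isClopen_of_isClopen h.isClopen))
        ⟨t₀.self_mem_cylinder _ _, hs⟩)
    · refine mem_branchSemifilter_of_forall_notMem_belowBranch fun N i hN ↦ hx (Nat.pair N i) ?_
      simpa using hN
  have hmeas : MeasurableSet (branchSemifilter fun i ↦ W i ∩ X) := by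
    obtain ⟨f, hf, -, hfX⟩ := hred
    rw [show branchSemifilter _ = f ⁻¹' X from ext fun v ↦ hfX v (mem_univ v)]
    exact measurable_of_isContinuous hf h.measurableSet
  obtain ⟨F, hF, -, hFX⟩ := h.exists_continuous_eq_preimage hmeas ht hred
  exact ⟨F, hF, hFX⟩

theorem IsMinimalPair.wadgeLe_of_isLocalCover (h : IsMinimalPair X t₀ s)
    (hcore : (core t₀ X s).Nonempty) (hcov : IsLocalCover X t₀ s W C y) (hdense : Dense X)
    (hX : IsHomogeneous X) : WadgeLe X (branchSemifilter fun i ↦ W i ∩ X) := by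
  obtain ⟨f, hf, hfs, hfX⟩ := h.exists_self_reduction hcore hdense hX
  refine ⟨fun z ↦ trail (approxIndex C (f z)) (f z), (continuous_trail_approxIndex C).comp hf, ?_⟩
  ext z
  rw [mem_preimage, trail_approxIndex_mem_branchSemifilter_iff hcov.isClosed hcov.subset hcov.cover
    (hfs z)]
  nth_rw 1 [hfX]
  rfl

end Presentation

/-- A dense homogeneous Baire Borel subspace of Cantor space outside Δ is
Wadge equivalent to a Baire semifilter. -/
theorem baire_wadge_semifilter (X : Set Cantor)
    (hB : @MeasurableSet Cantor (borel Cantor) X) (hd : Dense X)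
    (hhom : IsHomogeneous X) (hbaire : BaireSpace X) (hdel : ¬ InDelta X) :
    ∃ S : Set Cantor, IsSemifilter S ∧ BaireSpace S ∧ WadgeEquiv S X := by
  have hX : MeasurableSet X := BorelSpace.measurable_eq (α := Cantor) ▸ hB
  obtain ⟨t₀, s, hmin⟩ := Presentation.exists_isMinimalPair hX hd hbaire
  obtain ⟨x₀, hx₀X, hx₀s, hx₀⟩ :=
    Presentation.exists_isGeneric hd hbaire t₀ hmin.isClopen.isOpen hmin.nonempty
  have hcore : (Presentation.core t₀ X s).Nonempty := ⟨x₀, hx₀.mem_core hd hhom hdel hx₀s⟩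
  obtain ⟨W, C, y, hcov⟩ := Presentation.exists_isLocalCover hX t₀ (hmin.exists_mem_notMem hcore)
  exact ⟨branchSemifilter fun i ↦ W i ∩ X, isSemifilter_branchSemifilter _,
    baireSpace_branchSemifilter _, hmin.wadgeLe_branchSemifilter hcov hx₀s hx₀X hx₀,
    hmin.wadgeLe_of_isLocalCover hcore hcov hd hhom⟩
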